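/- arXiv:1808.04484 — 2 statements merged into one kernel-verified Lean document; each statement's English description precedes it below -/
import Mathlib

section
/- If (G_0',ψ') is a (2,2,0)-gain-tight ℤ_2-gain graph and (G_0,ψ) is a ℤ_2-gain graph obtained from (G_0',ψ') by applying any one of the operations H1a, H1b, H1c, H2a, H2b, H2c, H2d, H2e, H3a, H3b, H3c, H3d, vertex-to-K_4, or vertex splitting, then (G_0,ψ) is (2,2,0)-gain-tight. -/
/-!
Statement 15 (Lemma 3.8 / lem:moves): applying any of the operations H1a-c, H2a-e,
H3a-d, vertex-to-`K₄` or vertex splitting to a `(2,2,0)`-gain-tight `ℤ₂`-gain graph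
results in a `(2,2,0)`-gain-tight gain graph.
-/

namespace ZGain

/-- A `ℤ₂`-gain graph: a finite multigraph with gains in `ℤˣ = {1, -1}` such that
parallel edges have different gains and loops have gain `-1`. -/
structure GainGraph where
  V : Type
  E : Type
  [fintV : Fintype V]
  [fintE : Fintype E]
  [decV : DecidableEq V]
  [decE : DecidableEq E]
  ends : E → Sym2 V
  gain : E → ℤˣ
  loop_gain : ∀ e : E, (ends e).IsDiag → gain e = -1
  no_parallel : ∀ e e' : E, e ≠ e' → ends e = ends e' → gain e ≠ gain e'

attribute [instance] GainGraph.fintV GainGraph.fintE GainGraph.decV GainGraph.decE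

/-- A cycle: a nonempty closed walk, recorded as a list of (edge, initial vertex)
pairs, with pairwise distinct edges and pairwise distinct vertices.  (A loop is a
cycle of length one; a pair of parallel edges is a cycle of length two.) -/
def IsCycle (G : GainGraph) (c : List (G.E × G.V)) : Prop :=
  ∃ h : c ≠ [],
    List.Chain' (fun st t => G.ends st.1 = s(st.2, t.2)) c ∧
    G.ends (c.getLast h).1 = s((c.getLast h).2, (c.head h).2) ∧
    (c.map Prod.fst).Nodup ∧ (c.map Prod.snd).Nodup

/-- The gain of a cycle: the product of its edge gains. -/
def cycleGain (G : GainGraph) (c : List (G.E × G.V)) : ℤˣ :=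
  (c.map fun st => G.gain st.1).prod

/-- An edge set is balanced if every cycle of edges in it has gain `1`. -/
def BalancedSet (G : GainGraph) (F : Finset G.E) : Prop :=
  ∀ c : List (G.E × G.V), IsCycle G c → (∀ st ∈ c, st.1 ∈ F) → cycleGain G c = 1

/-- The endpoints of an edge, as a finset. -/
def endsFinset (G : GainGraph) (e : G.E) : Finset G.V :=
  Sym2.lift ⟨fun a b => {a, b}, fun a b => Finset.pair_comm a b⟩ (G.ends e)

/-- The set `V(F)` of vertices incident to an edge set `F`. -/
def vertsOf (G : GainGraph) (F : Finset G.E) : Finset G.V :=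
  F.biUnion fun e => endsFinset G e

/-- `(2,2,0)`-gain-sparsity. -/
def Sparse220 (G : GainGraph) : Prop :=
  (∀ F : Finset G.E, F.Nonempty → BalancedSet G F →
      (F.card : ℤ) ≤ 2 * (vertsOf G F).card - 2) ∧
    (∀ F : Finset G.E, (F.card : ℤ) ≤ 2 * (vertsOf G F).card)

/-- `(2,2,0)`-gain-tightness. -/
def Tight220 (G : GainGraph) : Prop :=
  Sparse220 G ∧ Fintype.card G.E = 2 * Fintype.card G.V

/-- `(2,2,2)`-gain-sparsity. -/
def Sparse222 (G : GainGraph) : Prop :=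
  ∀ F : Finset G.E, F.Nonempty → (F.card : ℤ) ≤ 2 * (vertsOf G F).card - 2

/-- `(2,2,2)`-gain-tightness. -/
def Tight222 (G : GainGraph) : Prop :=
  Sparse222 G ∧ (Fintype.card G.E : ℤ) = 2 * Fintype.card G.V - 2

/-! ### Henneberg-type operations -/

/-- `G'` is obtained from `G` by deleting the edges in `del`, adding one new vertex
`v0` and adding the new edges in `new`; `fV` (together with some bijection of the
remaining edges) identifies `G` minus `del` with `G'` minus `v0` and `new`. -/
def GrownWith (G G' : GainGraph) (v0 : G'.V) (del : G.E → Prop) (new : G'.E → Prop)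
    (fV : G.V → G'.V) : Prop :=
  Function.Injective fV ∧ (∀ v, fV v ≠ v0) ∧ (∀ v' : G'.V, v' ≠ v0 → ∃ v, fV v = v') ∧
    ∃ fE : {e : G.E // ¬ del e} → G'.E,
      Function.Injective fE ∧ (∀ e, ¬ new (fE e)) ∧
        (∀ e' : G'.E, ¬ new e' → ∃ e, fE e = e') ∧
        (∀ e, G'.ends (fE e) = Sym2.map fV (G.ends e.1)) ∧
        (∀ e, G'.gain (fE e) = G.gain e.1)

/-- H1a: add a new vertex of degree 2 joined to two distinct vertices. -/
def H1a (G G' : GainGraph) : Prop :=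
  ∃ (v0 : G'.V) (e1 e2 : G'.E) (x y : G'.V) (fV : G.V → G'.V),
    GrownWith G G' v0 (fun _ => False) (fun e => e = e1 ∨ e = e2) fV ∧
    e1 ≠ e2 ∧ x ≠ y ∧ x ≠ v0 ∧ y ≠ v0 ∧
    G'.ends e1 = s(x, v0) ∧ G'.ends e2 = s(y, v0)

/-- H1b: add a new vertex joined to one vertex by two parallel edges with gains
`1` and `-1`. -/
def H1b (G G' : GainGraph) : Prop :=
  ∃ (v0 : G'.V) (e1 e2 : G'.E) (x : G'.V) (fV : G.V → G'.V),
    GrownWith G G' v0 (fun _ => False) (fun e => e = e1 ∨ e = e2) fV ∧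
    e1 ≠ e2 ∧ x ≠ v0 ∧
    G'.ends e1 = s(x, v0) ∧ G'.gain e1 = 1 ∧
    G'.ends e2 = s(x, v0) ∧ G'.gain e2 = -1

/-- H1c: add a new vertex with a loop and one edge to an existing vertex. -/
def H1c (G G' : GainGraph) : Prop :=
  ∃ (v0 : G'.V) (e1 e2 : G'.E) (x : G'.V) (fV : G.V → G'.V),
    GrownWith G G' v0 (fun _ => False) (fun e => e = e1 ∨ e = e2) fV ∧
    e1 ≠ e2 ∧ x ≠ v0 ∧
    G'.ends e1 = s(v0, v0) ∧ G'.gain e1 = -1 ∧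
    G'.ends e2 = s(x, v0)

/-- H2a: delete an edge `(xy,α)` and add a degree-3 vertex with three distinct
neighbours including `x` and `y`, where the gains on the edges to `x` and `y`
multiply to `α`. -/
def H2a (G G' : GainGraph) : Prop :=
  ∃ (d : G.E) (x y z : G.V) (v0 : G'.V) (f1 f2 f3 : G'.E) (fV : G.V → G'.V),
    GrownWith G G' v0 (fun e => e = d) (fun e => e = f1 ∨ e = f2 ∨ e = f3) fV ∧
    x ≠ y ∧ G.ends d = s(x, y) ∧
    f1 ≠ f2 ∧ f1 ≠ f3 ∧ f2 ≠ f3 ∧ z ≠ x ∧ z ≠ y ∧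
    G'.ends f1 = s(fV x, v0) ∧ G'.ends f2 = s(fV y, v0) ∧ G'.ends f3 = s(fV z, v0) ∧
    G'.gain f1 * G'.gain f2 = G.gain d

/-- H2b: delete an edge `(xy,α)` and add a degree-3 vertex with exactly two
neighbours, doubly joined to `x`. -/
def H2b (G G' : GainGraph) : Prop :=
  ∃ (d : G.E) (x y : G.V) (v0 : G'.V) (f1 f2 f3 : G'.E) (fV : G.V → G'.V),
    GrownWith G G' v0 (fun e => e = d) (fun e => e = f1 ∨ e = f2 ∨ e = f3) fV ∧
    x ≠ y ∧ G.ends d = s(x, y) ∧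
    f1 ≠ f2 ∧ f1 ≠ f3 ∧ f2 ≠ f3 ∧
    G'.ends f1 = s(fV x, v0) ∧ G'.gain f1 = 1 ∧
    G'.ends f2 = s(fV x, v0) ∧ G'.gain f2 = -1 ∧
    G'.ends f3 = s(fV y, v0)

/-- H2c: delete a loop `(xx,-1)` and add a degree-3 vertex with exactly two
neighbours, doubly joined to `x`. -/
def H2c (G G' : GainGraph) : Prop :=
  ∃ (d : G.E) (x y : G.V) (v0 : G'.V) (f1 f2 f3 : G'.E) (fV : G.V → G'.V),
    GrownWith G G' v0 (fun e => e = d) (fun e => e = f1 ∨ e = f2 ∨ e = f3) fV ∧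
    G.ends d = s(x, x) ∧ y ≠ x ∧
    f1 ≠ f2 ∧ f1 ≠ f3 ∧ f2 ≠ f3 ∧
    G'.ends f1 = s(fV x, v0) ∧ G'.gain f1 = 1 ∧
    G'.ends f2 = s(fV x, v0) ∧ G'.gain f2 = -1 ∧
    G'.ends f3 = s(fV y, v0)

/-- H2d: delete an edge `(xy,α)` and add a degree-4 vertex joined to `x` and `y`
(with gains multiplying to `α`) and carrying a loop. -/
def H2d (G G' : GainGraph) : Prop :=
  ∃ (d : G.E) (x y : G.V) (v0 : G'.V) (f1 f2 f3 : G'.E) (fV : G.V → G'.V),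
    GrownWith G G' v0 (fun e => e = d) (fun e => e = f1 ∨ e = f2 ∨ e = f3) fV ∧
    x ≠ y ∧ G.ends d = s(x, y) ∧
    f1 ≠ f2 ∧ f1 ≠ f3 ∧ f2 ≠ f3 ∧
    G'.ends f1 = s(fV x, v0) ∧ G'.ends f2 = s(fV y, v0) ∧
    G'.gain f1 * G'.gain f2 = G.gain d ∧
    G'.ends f3 = s(v0, v0) ∧ G'.gain f3 = -1

/-- H2e: delete a loop `(xx,-1)` and add a degree-4 vertex doubly joined to `x`
and carrying a loop. -/
def H2e (G G' : GainGraph) : Prop :=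
  ∃ (d : G.E) (x : G.V) (v0 : G'.V) (f1 f2 f3 : G'.E) (fV : G.V → G'.V),
    GrownWith G G' v0 (fun e => e = d) (fun e => e = f1 ∨ e = f2 ∨ e = f3) fV ∧
    G.ends d = s(x, x) ∧
    f1 ≠ f2 ∧ f1 ≠ f3 ∧ f2 ≠ f3 ∧
    G'.ends f1 = s(fV x, v0) ∧ G'.gain f1 = 1 ∧
    G'.ends f2 = s(fV x, v0) ∧ G'.gain f2 = -1 ∧
    G'.ends f3 = s(v0, v0) ∧ G'.gain f3 = -1

/-- H3a: delete edges `(xy,α)`, `(zw,β)` and add a degree-4 vertex with four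
distinct neighbours `x,y,z,w`. -/
def H3a (G G' : GainGraph) : Prop :=
  ∃ (d1 d2 : G.E) (x y z w : G.V) (v0 : G'.V) (f1 f2 f3 f4 : G'.E) (fV : G.V → G'.V),
    GrownWith G G' v0 (fun e => e = d1 ∨ e = d2)
      (fun e => e = f1 ∨ e = f2 ∨ e = f3 ∨ e = f4) fV ∧
    d1 ≠ d2 ∧ G.ends d1 = s(x, y) ∧ G.ends d2 = s(z, w) ∧
    x ≠ y ∧ x ≠ z ∧ x ≠ w ∧ y ≠ z ∧ y ≠ w ∧ z ≠ w ∧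
    f1 ≠ f2 ∧ f1 ≠ f3 ∧ f1 ≠ f4 ∧ f2 ≠ f3 ∧ f2 ≠ f4 ∧ f3 ≠ f4 ∧
    G'.ends f1 = s(fV x, v0) ∧ G'.ends f2 = s(fV y, v0) ∧
    G'.ends f3 = s(fV z, v0) ∧ G'.ends f4 = s(fV w, v0) ∧
    G'.gain f1 * G'.gain f2 = G.gain d1 ∧ G'.gain f3 * G'.gain f4 = G.gain d2

/-- H3b: delete edges `(xy,α)`, `(yw,β)` and add a degree-4 vertex with three
distinct neighbours, doubly joined to `y`. -/
def H3b (G G' : GainGraph) : Prop :=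
  ∃ (d1 d2 : G.E) (x y w : G.V) (v0 : G'.V) (f1 f2 f3 f4 : G'.E) (fV : G.V → G'.V),
    GrownWith G G' v0 (fun e => e = d1 ∨ e = d2)
      (fun e => e = f1 ∨ e = f2 ∨ e = f3 ∨ e = f4) fV ∧
    d1 ≠ d2 ∧ G.ends d1 = s(x, y) ∧ G.ends d2 = s(y, w) ∧
    x ≠ y ∧ y ≠ w ∧ x ≠ w ∧
    f1 ≠ f2 ∧ f1 ≠ f3 ∧ f1 ≠ f4 ∧ f2 ≠ f3 ∧ f2 ≠ f4 ∧ f3 ≠ f4 ∧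
    G'.ends f1 = s(fV x, v0) ∧ G'.gain f1 = G.gain d1 ∧
    G'.ends f2 = s(fV y, v0) ∧ G'.gain f2 = 1 ∧
    G'.ends f3 = s(fV y, v0) ∧ G'.gain f3 = -1 ∧
    G'.ends f4 = s(fV w, v0) ∧ G'.gain f4 = -G.gain d2

/-- H3c: delete a loop `(xx,-1)` and an edge `(zw,β)` and add a degree-4 vertex
with three distinct neighbours, doubly joined to `x`. -/
def H3c (G G' : GainGraph) : Prop :=
  ∃ (d1 d2 : G.E) (x z w : G.V) (v0 : G'.V) (f1 f2 f3 f4 : G'.E) (fV : G.V → G'.V),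
    GrownWith G G' v0 (fun e => e = d1 ∨ e = d2)
      (fun e => e = f1 ∨ e = f2 ∨ e = f3 ∨ e = f4) fV ∧
    d1 ≠ d2 ∧ G.ends d1 = s(x, x) ∧ G.ends d2 = s(z, w) ∧
    z ≠ w ∧ x ≠ z ∧ x ≠ w ∧
    f1 ≠ f2 ∧ f1 ≠ f3 ∧ f1 ≠ f4 ∧ f2 ≠ f3 ∧ f2 ≠ f4 ∧ f3 ≠ f4 ∧
    G'.ends f1 = s(fV x, v0) ∧ G'.gain f1 = 1 ∧
    G'.ends f2 = s(fV x, v0) ∧ G'.gain f2 = -1 ∧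
    G'.ends f3 = s(fV z, v0) ∧ G'.ends f4 = s(fV w, v0) ∧
    G'.gain f3 * G'.gain f4 = G.gain d2

/-- H3d: delete loops at `x` and `z` and add a degree-4 vertex doubly joined to
each of `x` and `z`. -/
def H3d (G G' : GainGraph) : Prop :=
  ∃ (d1 d2 : G.E) (x z : G.V) (v0 : G'.V) (f1 f2 f3 f4 : G'.E) (fV : G.V → G'.V),
    GrownWith G G' v0 (fun e => e = d1 ∨ e = d2)
      (fun e => e = f1 ∨ e = f2 ∨ e = f3 ∨ e = f4) fV ∧
    d1 ≠ d2 ∧ G.ends d1 = s(x, x) ∧ G.ends d2 = s(z, z) ∧ x ≠ z ∧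
    f1 ≠ f2 ∧ f1 ≠ f3 ∧ f1 ≠ f4 ∧ f2 ≠ f3 ∧ f2 ≠ f4 ∧ f3 ≠ f4 ∧
    G'.ends f1 = s(fV x, v0) ∧ G'.gain f1 = 1 ∧
    G'.ends f2 = s(fV x, v0) ∧ G'.gain f2 = -1 ∧
    G'.ends f3 = s(fV z, v0) ∧ G'.gain f3 = 1 ∧
    G'.ends f4 = s(fV z, v0) ∧ G'.gain f4 = -1

/-- The vertex-to-`K₄` operation. -/
def VertexToK4 (G G' : GainGraph) : Prop :=
  ∃ (v : G.V) (a b c d : G'.V)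
    (fV : {u : G.V // u ≠ v} → G'.V)
    (fE : {e : G.E // v ∉ G.ends e} → G'.E)
    (k : Fin 6 → G'.E)
    (rep : {e : G.E // v ∈ G.ends e} → G'.E),
    (a ≠ b ∧ a ≠ c ∧ a ≠ d ∧ b ≠ c ∧ b ≠ d ∧ c ≠ d) ∧
    Function.Injective fV ∧
    (∀ u, fV u ≠ a ∧ fV u ≠ b ∧ fV u ≠ c ∧ fV u ≠ d) ∧
    (∀ v' : G'.V, v' ≠ a → v' ≠ b → v' ≠ c → v' ≠ d → ∃ u, fV u = v') ∧
    Function.Injective fE ∧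
    (∀ (e : {e : G.E // v ∉ G.ends e}) (u w : G.V) (hu : u ≠ v) (hw : w ≠ v),
      G.ends e.1 = s(u, w) → G'.ends (fE e) = s(fV ⟨u, hu⟩, fV ⟨w, hw⟩)) ∧
    (∀ e, G'.gain (fE e) = G.gain e.1) ∧
    Function.Injective k ∧
    G'.ends (k 0) = s(a, b) ∧ G'.ends (k 1) = s(a, c) ∧ G'.ends (k 2) = s(a, d) ∧
    G'.ends (k 3) = s(b, c) ∧ G'.ends (k 4) = s(b, d) ∧ G'.ends (k 5) = s(c, d) ∧
    (∀ i, G'.gain (k i) = 1) ∧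
    Function.Injective rep ∧
    (∀ (e : {e : G.E // v ∈ G.ends e}),
      (∀ (u : G.V) (hu : u ≠ v), G.ends e.1 = s(u, v) →
        G'.gain (rep e) = G.gain e.1 ∧
          ∃ y : G'.V, (y = a ∨ y = b ∨ y = c ∨ y = d) ∧
            G'.ends (rep e) = s(fV ⟨u, hu⟩, y)) ∧
      ((G.ends e.1).IsDiag →
        G'.gain (rep e) = -1 ∧
          ∃ w z : G'.V, (w = a ∨ w = b ∨ w = c ∨ w = d) ∧
            (z = a ∨ z = b ∨ z = c ∨ z = d) ∧ G'.ends (rep e) = s(w, z))) ∧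
    (∀ e' : G'.E, (∃ e, fE e = e') ∨ (∃ i, k i = e') ∨ (∃ e, rep e = e')) ∧
    (∀ e i, fE e ≠ k i) ∧ (∀ e e2, fE e ≠ rep e2) ∧ (∀ i e2, k i ≠ rep e2)

/-- The vertex splitting operation. -/
def VertexSplit (G G' : GainGraph) : Prop :=
  ∃ (v1 v2 : G.V) (e12 : G.E) (N1 : Set G.V) (D : Set G.E) (movedLoop : Bool)
    (v0 : G'.V) (g1 g2 : G'.E) (fV : G.V → G'.V)
    (fE : {e : G.E // e ∉ D} → G'.E) (mv : {e : G.E // e ∈ D} → G'.E),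
    v1 ≠ v2 ∧ G.ends e12 = s(v1, v2) ∧
    v1 ∉ N1 ∧ v2 ∉ N1 ∧ (∀ u ∈ N1, ∃ e : G.E, G.ends e = s(v1, u)) ∧
    (∀ e : G.E, e ∈ D ↔
      ((∃ u ∈ N1, G.ends e = s(v1, u)) ∨ (movedLoop = true ∧ G.ends e = s(v1, v1)))) ∧
    Function.Injective fV ∧ (∀ u, fV u ≠ v0) ∧ (∀ v' : G'.V, v' ≠ v0 → ∃ u, fV u = v') ∧
    Function.Injective fE ∧
    (∀ e, G'.ends (fE e) = Sym2.map fV (G.ends e.1)) ∧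
    (∀ e, G'.gain (fE e) = G.gain e.1) ∧
    Function.Injective mv ∧
    (∀ e : {e : G.E // e ∈ D},
      (G.ends e.1 = s(v1, v1) → G'.ends (mv e) = s(v0, v0) ∧ G'.gain (mv e) = -1) ∧
      (∀ u ∈ N1, G.ends e.1 = s(v1, u) →
        G'.ends (mv e) = s(v0, fV u) ∧ G'.gain (mv e) = G.gain e.1)) ∧
    g1 ≠ g2 ∧
    G'.ends g1 = s(v0, fV v1) ∧ G'.gain g1 = 1 ∧
    G'.ends g2 = s(v0, fV v2) ∧ G'.gain g2 = G.gain e12 ∧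
    (∀ e' : G'.E, e' = g1 ∨ e' = g2 ∨ (∃ e, fE e = e') ∨ (∃ e, mv e = e')) ∧
    (∀ e, fE e ≠ g1 ∧ fE e ≠ g2) ∧ (∀ e, mv e ≠ g1 ∧ mv e ≠ g2) ∧
    (∀ e e2, fE e ≠ mv e2)

/-- Any one of the fourteen construction moves. -/
def IsMove (G G' : GainGraph) : Prop :=
  H1a G G' ∨ H1b G G' ∨ H1c G G' ∨
    H2a G G' ∨ H2b G G' ∨ H2c G G' ∨ H2d G G' ∨ H2e G G' ∨
    H3a G G' ∨ H3b G G' ∨ H3c G G' ∨ H3d G G' ∨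
    VertexToK4 G G' ∨ VertexSplit G G'

/-! ### Base graphs -/

/-- `(2,2,0)`-gain-tightness of the sub-gain-graph on `(SV, SE)`. -/
def Tight220On (G : GainGraph) (SV : Set G.V) (SE : Set G.E) : Prop :=
  (∀ F : Finset G.E, (↑F : Set G.E) ⊆ SE → F.Nonempty → BalancedSet G F →
      (F.card : ℤ) ≤ 2 * (vertsOf G F).card - 2) ∧
    (∀ F : Finset G.E, (↑F : Set G.E) ⊆ SE → (F.card : ℤ) ≤ 2 * (vertsOf G F).card) ∧
    Nat.card SE = 2 * Nat.card SV

/-- The base graph `2K₂¹` (on the part `(SV, SE)` of `G`). -/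
def Is2K21On (G : GainGraph) (SV : Set G.V) (SE : Set G.E) : Prop :=
  ∃ (a b : G.V) (e1 e2 e3 e4 : G.E),
    a ∈ SV ∧ b ∈ SV ∧ a ≠ b ∧ (∀ v ∈ SV, v = a ∨ v = b) ∧
    e1 ∈ SE ∧ e2 ∈ SE ∧ e3 ∈ SE ∧ e4 ∈ SE ∧
    e1 ≠ e2 ∧ e1 ≠ e3 ∧ e1 ≠ e4 ∧ e2 ≠ e3 ∧ e2 ≠ e4 ∧ e3 ≠ e4 ∧
    (∀ e ∈ SE, e = e1 ∨ e = e2 ∨ e = e3 ∨ e = e4) ∧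
    G.ends e1 = s(a, b) ∧ G.gain e1 = 1 ∧
    G.ends e2 = s(a, b) ∧ G.gain e2 = -1 ∧
    G.ends e3 = s(a, a) ∧ G.ends e4 = s(b, b)

/-- The base graph `K₃¹` with a balanced triangle. -/
def IsK31On (G : GainGraph) (SV : Set G.V) (SE : Set G.E) : Prop :=
  ∃ (a b c : G.V) (e1 e2 e3 e4 e5 e6 : G.E),
    a ∈ SV ∧ b ∈ SV ∧ c ∈ SV ∧ a ≠ b ∧ a ≠ c ∧ b ≠ c ∧
    (∀ v ∈ SV, v = a ∨ v = b ∨ v = c) ∧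
    e1 ∈ SE ∧ e2 ∈ SE ∧ e3 ∈ SE ∧ e4 ∈ SE ∧ e5 ∈ SE ∧ e6 ∈ SE ∧
    e1 ≠ e2 ∧ e1 ≠ e3 ∧ e1 ≠ e4 ∧ e1 ≠ e5 ∧ e1 ≠ e6 ∧
    e2 ≠ e3 ∧ e2 ≠ e4 ∧ e2 ≠ e5 ∧ e2 ≠ e6 ∧
    e3 ≠ e4 ∧ e3 ≠ e5 ∧ e3 ≠ e6 ∧ e4 ≠ e5 ∧ e4 ≠ e6 ∧ e5 ≠ e6 ∧
    (∀ e ∈ SE, e = e1 ∨ e = e2 ∨ e = e3 ∨ e = e4 ∨ e = e5 ∨ e = e6) ∧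
    G.ends e1 = s(a, b) ∧ G.gain e1 = 1 ∧
    G.ends e2 = s(b, c) ∧ G.gain e2 = 1 ∧
    G.ends e3 = s(a, c) ∧ G.gain e3 = 1 ∧
    G.ends e4 = s(a, a) ∧ G.ends e5 = s(b, b) ∧ G.ends e6 = s(c, c)

/-- The base graph `R`. -/
def IsROn (G : GainGraph) (SV : Set G.V) (SE : Set G.E) : Prop :=
  ∃ (v w z : G.V) (e1 e2 e3 e4 e5 e6 : G.E),
    v ∈ SV ∧ w ∈ SV ∧ z ∈ SV ∧ v ≠ w ∧ v ≠ z ∧ w ≠ z ∧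
    (∀ u ∈ SV, u = v ∨ u = w ∨ u = z) ∧
    e1 ∈ SE ∧ e2 ∈ SE ∧ e3 ∈ SE ∧ e4 ∈ SE ∧ e5 ∈ SE ∧ e6 ∈ SE ∧
    e1 ≠ e2 ∧ e1 ≠ e3 ∧ e1 ≠ e4 ∧ e1 ≠ e5 ∧ e1 ≠ e6 ∧
    e2 ≠ e3 ∧ e2 ≠ e4 ∧ e2 ≠ e5 ∧ e2 ≠ e6 ∧
    e3 ≠ e4 ∧ e3 ≠ e5 ∧ e3 ≠ e6 ∧ e4 ≠ e5 ∧ e4 ≠ e6 ∧ e5 ≠ e6 ∧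
    (∀ e ∈ SE, e = e1 ∨ e = e2 ∨ e = e3 ∨ e = e4 ∨ e = e5 ∨ e = e6) ∧
    G.ends e1 = s(v, v) ∧
    G.ends e2 = s(v, w) ∧ G.gain e2 = 1 ∧
    G.ends e3 = s(v, w) ∧ G.gain e3 = -1 ∧
    G.ends e4 = s(v, z) ∧ G.gain e4 = 1 ∧
    G.ends e5 = s(v, z) ∧ G.gain e5 = -1 ∧
    G.ends e6 = s(w, z) ∧ G.gain e6 = 1

/-- A base graph `K₄⁺⁺`: a balanced `K₄` (all gains `1`) plus two extra gain `-1`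
edges (or loops), subject to `(2,2,0)`-gain-tightness. -/
def IsK4ppOn (G : GainGraph) (SV : Set G.V) (SE : Set G.E) : Prop :=
  ∃ (a b c d : G.V) (k1 k2 k3 k4 k5 k6 f1 f2 : G.E),
    a ∈ SV ∧ b ∈ SV ∧ c ∈ SV ∧ d ∈ SV ∧
    a ≠ b ∧ a ≠ c ∧ a ≠ d ∧ b ≠ c ∧ b ≠ d ∧ c ≠ d ∧
    (∀ v ∈ SV, v = a ∨ v = b ∨ v = c ∨ v = d) ∧
    k1 ∈ SE ∧ k2 ∈ SE ∧ k3 ∈ SE ∧ k4 ∈ SE ∧ k5 ∈ SE ∧ k6 ∈ SE ∧ f1 ∈ SE ∧ f2 ∈ SE ∧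
    List.Nodup [k1, k2, k3, k4, k5, k6, f1, f2] ∧
    (∀ e ∈ SE, e = k1 ∨ e = k2 ∨ e = k3 ∨ e = k4 ∨ e = k5 ∨ e = k6 ∨ e = f1 ∨ e = f2) ∧
    G.ends k1 = s(a, b) ∧ G.ends k2 = s(a, c) ∧ G.ends k3 = s(a, d) ∧
    G.ends k4 = s(b, c) ∧ G.ends k5 = s(b, d) ∧ G.ends k6 = s(c, d) ∧
    G.gain k1 = 1 ∧ G.gain k2 = 1 ∧ G.gain k3 = 1 ∧
    G.gain k4 = 1 ∧ G.gain k5 = 1 ∧ G.gain k6 = 1 ∧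
    G.gain f1 = -1 ∧ G.gain f2 = -1 ∧
    Tight220On G SV SE

/-- Membership in the family `ℬ` of base graphs (on the part `(SV, SE)`). -/
def IsBaseOn (G : GainGraph) (SV : Set G.V) (SE : Set G.E) : Prop :=
  Is2K21On G SV SE ∨ IsK31On G SV SE ∨ IsROn G SV SE ∨ IsK4ppOn G SV SE

/-- `G` is a disjoint union of (copies of) base graphs. -/
def IsDisjointUnionOfBases (G : GainGraph) : Prop :=
  ∃ (cV : G.V → ℕ) (cE : G.E → ℕ),
    (∀ e : G.E, ∀ v ∈ G.ends e, cE e = cV v) ∧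
    ∀ i : ℕ, ((∃ v, cV v = i) ∨ (∃ e, cE e = i)) →
      IsBaseOn G {v | cV v = i} {e | cE e = i}

/-- The gain graphs constructible from vertex-disjoint copies of base graphs by
H1, H2, H3, vertex-to-`K₄` and vertex splitting moves. -/
inductive Constructible : GainGraph → Prop
  | base (G : GainGraph) : IsDisjointUnionOfBases G → Constructible G
  | step (G G' : GainGraph) : Constructible G → IsMove G G' → Constructible G'

/-! An edge set is balanced if and only if it has a potential: a `±1`-labelling of the vertices such
that each edge gain is the product of the labels of its ends. Sparsity of `G'` at an edge set `F`
thus follows from sparsity of `G` at some edge set `P` by a count, provided that potentials of `F`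
transfer to `P`.

For a Henneberg move, `P` consists of the edges of `F` surviving from `G` together with the deleted
edges whose replacements all lie in `F`: a potential of the replacements is one of the deleted edge.
If a replacement is missing from `F`, then its absence pays for the deleted edge instead.

A vertex-to-`K₄` move or a vertex split is undone by a contraction, and `P` is the image of `F`. A
potential of `F` transfers to `P` unless it takes both signs on the contracted vertices. In that
case `F` misses some of the edges created by the move, which leaves room for the weaker unbalanced
count at `P`. -/

open Finset

/-! ### Potentials -/

section Potential

variable {G : GainGraph} {F F' : Finset G.E} {σ : G.V → ℤˣ}

lemma mem_vertsOf {v : G.V} : v ∈ vertsOf G F ↔ ∃ e ∈ F, v ∈ G.ends e := by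
  have mem_endsFinset (e : G.E) : v ∈ endsFinset G e ↔ v ∈ G.ends e := by
    unfold endsFinset
    induction G.ends e with | _ a b => simp
  simp [vertsOf, mem_endsFinset]

lemma vertsOf_mono (h : F ⊆ F') : vertsOf G F ⊆ vertsOf G F' :=
  biUnion_subset_biUnion_of_subset_left _ h

lemma vertsOf_subset_iff {X : Finset G.V} :
    vertsOf G F ⊆ X ↔ ∀ e ∈ F, ∀ v ∈ G.ends e, v ∈ X := by
  simp only [subset_iff, mem_vertsOf]
  grind

lemma vertsOf_nonempty (h : F.Nonempty) : (vertsOf G F).Nonempty :=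
  let ⟨e, he⟩ := h
  ⟨_, mem_vertsOf.2 ⟨e, he, Sym2.out_fst_mem _⟩⟩

/-- A potential of an edge set `F`: a `±1`-labelling of the vertices such that the gain of each
edge of `F` is the product of the labels of its ends. Equivalently, switching at the vertices
labelled `-1` turns all gains in `F` into `1`. -/
def IsPotential (G : GainGraph) (F : Finset G.E) (σ : G.V → ℤˣ) : Prop :=
  ∀ e ∈ F, G.gain e = ((G.ends e).map σ).mul

lemma IsPotential.mono (hσ : IsPotential G F' σ) (h : F ⊆ F') : IsPotential G F σ :=
  fun e he ↦ hσ e (h he)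

lemma IsPotential.gain_eq (hσ : IsPotential G F σ) {e : G.E} (he : e ∈ F) {a b : G.V}
    (h : G.ends e = s(a, b)) : G.gain e = σ a * σ b := by
  rw [hσ e he, h, Sym2.map_mk, Sym2.mul_mk]

lemma IsPotential.not_isDiag (hσ : IsPotential G F σ) {e : G.E} (he : e ∈ F) :
    ¬ (G.ends e).IsDiag := by
  intro hdiag
  have hloop := G.loop_gain e hdiag
  rw [hσ e he] at hloop
  induction h : G.ends e with | _ a b => ?_
  rw [h, Sym2.mk_isDiag_iff] at hdiag
  simp [h, hdiag] at hloop

lemma IsPotential.ends_injOn (hσ : IsPotential G F σ) : Set.InjOn G.ends F := by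
  intro e he e' he' h
  by_contra hne
  exact G.no_parallel e e' hne h (by rw [hσ e he, hσ e' he', h])

lemma IsPotential.card_le_choose_two (hσ : IsPotential G F σ) {X : Finset G.V}
    (hX : vertsOf G F ⊆ X) : #F ≤ (#X).choose 2 := by
  rw [← Sym2.card_image_offDiag]
  refine card_le_card_of_injOn G.ends (fun e he ↦ ?_) hσ.ends_injOn
  have hdiag := hσ.not_isDiag he
  have hmem := vertsOf_subset_iff.1 hX e he
  induction h : G.ends e with | _ a b => ?_
  simp only [h, Sym2.mk_isDiag_iff, Sym2.mem_iff, forall_eq_or_imp, forall_eq] at hdiag hmem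
  exact mem_image_of_mem _ (mem_offDiag.2 ⟨hmem.1, hmem.2, hdiag⟩)

end Potential

lemma units_mul_mul_mul_cancel (p q r : ℤˣ) : p * q * (q * r) = p * r := by
  rw [mul_assoc, ← mul_assoc q, Int.units_mul_self, one_mul]

section Balance

variable {G : GainGraph} {F : Finset G.E} {σ : G.V → ℤˣ}

/-- The relation between consecutive (edge, initial vertex) pairs of a walk, as in `IsCycle`. -/
def IsStep (G : GainGraph) (st st' : G.E × G.V) : Prop :=
  G.ends st.1 = s(st.2, st'.2)

lemma IsPotential.cycleGain_eq (hσ : IsPotential G F σ) {c : List (G.E × G.V)} {st : G.E × G.V}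
    (hF : ∀ st' ∈ c, st'.1 ∈ F) (hc : (c ++ [st]).IsChain (IsStep G)) :
    cycleGain G c = σ ((c ++ [st]).head (by simp)).2 * σ st.2 := by
  induction c with
  | nil => simp [cycleGain]
  | cons st₀ c ih =>
    rw [List.cons_append, List.isChain_cons] at hc
    have hhead : G.gain st₀.1 = σ st₀.2 * σ ((c ++ [st]).head (by simp)).2 :=
      hσ.gain_eq (hF st₀ List.mem_cons_self) (hc.1 _ (List.head_mem_head? _))
    have htail := ih (fun st' h ↦ hF st' (List.mem_cons_of_mem _ h)) hc.2
    rw [cycleGain, List.map_cons, List.prod_cons, ← cycleGain, hhead, htail,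
      units_mul_mul_mul_cancel]
    rfl

lemma IsPotential.balancedSet (hσ : IsPotential G F σ) : BalancedSet G F := by
  rintro c ⟨hne, hchain, hlast, -⟩ hF
  have hclosed : (c ++ [c.head hne]).IsChain (IsStep G) := by
    refine List.isChain_append.2 ⟨hchain, List.isChain_singleton _, fun st hst st' hst' ↦ ?_⟩
    obtain rfl : c.getLast hne = st := by simpa [List.getLast?_eq_some_getLast hne] using hst
    obtain rfl : c.head hne = st' := by simpa using hst'
    exact hlast
  rw [hσ.cycleGain_eq hF hclosed, List.head_append_of_ne_nil hne, Int.units_mul_self]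

/-- The simple graph underlying the edge set `F`, used to speak of walks and components. -/
def edgeGraph (G : GainGraph) (F : Finset G.E) : SimpleGraph G.V :=
  SimpleGraph.fromEdgeSet (G.ends '' F)

lemma exists_steps_of_walk {a b : G.V} (p : (edgeGraph G F).Walk a b) :
    ∃ c : List (G.E × G.V), (∀ st ∈ c, st.1 ∈ F) ∧
      c.map (fun st ↦ G.ends st.1) = p.edges ∧ c.map Prod.snd ++ [b] = p.support ∧
      ∀ e, (c ++ [(e, b)]).IsChain (IsStep G) := by
  induction p with
  | nil => exact ⟨[], by simp, rfl, rfl, fun e ↦ List.isChain_singleton _⟩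
  | @cons a v b hadj p ih =>
    obtain ⟨c, hF, hedges, hsupp, hchain⟩ := ih
    obtain ⟨e₀, he₀, hends⟩ := ((SimpleGraph.fromEdgeSet_adj _).1 hadj).1
    refine ⟨(e₀, a) :: c, List.forall_mem_cons.2 ⟨he₀, hF⟩, by simp [hends, hedges],
      by simp [hsupp], fun e ↦ List.isChain_cons.2 ⟨fun st hst ↦ ?_, hchain e⟩⟩
    have hverts : (c ++ [(e, b)]).map Prod.snd = p.support := by simp [hsupp]
    have hhead : st.2 ∈ ((c ++ [(e, b)]).map Prod.snd).head? := by
      rw [List.head?_map]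
      exact Option.mem_map_of_mem _ hst
    rw [hverts, ← p.cons_tail_support] at hhead
    obtain rfl : v = st.2 := Option.some.inj hhead
    exact hends

lemma exists_isCycle_of_reachable {e : G.E} (he : e ∉ F) {a b : G.V} (hab : G.ends e = s(a, b))
    (hr : (edgeGraph G F).Reachable a b) :
    ∃ c : List (G.E × G.V), IsCycle G (c ++ [(e, b)]) ∧ (∀ st ∈ c, st.1 ∈ F) ∧
      ((c ++ [(e, b)]).head (by simp)).2 = a := by
  obtain ⟨p, hp⟩ := hr.exists_isPath
  obtain ⟨c, hF, hedges, hsupp, hchain⟩ := exists_steps_of_walk p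
  have hverts : (c ++ [(e, b)]).map Prod.snd = p.support := by simp [hsupp]
  have hhead : ((c ++ [(e, b)]).head (by simp)).2 = a := by
    rw [← List.head_map (f := Prod.snd) (by simp)]
    simp only [hverts, p.head_support]
  have hnodup : (c.map Prod.fst).Nodup :=
    List.Nodup.of_map G.ends (by simpa [Function.comp_def, hedges] using hp.isTrail.edges_nodup)
  refine ⟨c, ⟨by simp, hchain e, ?_, ?_, hverts ▸ hp.support_nodup⟩, hF, hhead⟩
  · simp only [List.getLast_append_singleton, hhead, hab, Sym2.eq_swap]
  · rw [List.map_append, List.map_singleton, ← List.concat_eq_append, List.nodup_concat]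
    exact ⟨fun hmem ↦ by grind, hnodup⟩

lemma IsPotential.insert_iff {e : G.E} {a b : G.V} (hab : G.ends e = s(a, b)) :
    IsPotential G (insert e F) σ ↔ G.gain e = σ a * σ b ∧ IsPotential G F σ := by
  simp [IsPotential, hab]

lemma IsPotential.insert_of_reachable (hσ : IsPotential G F σ) {e : G.E} (he : e ∉ F) {a b : G.V}
    (hab : G.ends e = s(a, b)) (hr : (edgeGraph G F).Reachable a b)
    (hbal : BalancedSet G (insert e F)) : IsPotential G (insert e F) σ := by
  obtain ⟨c, hc, hF, hhead⟩ := exists_isCycle_of_reachable he hab hr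
  have hgain : cycleGain G c * G.gain e = 1 := by
    simpa [cycleGain] using hbal _ hc (by grind)
  rw [hσ.cycleGain_eq hF hc.2.1, hhead] at hgain
  rw [insert_iff hab]
  exact ⟨by rw [← Int.units_inv_eq_self (G.gain e), eq_inv_of_mul_eq_one_left hgain], hσ⟩

open Classical in
/-- A potential may be negated on a component, which fixes the sign of an edge to another one. -/
lemma IsPotential.exists_insert_of_not_reachable (hσ : IsPotential G F σ) {e : G.E} {a b : G.V}
    (hab : G.ends e = s(a, b)) (hr : ¬ (edgeGraph G F).Reachable a b) :
    ∃ τ, IsPotential G (insert e F) τ := by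
  let τ v := if (edgeGraph G F).Reachable a v then σ v * (σ a * σ b * G.gain e) else σ v
  refine ⟨τ, (insert_iff hab).2 ⟨?_, fun f hf ↦ ?_⟩⟩
  · have ha : τ a = σ b * G.gain e := by
      rw [show τ a = _ from if_pos .rfl, ← mul_assoc, ← mul_assoc, Int.units_mul_self, one_mul]
    rw [ha, show τ b = _ from if_neg hr, mul_right_comm, Int.units_mul_self, one_mul]
  · induction h : G.ends f with | _ x y => ?_
    have hxy : (edgeGraph G F).Reachable a x ↔ (edgeGraph G F).Reachable a y := by
      rcases eq_or_ne x y with rfl | hne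
      · rfl
      have : (edgeGraph G F).Adj x y := (SimpleGraph.fromEdgeSet_adj _).2 ⟨⟨f, hf, h⟩, hne⟩
      exact ⟨fun hx ↦ hx.trans this.reachable, fun hy ↦ hy.trans this.symm.reachable⟩
    rw [hσ.gain_eq hf h, Sym2.map_mk, Sym2.mul_mk]
    by_cases hx : (edgeGraph G F).Reachable a x
    · rw [show τ x = _ from if_pos hx, show τ y = _ from if_pos (hxy.1 hx), mul_mul_mul_comm,
        Int.units_mul_self, mul_one]
    · rw [show τ x = _ from if_neg hx, show τ y = _ from if_neg (hxy.not.1 hx)]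

theorem balancedSet_iff_exists_isPotential : BalancedSet G F ↔ ∃ σ, IsPotential G F σ := by
  refine ⟨fun hbal ↦ ?_, fun ⟨σ, hσ⟩ ↦ hσ.balancedSet⟩
  induction F using Finset.induction_on with
  | empty => exact ⟨1, by simp [IsPotential]⟩
  | insert e F he ih =>
    obtain ⟨σ, hσ⟩ := ih fun c hc hcF ↦ hbal c hc fun st hst ↦ mem_insert_of_mem (hcF st hst)
    induction hab : G.ends e with | _ a b => ?_
    by_cases hr : (edgeGraph G F).Reachable a b
    · exact ⟨σ, hσ.insert_of_reachable he hab hr hbal⟩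
    · exact hσ.exists_insert_of_not_reachable hab hr

end Balance

/-! ### Sparsity and counting -/

lemma card_eq_card_preimage_add_card_inter {α β : Type*} [Fintype α] [DecidableEq β] {f : α → β}
    (hf : f.Injective) {C : Finset β} (hC : Set.range f = (C : Set β)ᶜ) (F : Finset β) :
    #F = #{a | f a ∈ F} + #(F ∩ C) := by
  have himage : ({a | f a ∈ F} : Finset α).image f = F \ C := by
    ext b
    have hb := Set.ext_iff.1 hC b
    simp only [Set.mem_range, Set.mem_compl_iff, mem_coe] at hb
    grind
  rw [← card_image_of_injective _ hf, himage, card_sdiff_add_card_inter]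

section Sparsity

variable {G : GainGraph}

lemma sparse220_iff : Sparse220 G ↔
    (∀ F σ, F.Nonempty → IsPotential G F σ → #F + 2 ≤ 2 * #(vertsOf G F)) ∧
      ∀ F, #F ≤ 2 * #(vertsOf G F) := by
  simp only [Sparse220, balancedSet_iff_exists_isPotential, forall_exists_index]
  constructor <;> rintro ⟨hbal, hall⟩
  · exact ⟨fun F σ hF hσ ↦ by have := hbal F hF σ hσ; omega, fun F ↦ by have := hall F; omega⟩
  · exact ⟨fun F hF σ hσ ↦ by have := hbal F σ hF hσ; omega, fun F ↦ by have := hall F; omega⟩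

variable {F : Finset G.E} {X : Finset G.V}

lemma Sparse220.card_le (hG : Sparse220 G) (hX : vertsOf G F ⊆ X) : #F ≤ 2 * #X :=
  ((sparse220_iff.1 hG).2 F).trans (Nat.mul_le_mul_left 2 (card_le_card hX))

lemma Sparse220.card_add_two_le (hG : Sparse220 G) {σ : G.V → ℤˣ} (hσ : IsPotential G F σ)
    (hX : vertsOf G F ⊆ X) (hne : X.Nonempty) : #F + 2 ≤ 2 * #X := by
  rcases F.eq_empty_or_nonempty with rfl | hF
  · have := hne.card_pos
    rw [card_empty]
    omega
  · exact ((sparse220_iff.1 hG).1 F σ hF hσ).trans (Nat.mul_le_mul_left 2 (card_le_card hX))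

end Sparsity

/-! ### Adding a vertex -/

section Recovers

variable {G G' : GainGraph} {fV : G.V → G'.V} {F F' : Finset G'.E}

/-- The edge set `F` of `G'` can stand in for the edge `d` of `G`: it spans the ends of `d`, and
every potential of `F` is also one of `d`. Vacuously, an unbalanced `F` only has to span `d`. -/
def Recovers (fV : G.V → G'.V) (F : Finset G'.E) (d : G.E) : Prop :=
  (∀ v ∈ G.ends d, fV v ∈ vertsOf G' F) ∧
    ∀ σ, IsPotential G' F σ → G.gain d = ((G.ends d).map (σ ∘ fV)).mul

lemma Recovers.mono {d : G.E} (hd : Recovers fV F d) (h : F ⊆ F') : Recovers fV F' d :=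
  ⟨fun v hv ↦ vertsOf_mono h (hd.1 v hv), fun σ hσ ↦ hd.2 σ (hσ.mono h)⟩

lemma recovers_of_map_ends {d : G.E} {e : G'.E} (he : e ∈ F)
    (hends : G'.ends e = (G.ends d).map fV) (hgain : G'.gain e = G.gain d) : Recovers fV F d := by
  refine ⟨fun v hv ↦ mem_vertsOf.2 ⟨e, he, ?_⟩, fun σ hσ ↦ ?_⟩
  · rw [hends]
    exact Sym2.mem_map.2 ⟨v, hv, rfl⟩
  · rw [← hgain, hσ e he, hends, Sym2.map_map]

lemma recovers_of_gain_mul {d : G.E} {x y : G.V} (hd : G.ends d = s(x, y)) {v₀ : G'.V}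
    {f g : G'.E} (hf : G'.ends f = s(fV x, v₀)) (hg : G'.ends g = s(fV y, v₀))
    (hgain : G'.gain f * G'.gain g = G.gain d) : Recovers fV {f, g} d := by
  refine ⟨fun v hv ↦ mem_vertsOf.2 ?_, fun σ hσ ↦ ?_⟩
  · rcases Sym2.mem_iff.1 (hd ▸ hv) with rfl | rfl
    · exact ⟨f, by simp, by simp [hf]⟩
    · exact ⟨g, by simp, by simp [hg]⟩
  · rw [← hgain, hσ.gain_eq (by simp) hf, hσ.gain_eq (by simp) hg, mul_comm (σ (fV y)),
      units_mul_mul_mul_cancel, hd, Sym2.map_mk, Sym2.mul_mk, Function.comp_apply,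
      Function.comp_apply]

lemma recovers_of_parallel {f g : G'.E} (hf : f ∈ F) (hg : g ∈ F) (hne : f ≠ g)
    (hends : G'.ends f = G'.ends g) {d : G.E} (hd : ∀ v ∈ G.ends d, fV v ∈ vertsOf G' F) :
    Recovers fV F d :=
  ⟨hd, fun _ hσ ↦ absurd (hσ.ends_injOn hf hg hends) hne⟩

lemma recovers_loop_of_parallel {f g : G'.E} (hne : f ≠ g) {x : G.V} {v₀ : G'.V}
    (hf : G'.ends f = s(fV x, v₀)) (hg : G'.ends g = s(fV x, v₀)) {d : G.E}
    (hd : G.ends d = s(x, x)) : Recovers fV {f, g} d :=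
  recovers_of_parallel (by simp) (by simp) hne (hf.trans hg.symm) fun v hv ↦
    mem_vertsOf.2 ⟨f, by simp, by simp_all⟩

open Classical in
lemma card_filter_not_recovers_le {D : Finset G.E} {S : G.E → Finset G'.E} {N : Finset G'.E}
    (hSN : ∀ d ∈ D, S d ⊆ N) (hdisj : (D : Set G.E).PairwiseDisjoint S)
    (hS : ∀ d ∈ D, Recovers fV (S d) d) : #{d ∈ D | ¬ Recovers fV F d} ≤ #(N \ F) := by
  have hmissing : ∀ d ∈ ({d ∈ D | ¬ Recovers fV F d} : Finset G.E), (S d \ F).Nonempty := by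
    intro d hd
    rw [mem_filter] at hd
    exact sdiff_nonempty.2 fun h ↦ hd.2 ((hS d hd.1).mono h)
  calc #{d ∈ D | ¬ Recovers fV F d}
      ≤ #(({d ∈ D | ¬ Recovers fV F d} : Finset G.E).biUnion fun d ↦ S d \ F) :=
        card_le_card_biUnion (fun d hd d' hd' hne ↦ ((hdisj (mem_filter.1 hd).1
          (mem_filter.1 hd').1 hne).mono sdiff_subset sdiff_subset)) hmissing
    _ ≤ #(N \ F) := card_le_card <| biUnion_subset.2 fun d hd ↦
        sdiff_subset_sdiff (hSN d (mem_filter.1 hd).1) Subset.rfl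

end Recovers

section GrownWith

variable {G G' : GainGraph} {v₀ : G'.V} {D : Finset G.E} {N : Finset G'.E} {fV : G.V → G'.V}

open Classical in
lemma GrownWith.card_add_card_recovers_le (hg : GrownWith G G' v₀ (· ∈ D) (· ∈ N) fV)
    (F : Finset G'.E) :
    #F + #{d ∈ D | Recovers fV F d} ≤ #{d | Recovers fV F d} + #(F ∩ N) := by
  obtain ⟨-, -, -, fE, hfE, hnew, hsurj, hends, hgain⟩ := hg
  have hrange : Set.range fE = (N : Set G'.E)ᶜ :=
    Set.ext fun e ↦ ⟨fun ⟨e, h⟩ ↦ h ▸ hnew e, hsurj e⟩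
  have hkept : #{e | fE e ∈ F} + #{d ∈ D | Recovers fV F d} ≤ #{d | Recovers fV F d} := by
    rw [← card_map (Function.Embedding.subtype _), ← card_union_of_disjoint]
    · refine card_le_card (union_subset (fun e he ↦ ?_) (filter_subset_filter _ (subset_univ D)))
      obtain ⟨e, heF, rfl⟩ := mem_map.1 he
      exact mem_filter.2 ⟨mem_univ _,
        recovers_of_map_ends (mem_filter.1 heF).2 (hends e) (hgain e)⟩
    · refine disjoint_left.2 fun d hd hD ↦ ?_
      obtain ⟨e, -, rfl⟩ := mem_map.1 hd
      exact e.2 (mem_filter.1 hD).1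
  have := card_eq_card_preimage_add_card_inter hfE hrange F
  omega

lemma GrownWith.card_edges (hg : GrownWith G G' v₀ (· ∈ D) (· ∈ N) fV) :
    Fintype.card G'.E + #D = Fintype.card G.E + #N := by
  obtain ⟨-, -, -, fE, hfE, hnew, hsurj, -⟩ := hg
  have hcount := card_eq_card_preimage_add_card_inter hfE (C := N)
    (Set.ext fun e ↦ ⟨fun ⟨e, h⟩ ↦ h ▸ hnew e, hsurj e⟩) univ
  simp only [mem_univ, filter_true, card_univ, univ_inter, Fintype.card_subtype_compl,
    Fintype.card_coe] at hcount
  have := D.card_le_univ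
  omega

lemma GrownWith.card_eq (hg : GrownWith G G' v₀ (· ∈ D) (· ∈ N) fV) (X : Finset G'.V) :
    #X = #{v | fV v ∈ X} + #(X ∩ {v₀}) := by
  refine card_eq_card_preimage_add_card_inter hg.1 (Set.ext fun v ↦ ?_) X
  simpa using ⟨fun ⟨u, h⟩ ↦ h ▸ hg.2.1 u, hg.2.2.1 v⟩

lemma GrownWith.card_verts (hg : GrownWith G G' v₀ (· ∈ D) (· ∈ N) fV) :
    Fintype.card G'.V = Fintype.card G.V + 1 := by
  simpa using hg.card_eq univ

lemma GrownWith.exists_mem_vertsOf (hg : GrownWith G G' v₀ (· ∈ D) (· ∈ N) fV)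
    {F : Finset G'.E} (hF : F.Nonempty) {σ : G'.V → ℤˣ} (hσ : IsPotential G' F σ) :
    ∃ v, fV v ∈ vertsOf G' F := by
  obtain ⟨e, he⟩ := hF
  have hdiag := hσ.not_isDiag he
  suffices ∃ v ∈ G'.ends e, v ≠ v₀ by
    obtain ⟨v', hv', hne⟩ := this
    obtain ⟨v, rfl⟩ := hg.2.2.1 v' hne
    exact ⟨v, mem_vertsOf.2 ⟨e, he, hv'⟩⟩
  by_contra! hall
  induction h : G'.ends e with | _ a b => ?_
  rw [h] at hdiag hall
  exact hdiag ((hall a (Sym2.mem_mk_left a b)).trans (hall b (Sym2.mem_mk_right a b)).symm)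

open Classical in
/-- An edge `d ∈ D` which `F` does not recover is paid for by a new edge of `S d` missing from `F`,
so the new edges in `F` exceed the recovered edges of `D` by at most the two allowed by `v₀`. -/
lemma GrownWith.card_add_two_mul_card_le (hg : GrownWith G G' v₀ (· ∈ D) (· ∈ N) fV)
    (hcard : #N = #D + 2) (hN : ∀ e ∈ N, v₀ ∈ G'.ends e) {S : G.E → Finset G'.E}
    (hSN : ∀ d ∈ D, S d ⊆ N) (hdisj : (D : Set G.E).PairwiseDisjoint S)
    (hS : ∀ d ∈ D, Recovers fV (S d) d) (F : Finset G'.E) :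
    #F + 2 * #{v | fV v ∈ vertsOf G' F} ≤ #{d | Recovers fV F d} + 2 * #(vertsOf G' F) := by
  have hedges := hg.card_add_card_recovers_le F
  have hV := hg.card_eq (vertsOf G' F)
  rcases (F ∩ N).eq_empty_or_nonempty with hempty | ⟨e, he⟩
  · rw [hempty, card_empty] at hedges
    omega
  · have hv₀ : v₀ ∈ vertsOf G' F :=
      mem_vertsOf.2 ⟨e, mem_of_mem_inter_left he, hN e (mem_of_mem_inter_right he)⟩
    rw [inter_singleton_of_mem hv₀, card_singleton] at hV
    have hmissing := card_filter_not_recovers_le (F := F) hSN hdisj hS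
    have hD : #{d ∈ D | Recovers fV F d} + #{d ∈ D | ¬ Recovers fV F d} = #D :=
      card_filter_add_card_filter_not _
    have hNF := card_sdiff_add_card_inter N F
    rw [inter_comm] at hNF
    omega

open Classical in
theorem Tight220.of_grownWith (hG : Tight220 G) (hg : GrownWith G G' v₀ (· ∈ D) (· ∈ N) fV)
    (hcard : #N = #D + 2) (hN : ∀ e ∈ N, v₀ ∈ G'.ends e) {S : G.E → Finset G'.E}
    (hSN : ∀ d ∈ D, S d ⊆ N) (hdisj : (D : Set G.E).PairwiseDisjoint S)
    (hS : ∀ d ∈ D, Recovers fV (S d) d) : Tight220 G' := by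
  have hcount := hg.card_add_two_mul_card_le hcard hN hSN hdisj hS
  have hverts (F : Finset G'.E) :
      vertsOf G ({d | Recovers fV F d} : Finset G.E) ⊆
        ({v | fV v ∈ vertsOf G' F} : Finset G.V) := by
    refine vertsOf_subset_iff.2 fun d hd v hv ↦ ?_
    simpa using (mem_filter.1 hd).2.1 v hv
  refine ⟨sparse220_iff.2 ⟨fun F σ hF hσ ↦ ?_, fun F ↦ ?_⟩, ?_⟩
  · have hpot : IsPotential G ({d | Recovers fV F d} : Finset G.E) (σ ∘ fV) :=
      fun d hd ↦ (mem_filter.1 hd).2.2 σ hσ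
    have := hG.1.card_add_two_le hpot (hverts F)
      (filter_nonempty_iff.2 (by simpa using hg.exists_mem_vertsOf hF hσ))
    have := hcount F
    omega
  · have := hG.1.card_le (hverts F)
    have := hcount F
    omega
  · rw [hg.card_verts]
    have := hg.card_edges
    have := hG.2
    omega

end GrownWith

/-! ### The operations H1, H2 and H3 -/

section Henneberg

variable {G G' : GainGraph} {v₀ : G'.V} {fV : G.V → G'.V} {f₁ f₂ f₃ f₄ : G'.E}

lemma Tight220.of_grownWith_two (hG : Tight220 G)
    (hg : GrownWith G G' v₀ (fun _ ↦ False) (fun e ↦ e = f₁ ∨ e = f₂) fV) (hne : f₁ ≠ f₂)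
    (h₁ : v₀ ∈ G'.ends f₁) (h₂ : v₀ ∈ G'.ends f₂) : Tight220 G' := by
  refine hG.of_grownWith (D := ∅) (N := {f₁, f₂}) (S := fun _ ↦ ∅) (by simpa using hg)
    (card_pair hne) ?_ ?_ ?_ ?_ <;> simp [h₁, h₂]

lemma Tight220.of_grownWith_three (hG : Tight220 G) {d : G.E}
    (hg : GrownWith G G' v₀ (fun e ↦ e = d) (fun e ↦ e = f₁ ∨ e = f₂ ∨ e = f₃) fV)
    (h₁₂ : f₁ ≠ f₂) (h₁₃ : f₁ ≠ f₃) (h₂₃ : f₂ ≠ f₃)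
    (h₁ : v₀ ∈ G'.ends f₁) (h₂ : v₀ ∈ G'.ends f₂) (h₃ : v₀ ∈ G'.ends f₃)
    (hd : Recovers fV {f₁, f₂, f₃} d) : Tight220 G' := by
  refine hG.of_grownWith (D := {d}) (N := {f₁, f₂, f₃}) (S := fun _ ↦ {f₁, f₂, f₃})
    (by simpa using hg) (by simp [*]) ?_ ?_ ?_ ?_ <;> simp [h₁, h₂, h₃, hd]

lemma Tight220.of_grownWith_four (hG : Tight220 G) {d₁ d₂ : G.E}
    (hg : GrownWith G G' v₀ (fun e ↦ e = d₁ ∨ e = d₂)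
      (fun e ↦ e = f₁ ∨ e = f₂ ∨ e = f₃ ∨ e = f₄) fV) (hd : d₁ ≠ d₂)
    (h₁₂ : f₁ ≠ f₂) (h₁₃ : f₁ ≠ f₃) (h₁₄ : f₁ ≠ f₄) (h₂₃ : f₂ ≠ f₃) (h₂₄ : f₂ ≠ f₄)
    (h₃₄ : f₃ ≠ f₄) (h₁ : v₀ ∈ G'.ends f₁) (h₂ : v₀ ∈ G'.ends f₂) (h₃ : v₀ ∈ G'.ends f₃)
    (h₄ : v₀ ∈ G'.ends f₄) (hd₁ : Recovers fV {f₁, f₂} d₁) (hd₂ : Recovers fV {f₃, f₄} d₂) :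
    Tight220 G' := by
  refine hG.of_grownWith (D := {d₁, d₂}) (N := {f₁, f₂, f₃, f₄})
    (S := fun d ↦ if d = d₁ then {f₁, f₂} else {f₃, f₄}) (by simpa using hg) ?_ ?_ ?_ ?_ ?_
  · rw [card_pair hd, card_insert_of_notMem, card_insert_of_notMem, card_pair h₃₄] <;> simp [*]
  · simp [h₁, h₂, h₃, h₄]
  · simp [hd.symm, insert_subset_iff]
  · simp [Set.pairwiseDisjoint_insert, hd, hd.symm, h₁₃, h₁₄, h₂₃, h₂₄]
  · simp [hd.symm, hd₁, hd₂]

lemma H1a.tight220 (h : H1a G G') (hG : Tight220 G) : Tight220 G' :=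
  let ⟨_, _, _, _, _, _, hg, hne, _, _, _, h₁, h₂⟩ := h
  hG.of_grownWith_two hg hne (by simp [h₁]) (by simp [h₂])

lemma H1b.tight220 (h : H1b G G') (hG : Tight220 G) : Tight220 G' :=
  let ⟨_, _, _, _, _, hg, hne, _, h₁, _, h₂, _⟩ := h
  hG.of_grownWith_two hg hne (by simp [h₁]) (by simp [h₂])

lemma H1c.tight220 (h : H1c G G') (hG : Tight220 G) : Tight220 G' :=
  let ⟨_, _, _, _, _, hg, hne, _, h₁, _, h₂⟩ := h
  hG.of_grownWith_two hg hne (by simp [h₁]) (by simp [h₂])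

lemma H2a.tight220 (h : H2a G G') (hG : Tight220 G) : Tight220 G' :=
  let ⟨_, _, _, _, _, _, _, _, _, hg, _, hd, h₁₂, h₁₃, h₂₃, _, _, h₁, h₂, h₃, hgain⟩ := h
  hG.of_grownWith_three hg h₁₂ h₁₃ h₂₃ (by simp [h₁]) (by simp [h₂]) (by simp [h₃])
    ((recovers_of_gain_mul hd h₁ h₂ hgain).mono (by simp [insert_subset_iff]))

lemma H2b.tight220 (h : H2b G G') (hG : Tight220 G) : Tight220 G' := by
  obtain ⟨d, x, y, v₀, f₁, f₂, f₃, fV, hg, -, hd, h₁₂, h₁₃, h₂₃, h₁, -, h₂, -, h₃⟩ := h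
  refine hG.of_grownWith_three hg h₁₂ h₁₃ h₂₃ (by simp [h₁]) (by simp [h₂]) (by simp [h₃])
    (recovers_of_parallel (by simp) (by simp) h₁₂ (h₁.trans h₂.symm) fun v hv ↦ mem_vertsOf.2 ?_)
  rcases Sym2.mem_iff.1 (hd ▸ hv) with rfl | rfl
  · exact ⟨f₁, by simp, by simp [h₁]⟩
  · exact ⟨f₃, by simp, by simp [h₃]⟩

lemma H2c.tight220 (h : H2c G G') (hG : Tight220 G) : Tight220 G' :=
  let ⟨_, _, _, _, _, _, _, _, hg, hd, _, h₁₂, h₁₃, h₂₃, h₁, _, h₂, _, h₃⟩ := h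
  hG.of_grownWith_three hg h₁₂ h₁₃ h₂₃ (by simp [h₁]) (by simp [h₂]) (by simp [h₃])
    ((recovers_loop_of_parallel h₁₂ h₁ h₂ hd).mono (by simp [insert_subset_iff]))

lemma H2d.tight220 (h : H2d G G') (hG : Tight220 G) : Tight220 G' :=
  let ⟨_, _, _, _, _, _, _, _, hg, _, hd, h₁₂, h₁₃, h₂₃, h₁, h₂, hgain, h₃, _⟩ := h
  hG.of_grownWith_three hg h₁₂ h₁₃ h₂₃ (by simp [h₁]) (by simp [h₂]) (by simp [h₃])
    ((recovers_of_gain_mul hd h₁ h₂ hgain).mono (by simp [insert_subset_iff]))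

lemma H2e.tight220 (h : H2e G G') (hG : Tight220 G) : Tight220 G' :=
  let ⟨_, _, _, _, _, _, _, hg, hd, h₁₂, h₁₃, h₂₃, h₁, _, h₂, _, h₃, _⟩ := h
  hG.of_grownWith_three hg h₁₂ h₁₃ h₂₃ (by simp [h₁]) (by simp [h₂]) (by simp [h₃])
    ((recovers_loop_of_parallel h₁₂ h₁ h₂ hd).mono (by simp [insert_subset_iff]))

lemma H3a.tight220 (h : H3a G G') (hG : Tight220 G) : Tight220 G' :=
  let ⟨_, _, _, _, _, _, _, _, _, _, _, _, hg, hd, hd₁, hd₂, _, _, _, _, _, _,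
    h₁₂, h₁₃, h₁₄, h₂₃, h₂₄, h₃₄, h₁, h₂, h₃, h₄, hgain₁, hgain₂⟩ := h
  hG.of_grownWith_four hg hd h₁₂ h₁₃ h₁₄ h₂₃ h₂₄ h₃₄ (by simp [h₁]) (by simp [h₂]) (by simp [h₃])
    (by simp [h₄]) (recovers_of_gain_mul hd₁ h₁ h₂ hgain₁) (recovers_of_gain_mul hd₂ h₃ h₄ hgain₂)

lemma H3b.tight220 (h : H3b G G') (hG : Tight220 G) : Tight220 G' :=
  let ⟨_, _, _, _, _, _, _, _, _, _, _, hg, hd, hd₁, hd₂, _, _, _,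
    h₁₂, h₁₃, h₁₄, h₂₃, h₂₄, h₃₄, h₁, g₁, h₂, g₂, h₃, g₃, h₄, g₄⟩ := h
  hG.of_grownWith_four hg hd h₁₂ h₁₃ h₁₄ h₂₃ h₂₄ h₃₄ (by simp [h₁]) (by simp [h₂]) (by simp [h₃])
    (by simp [h₄]) (recovers_of_gain_mul hd₁ h₁ h₂ (by simp [g₁, g₂]))
    (recovers_of_gain_mul hd₂ h₃ h₄ (by simp [g₃, g₄]))

lemma H3c.tight220 (h : H3c G G') (hG : Tight220 G) : Tight220 G' :=
  let ⟨_, _, _, _, _, _, _, _, _, _, _, hg, hd, hd₁, hd₂, _, _, _,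
    h₁₂, h₁₃, h₁₄, h₂₃, h₂₄, h₃₄, h₁, _, h₂, _, h₃, h₄, hgain⟩ := h
  hG.of_grownWith_four hg hd h₁₂ h₁₃ h₁₄ h₂₃ h₂₄ h₃₄ (by simp [h₁]) (by simp [h₂]) (by simp [h₃])
    (by simp [h₄]) (recovers_loop_of_parallel h₁₂ h₁ h₂ hd₁) (recovers_of_gain_mul hd₂ h₃ h₄ hgain)

lemma H3d.tight220 (h : H3d G G') (hG : Tight220 G) : Tight220 G' :=
  let ⟨_, _, _, _, _, _, _, _, _, _, hg, hd, hd₁, hd₂, _,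
    h₁₂, h₁₃, h₁₄, h₂₃, h₂₄, h₃₄, h₁, _, h₂, _, h₃, _, h₄, _⟩ := h
  hG.of_grownWith_four hg hd h₁₂ h₁₃ h₁₄ h₂₃ h₂₄ h₃₄ (by simp [h₁]) (by simp [h₂]) (by simp [h₃])
    (by simp [h₄]) (recovers_loop_of_parallel h₁₂ h₁ h₂ hd₁)
    (recovers_loop_of_parallel h₃₄ h₃ h₄ hd₂)

end Henneberg

/-! ### Contractions -/

section Contract

variable {G G' : GainGraph} {π : G'.V → G.V} {F : Finset G'.E} {σ : G'.V → ℤˣ}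

/-- The image of an edge set under a map of vertices: the edges of `G` having the same gain and
the same projected ends as some edge of `F`. -/
def contract (G : GainGraph) {G' : GainGraph} (π : G'.V → G.V) (F : Finset G'.E) : Finset G.E :=
  {e | ∃ e' ∈ F, (G'.ends e').map π = G.ends e ∧ G'.gain e' = G.gain e}

lemma vertsOf_contract_subset : vertsOf G (contract G π F) ⊆ (vertsOf G' F).image π := by
  refine vertsOf_subset_iff.2 fun e he v hv ↦ ?_
  obtain ⟨e', he', hends, -⟩ := (mem_filter.1 he).2
  obtain ⟨u, hu, rfl⟩ := Sym2.mem_map.1 (hends ▸ hv)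
  exact mem_image_of_mem π (mem_vertsOf.2 ⟨e', he', hu⟩)

lemma IsPotential.exists_contract (hσ : IsPotential G' F σ)
    (hπ : ∀ u ∈ vertsOf G' F, ∀ w ∈ vertsOf G' F, π u = π w → σ u = σ w) :
    ∃ τ, IsPotential G (contract G π F) τ := by
  have hfactor : (fun u : vertsOf G' F ↦ σ u).FactorsThrough (fun u ↦ π u) :=
    fun u w h ↦ hπ u u.2 w w.2 h
  let τ := Function.extend (fun u : vertsOf G' F ↦ π u) (fun u ↦ σ u) 1
  have hτ : ∀ u ∈ vertsOf G' F, σ u = τ (π u) :=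
    fun u hu ↦ (hfactor.extend_apply 1 ⟨u, hu⟩).symm
  refine ⟨τ, fun e he ↦ ?_⟩
  obtain ⟨e', he', hends, hgain⟩ := (mem_filter.1 he).2
  rw [← hgain, ← hends, hσ e' he', Sym2.map_map]
  exact congrArg Sym2.mul (Sym2.map_congr fun u hu ↦ hτ u (mem_vertsOf.2 ⟨e', he', hu⟩))

/-- `π` and `φ` exhibit `G` as obtained from `G'` by deleting the edges in `N` and identifying the
vertices in `K`; `φ` embeds the edges of `G` into those of `G'`. -/
structure IsContraction (K : Finset G'.V) (N : Finset G'.E) (π : G'.V → G.V) (φ : G.E → G'.E) :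
    Prop where
  map_eq_iff : ∀ u w, π u = π w ↔ u = w ∨ u ∈ K ∧ w ∈ K
  surjective : π.Surjective
  injective : φ.Injective
  range_eq : Set.range φ = (N : Set G'.E)ᶜ
  map_ends : ∀ e, (G'.ends (φ e)).map π = G.ends e
  gain_eq : ∀ e, G'.gain (φ e) = G.gain e

end Contract

namespace IsContraction

variable {G G' : GainGraph} {K : Finset G'.V} {N F : Finset G'.E} {π : G'.V → G.V}
  {φ : G.E → G'.E} {σ : G'.V → ℤˣ}

lemma mem_contract (h : IsContraction K N π φ) {e : G.E} (he : φ e ∈ F) : e ∈ contract G π F :=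
  mem_filter.2 ⟨mem_univ _, φ e, he, h.map_ends e, h.gain_eq e⟩

lemma card_le_card_contract_add (h : IsContraction K N π φ) (F : Finset G'.E) :
    #F ≤ #(contract G π F) + #(F ∩ N) := by
  rw [card_eq_card_preimage_add_card_inter h.injective h.range_eq F]
  gcongr
  exact fun e he ↦ h.mem_contract (mem_filter.1 he).2

lemma card_image_add (h : IsContraction K N π φ) (X : Finset G'.V) :
    #(X.image π) + (#(X ∩ K) - 1) = #X := by
  rcases (X ∩ K).eq_empty_or_nonempty with hempty | ⟨k, hk⟩
  · rw [hempty, card_empty, Nat.zero_sub, add_zero]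
    exact card_image_of_injOn fun u hu w _ huw ↦ ((h.map_eq_iff u w).1 huw).resolve_right
      fun hK ↦ disjoint_left.1 (disjoint_iff_inter_eq_empty.2 hempty) hu hK.1
  · rw [mem_inter] at hk
    have himage : X.image π = (insert k (X \ K)).image π := by
      refine subset_antisymm (image_subset_iff.2 fun u hu ↦ ?_)
        (image_subset_image (insert_subset hk.1 sdiff_subset))
      by_cases huK : u ∈ K
      · rw [(h.map_eq_iff u k).2 (.inr ⟨huK, hk.2⟩)]
        exact mem_image_of_mem π (mem_insert_self k _)
      · exact mem_image_of_mem π (mem_insert_of_mem (mem_sdiff.2 ⟨hu, huK⟩))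
    have hinj : Set.InjOn π (insert k (X \ K) : Finset G'.V) :=
      fun u hu w hw huw ↦ by have := (h.map_eq_iff u w).1 huw; grind
    rw [himage, card_image_of_injOn hinj, card_insert_of_notMem (by simp [hk.2])]
    have := card_sdiff_add_card_inter X K
    have := card_pos.2 ⟨k, mem_inter.2 hk⟩
    omega

/-- A potential of `F` constant on `V(F) ∩ K` descends to the contraction. The contraction loses
`#(V(F) ∩ K) - 1` vertices, truncated to `0` if `F` misses `K`. -/
theorem tight220 (h : IsContraction K N π φ) (hG : Tight220 G) (hK : K.Nonempty)
    (hN : #N + 2 = 2 * #K)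
    (hcount : ∀ F : Finset G'.E, #F ≤ #(contract G π F) + 2 * (#(vertsOf G' F ∩ K) - 1))
    (hsep : ∀ (F : Finset G'.E) σ, IsPotential G' F σ → ∀ u ∈ vertsOf G' F ∩ K,
      ∀ w ∈ vertsOf G' F ∩ K, σ u ≠ σ w →
        #F + 2 ≤ #(contract G π F) + 2 * (#(vertsOf G' F ∩ K) - 1)) : Tight220 G' := by
  have hall (F : Finset G'.E) := hG.1.card_le (F := contract G π F) vertsOf_contract_subset
  refine ⟨sparse220_iff.2 ⟨fun F σ hF hσ ↦ ?_, fun F ↦ ?_⟩, ?_⟩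
  · have hverts := h.card_image_add (vertsOf G' F)
    by_cases hconst : ∀ u ∈ vertsOf G' F ∩ K, ∀ w ∈ vertsOf G' F ∩ K, σ u = σ w
    · obtain ⟨τ, hτ⟩ : ∃ τ, IsPotential G (contract G π F) τ := by
        refine hσ.exists_contract fun u hu w hw huw ↦ ?_
        rcases (h.map_eq_iff u w).1 huw with rfl | ⟨huK, hwK⟩
        · rfl
        · exact hconst u (mem_inter.2 ⟨hu, huK⟩) w (mem_inter.2 ⟨hw, hwK⟩)
      have := hG.1.card_add_two_le hτ vertsOf_contract_subset ((vertsOf_nonempty hF).image π)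
      have := hcount F
      omega
    · push Not at hconst
      obtain ⟨u, hu, w, hw, huw⟩ := hconst
      have := hsep F σ hσ u hu w hw huw
      have := hall F
      omega
  · have := h.card_image_add (vertsOf G' F)
    have := hall F
    have := hcount F
    omega
  · have hverts := h.card_image_add univ
    have hedges := card_eq_card_preimage_add_card_inter h.injective h.range_eq univ
    simp only [image_univ_of_surjective h.surjective, univ_inter, card_univ, mem_univ,
      filter_true] at hverts hedges
    have := hG.2
    have := hK.card_pos
    omega

lemma of_embeddings {v : G.V} (hK : K.Nonempty) {fV : {u : G.V // u ≠ v} → G'.V}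
    (hfVK : Set.range fV = (K : Set G'.V)ᶜ) (hπ : ∀ u, π (fV u) = u) (hπK : ∀ k ∈ K, π k = v)
    {p : G.E → Prop} [DecidablePred p] {f : {e // p e} → G'.E} {g : {e // ¬ p e} → G'.E}
    (hf : f.Injective) (hg : g.Injective) (hfg : ∀ e e', f e ≠ g e')
    (hN : Set.range f ∪ Set.range g = (N : Set G'.E)ᶜ)
    (hfends : ∀ e, (G'.ends (f e)).map π = G.ends e) (hfgain : ∀ e, G'.gain (f e) = G.gain e)
    (hgends : ∀ e, (G'.ends (g e)).map π = G.ends e) (hggain : ∀ e, G'.gain (g e) = G.gain e) :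
    IsContraction K N π (Sum.elim f g ∘ (Equiv.sumCompl p).symm) where
  map_eq_iff u w := by
    have hmem (u : G'.V) : u ∉ K ↔ ∃ x, fV x = u := (Set.ext_iff.1 hfVK u).symm
    refine ⟨fun huw ↦ ?_, ?_⟩
    · by_cases hu : u ∈ K <;> by_cases hw : w ∈ K
      · exact .inr ⟨hu, hw⟩
      · obtain ⟨y, rfl⟩ := (hmem w).1 hw
        exact absurd (by rw [← hπ y, ← huw, hπK u hu]) y.2
      · obtain ⟨x, rfl⟩ := (hmem u).1 hu
        exact absurd (by rw [← hπ x, huw, hπK w hw]) x.2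
      · obtain ⟨x, rfl⟩ := (hmem u).1 hu
        obtain ⟨y, rfl⟩ := (hmem w).1 hw
        rw [hπ, hπ] at huw
        exact .inl (congrArg fV (Subtype.ext huw))
    · rintro (rfl | ⟨hu, hw⟩)
      · rfl
      · rw [hπK u hu, hπK w hw]
  surjective u := by
    rcases eq_or_ne u v with rfl | hu
    · exact ⟨hK.choose, hπK _ hK.choose_spec⟩
    · exact ⟨fV ⟨u, hu⟩, hπ ⟨u, hu⟩⟩
  injective := (hf.sumElim hg hfg).comp (Equiv.injective _)
  range_eq := by rw [EquivLike.range_comp, Set.Sum.elim_range, hN]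
  map_ends e := by
    by_cases he : p e
    · simpa [Equiv.sumCompl_symm_apply_of_pos he] using hfends ⟨e, he⟩
    · simpa [Equiv.sumCompl_symm_apply_of_neg he] using hgends ⟨e, he⟩
  gain_eq e := by
    by_cases he : p e
    · simpa [Equiv.sumCompl_symm_apply_of_pos he] using hfgain ⟨e, he⟩
    · simpa [Equiv.sumCompl_symm_apply_of_neg he] using hggain ⟨e, he⟩

end IsContraction

lemma exists_collapse {α β : Type*} {v : α} {K : Finset β} {fV : {u // u ≠ v} → β}
    (hfV : fV.Injective) (hK : Set.range fV = (K : Set β)ᶜ) :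
    ∃ π : β → α, (∀ u, π (fV u) = u) ∧ ∀ k ∈ K, π k = v := by
  refine ⟨Function.extend fV Subtype.val fun _ ↦ v, hfV.extend_apply _ _, fun k hk ↦ ?_⟩
  exact Function.extend_apply' _ _ _ fun hrange ↦ (Set.ext_iff.1 hK k).1 hrange hk

/-! ### Vertex-to-`K₄` -/

lemma IsPotential.card_le_of_gain_eq_one {G : GainGraph} {F : Finset G.E} {σ : G.V → ℤˣ}
    (hσ : IsPotential G F σ) (hgain : ∀ e ∈ F, G.gain e = 1) {X : Finset G.V}
    (hX : vertsOf G F ⊆ X) (s : ℤˣ) :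
    #F ≤ (#{v ∈ X | σ v = s}).choose 2 + (#{v ∈ X | σ v ≠ s}).choose 2 := by
  classical
  have hX := vertsOf_subset_iff.1 hX
  have hsame : ∀ e ∈ F, ∀ u ∈ G.ends e, ∀ v ∈ G.ends e, σ u = σ v := by
    intro e he u hu v hv
    induction h : G.ends e with | _ a b => ?_
    have hab : σ a = σ b := by
      rw [← Int.units_inv_eq_self (σ b)]
      exact eq_inv_of_mul_eq_one_left ((hσ.gain_eq he h).symm.trans (hgain e he))
    rw [h, Sym2.mem_iff] at hu hv
    rcases hu with rfl | rfl <;> rcases hv with rfl | rfl <;> simp [hab]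
  rw [← card_filter_add_card_filter_not (s := F) fun e ↦ ∀ v ∈ G.ends e, σ v = s]
  gcongr
  · refine (hσ.mono (filter_subset _ F)).card_le_choose_two (vertsOf_subset_iff.2 ?_)
    intro e he v hv
    rw [mem_filter] at he
    exact mem_filter.2 ⟨hX e he.1 v hv, he.2 v hv⟩
  · refine (hσ.mono (filter_subset _ F)).card_le_choose_two (vertsOf_subset_iff.2 ?_)
    intro e he v hv
    rw [mem_filter] at he
    refine mem_filter.2 ⟨hX e he.1 v hv, fun hvs ↦ he.2 fun u hu ↦ ?_⟩
    rw [hsame e he.1 u hu v hv, hvs]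

lemma choose_two_le_of_le_four {s : ℕ} (hs : s ≤ 4) : s.choose 2 ≤ 2 * (s - 1) := by
  interval_cases s <;> decide

lemma choose_two_add_choose_two_le {p q : ℕ} (hp : 0 < p) (hq : 0 < q) (hpq : p + q ≤ 4) :
    p.choose 2 + q.choose 2 + 2 ≤ 2 * (p + q - 1) := by
  have : p ≤ 3 := by omega
  have : q ≤ 3 := by omega
  interval_cases p <;> interval_cases q <;> simp_all +decide

/-- A potential separating vertices of the balanced `K₄` splits the edges of `K₄` in `F` into two
vertex-disjoint parts, which costs `F` at least two edges. -/
theorem IsContraction.tight220_of_card_eq_four {G G' : GainGraph} {K : Finset G'.V}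
    {N : Finset G'.E} {π : G'.V → G.V} {φ : G.E → G'.E} (h : IsContraction K N π φ)
    (hG : Tight220 G) (hK : #K = 4) (hN : #N = 6) (hNK : vertsOf G' N ⊆ K)
    (hgain : ∀ e ∈ N, G'.gain e = 1) : Tight220 G' := by
  have hverts (F : Finset G'.E) : vertsOf G' (F ∩ N) ⊆ vertsOf G' F ∩ K :=
    subset_inter (vertsOf_mono inter_subset_left) ((vertsOf_mono inter_subset_right).trans hNK)
  have hfour (F : Finset G'.E) : #(vertsOf G' F ∩ K) ≤ 4 := hK ▸ card_le_card inter_subset_right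
  refine h.tight220 hG (card_pos.1 (by omega)) (by omega) (fun F ↦ ?_)
    fun F σ hσ u hu w hw huw ↦ ?_
  · have hone : IsPotential G' (F ∩ N) 1 := fun e he ↦ by
      rw [hgain e (mem_of_mem_inter_right he)]
      induction G'.ends e with | _ a b => simp
    have := h.card_le_card_contract_add F
    have := hone.card_le_choose_two (hverts F)
    have := choose_two_le_of_le_four (hfour F)
    omega
  · have hpos : 0 < #{x ∈ vertsOf G' F ∩ K | σ x = σ u} :=
      card_pos.2 ⟨u, mem_filter.2 ⟨hu, rfl⟩⟩
    have hpos' : 0 < #{x ∈ vertsOf G' F ∩ K | σ x ≠ σ u} :=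
      card_pos.2 ⟨w, mem_filter.2 ⟨hw, huw.symm⟩⟩
    have hsplit : #{x ∈ vertsOf G' F ∩ K | σ x = σ u} + #{x ∈ vertsOf G' F ∩ K | σ x ≠ σ u} =
        #(vertsOf G' F ∩ K) := card_filter_add_card_filter_not _
    have hFN := (hσ.mono (inter_subset_left (s₂ := N))).card_le_of_gain_eq_one
      (fun e he ↦ hgain e (mem_of_mem_inter_right he)) (hverts F) (σ u)
    have := choose_two_add_choose_two_le hpos hpos' (hsplit.le.trans (hfour F))
    have := h.card_le_card_contract_add F
    omega

section VertexToK4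

variable {G G' : GainGraph} {v : G.V} {K : Finset G'.V} {π : G'.V → G.V}
  {fV : {u : G.V // u ≠ v} → G'.V} {e : G.E} {e' : G'.E}

lemma map_ends_of_notMem (hπ : ∀ u, π (fV u) = u) (he : v ∉ G.ends e)
    (hends : ∀ (x y : G.V) (hx : x ≠ v) (hy : y ≠ v), G.ends e = s(x, y) →
      G'.ends e' = s(fV ⟨x, hx⟩, fV ⟨y, hy⟩)) : (G'.ends e').map π = G.ends e := by
  induction h : G.ends e with | _ x y => ?_
  rw [h, Sym2.mem_iff, not_or] at he
  rw [hends x y (Ne.symm he.1) (Ne.symm he.2) h, Sym2.map_mk, hπ, hπ]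

lemma map_ends_and_gain_of_mem (hπ : ∀ u, π (fV u) = u) (hπK : ∀ k ∈ K, π k = v)
    (he : v ∈ G.ends e)
    (hedge : ∀ (u : G.V) (hu : u ≠ v), G.ends e = s(u, v) →
      G'.gain e' = G.gain e ∧ ∃ y ∈ K, G'.ends e' = s(fV ⟨u, hu⟩, y))
    (hloop : (G.ends e).IsDiag → G'.gain e' = -1 ∧ ∃ w ∈ K, ∃ z ∈ K, G'.ends e' = s(w, z)) :
    (G'.ends e').map π = G.ends e ∧ G'.gain e' = G.gain e := by
  obtain ⟨u, hu⟩ := Sym2.mem_iff_exists.1 he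
  rw [Sym2.eq_swap] at hu
  rcases eq_or_ne u v with rfl | huv
  · have hdiag : (G.ends e).IsDiag := by simp [hu]
    obtain ⟨hgain, w, hw, z, hz, hends⟩ := hloop hdiag
    exact ⟨by rw [hends, Sym2.map_mk, hπK w hw, hπK z hz, hu], by rw [hgain, G.loop_gain e hdiag]⟩
  · obtain ⟨hgain, y, hy, hends⟩ := hedge u huv hu
    exact ⟨by rw [hends, Sym2.map_mk, hπ, hπK y hy, hu], hgain⟩

theorem VertexToK4.tight220 (h : VertexToK4 G G') (hG : Tight220 G) : Tight220 G' := by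
  obtain ⟨v, a, b, c, d, fV, fE, k, rep, ⟨hab, hac, had, hbc, hbd, hcd⟩, hfV, hfVK, hsurjV, hfE,
    hends, hgain, hk, k₀, k₁, k₂, k₃, k₄, k₅, kgain, hrep, hrepE, hsurjE, hfEk, hfErep, hkrep⟩ := h
  have hrange : Set.range fV = (({a, b, c, d} : Finset G'.V) : Set G'.V)ᶜ := by
    ext x
    simp only [Set.mem_range, Set.mem_compl_iff, mem_coe, mem_insert, mem_singleton, not_or]
    exact ⟨fun ⟨u, hu⟩ ↦ hu ▸ hfVK u, fun ⟨ha, hb, hc, hd⟩ ↦ hsurjV x ha hb hc hd⟩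
  have hN : Set.range rep ∪ Set.range fE = ((univ.image k : Finset G'.E) : Set G'.E)ᶜ := by
    ext e
    simp only [Set.mem_union, Set.mem_range, coe_image, coe_univ, Set.image_univ,
      Set.mem_compl_iff]
    refine ⟨?_, fun he ↦ ?_⟩
    · rintro (⟨e, rfl⟩ | ⟨e, rfl⟩) ⟨i, hi⟩
      exacts [hkrep i e hi, hfEk e i hi.symm]
    · rcases hsurjE e with he' | hi | he'
      exacts [.inr he', absurd hi he, .inl he']
  obtain ⟨π, hπ, hπK⟩ := exists_collapse hfV hrange
  have hreplaced (e) := map_ends_and_gain_of_mem (e' := rep e) hπ hπK e.2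
    (by simpa using (hrepE e).1) (by simpa [and_assoc, exists_and_left] using (hrepE e).2)
  have hkept (e) := map_ends_of_notMem hπ e.2 (hends e)
  have hcontraction := IsContraction.of_embeddings (insert_nonempty _ _) hrange hπ hπK hrep hfE
    (fun e e' ↦ (hfErep e' e).symm) hN (fun e ↦ (hreplaced e).1) (fun e ↦ (hreplaced e).2)
    hkept hgain
  refine hcontraction.tight220_of_card_eq_four hG (by grind) ?_ ?_ (by simpa using kgain)
  · rw [card_image_of_injective _ hk, card_univ, Fintype.card_fin]
  · rw [vertsOf_subset_iff, forall_mem_image]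
    intro i _
    fin_cases i <;> simp [k₀, k₁, k₂, k₃, k₄, k₅]

end VertexToK4

/-! ### Vertex splitting -/

section VertexSplit

variable {G G' : GainGraph}

namespace IsContraction

variable {v₀ w₀ u : G'.V} {g₁ g₂ : G'.E} {e₁₂ : G.E} {π : G'.V → G.V} {φ : G.E → G'.E}

lemma card_le_card_contract_of_split (h : IsContraction {v₀, w₀} {g₁, g₂} π φ)
    (hg₂ : G'.ends g₂ = s(v₀, u)) (he₁₂ : G'.ends (φ e₁₂) = s(w₀, u))
    (hgain : G'.gain g₂ = G.gain e₁₂) {F : Finset G'.E} (hF₁ : g₁ ∉ F)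
    (hF₂ : g₂ ∈ F → φ e₁₂ ∉ F) : #F ≤ #(contract G π F) := by
  by_cases hg : g₂ ∈ F
  · have hends : (G'.ends g₂).map π = G.ends e₁₂ := by
      rw [← h.map_ends, hg₂, he₁₂, Sym2.map_mk, Sym2.map_mk, (h.map_eq_iff v₀ w₀).2 (by simp)]
    have hsub : insert e₁₂ ({e | φ e ∈ F} : Finset G.E) ⊆ contract G π F :=
      insert_subset (mem_filter.2 ⟨mem_univ _, g₂, hg, hends, hgain⟩)
        fun e he ↦ h.mem_contract (mem_filter.1 he).2
    have hcard := card_le_card hsub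
    rw [card_insert_of_notMem (by simpa using hF₂ hg)] at hcard
    rwa [card_eq_card_preimage_add_card_inter h.injective h.range_eq F,
      inter_insert_of_notMem hF₁, inter_singleton_of_mem hg, card_singleton]
  · simpa [hF₁, hg] using h.card_le_card_contract_add F

/-- If both ends of `g₁` are in `V(F)`, the merge has room for the two edges lost; otherwise `F`
misses `g₁` and at least one of the parallel edges `g₂` and `e₁₂`, so nothing is lost. A potential
separating the ends of `g₁` has the same effect. -/
theorem tight220_of_split (h : IsContraction {v₀, w₀} {g₁, g₂} π φ) (hG : Tight220 G)
    (hv₀ : v₀ ≠ w₀) (hg : g₁ ≠ g₂) (hg₁ : G'.ends g₁ = s(v₀, w₀)) (hgain₁ : G'.gain g₁ = 1)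
    (hg₂ : G'.ends g₂ = s(v₀, u)) (he₁₂ : G'.ends (φ e₁₂) = s(w₀, u))
    (hgain₂ : G'.gain g₂ = G.gain e₁₂) : Tight220 G' := by
  have hcard {F : Finset G'.E} := h.card_le_card_contract_of_split hg₂ he₁₂ hgain₂ (F := F)
  have hK : #({v₀, w₀} : Finset G'.V) = 2 := card_pair hv₀
  have hN : #({g₁, g₂} : Finset G'.E) = 2 := card_pair hg
  have hboth {F : Finset G'.E} (h₀ : v₀ ∈ vertsOf G' F) (h₁ : w₀ ∈ vertsOf G' F) :
      #(vertsOf G' F ∩ {v₀, w₀}) = 2 := by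
    rw [inter_eq_right.2 (by simp [insert_subset_iff, h₀, h₁]), hK]
  refine h.tight220 hG (insert_nonempty _ _) (by rw [hK, hN]) (fun F ↦ ?_)
    fun F σ hσ x hx y hy hxy ↦ ?_
  · by_cases hverts : v₀ ∈ vertsOf G' F ∧ w₀ ∈ vertsOf G' F
    · have := h.card_le_card_contract_add F
      have := card_le_card (inter_subset_right (s₁ := F) (s₂ := {g₁, g₂}))
      rw [hboth hverts.1 hverts.2]
      omega
    · refine (hcard (fun h₁ ↦ hverts ⟨?_, ?_⟩) fun h₂ h₁₂ ↦ hverts ⟨?_, ?_⟩).trans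
        (Nat.le_add_right _ _)
      exacts [mem_vertsOf.2 ⟨g₁, h₁, by simp [hg₁]⟩, mem_vertsOf.2 ⟨g₁, h₁, by simp [hg₁]⟩,
        mem_vertsOf.2 ⟨g₂, h₂, by simp [hg₂]⟩, mem_vertsOf.2 ⟨φ e₁₂, h₁₂, by simp [he₁₂]⟩]
  · obtain ⟨hxF, hxK⟩ := mem_inter.1 hx
    obtain ⟨hyF, hyK⟩ := mem_inter.1 hy
    have hσne : σ v₀ ≠ σ w₀ := by grind
    have hverts : #(vertsOf G' F ∩ {v₀, w₀}) = 2 := hboth (by grind) (by grind)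
    have hF₁ : g₁ ∉ F := fun h₁ ↦ hσne <| by
      rw [← Int.units_inv_eq_self (σ w₀)]
      exact eq_inv_of_mul_eq_one_left ((hσ.gain_eq h₁ hg₁).symm.trans hgain₁)
    have hF₂ : g₂ ∈ F → φ e₁₂ ∉ F := fun h₂ h₁₂ ↦ hσne <| mul_right_cancel <|
      (hσ.gain_eq h₂ hg₂).symm.trans <| hgain₂.trans <| (h.gain_eq e₁₂).symm.trans <|
        hσ.gain_eq h₁₂ he₁₂
    rw [hverts]
    exact Nat.add_le_add_right (hcard hF₁ hF₂) 2

end IsContraction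

lemma map_ends_and_gain_of_moved {v₁ : G.V} {v₀ : G'.V} {S : Set G.V} {π : G'.V → G.V}
    {fV : G.V → G'.V} {e : G.E} {e' : G'.E} (hπ : ∀ u, π (fV u) = u) (hπ₀ : π v₀ = v₁)
    (hedge : ∀ u ∈ S, G.ends e = s(v₁, u) →
      G'.ends e' = s(v₀, fV u) ∧ G'.gain e' = G.gain e)
    (hloop : G.ends e = s(v₁, v₁) → G'.ends e' = s(v₀, v₀) ∧ G'.gain e' = -1)
    (he : (∃ u ∈ S, G.ends e = s(v₁, u)) ∨ G.ends e = s(v₁, v₁)) :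
    (G'.ends e').map π = G.ends e ∧ G'.gain e' = G.gain e := by
  rcases he with ⟨u, hu, he⟩ | he
  · obtain ⟨hends, hgain⟩ := hedge u hu he
    exact ⟨by rw [hends, he, Sym2.map_mk, hπ₀, hπ], hgain⟩
  · obtain ⟨hends, hgain⟩ := hloop he
    exact ⟨by rw [hends, he, Sym2.map_mk, hπ₀], by rw [hgain, G.loop_gain e (by simp [he])]⟩

theorem VertexSplit.tight220 (h : VertexSplit G G') (hG : Tight220 G) : Tight220 G' := by
  classical
  obtain ⟨v₁, v₂, e₁₂, S, D, movedLoop, v₀, g₁, g₂, fV, fE, mv, hv₁₂, he₁₂, hv₁, hv₂, -, hD, hfV,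
    hfv₀, hsurjV, hfE, hends, hgain, hmv, hmvE, hg₁₂, hg₁, gain₁, hg₂, gain₂, hsurjE, hfEg, hmvg,
    hfEmv⟩ := h
  let fV' : {u // u ≠ v₁} → G'.V := fun u ↦ fV u
  have hrange : Set.range fV' = (({v₀, fV v₁} : Finset G'.V) : Set G'.V)ᶜ := by
    ext x
    simp only [Set.mem_range, Set.mem_compl_iff, mem_coe, mem_insert, mem_singleton, not_or, fV',
      Subtype.exists, exists_prop]
    refine ⟨fun ⟨u, hu, hux⟩ ↦ hux ▸ ⟨hfv₀ u, hfV.ne hu⟩, fun ⟨hx₀, hx₁⟩ ↦ ?_⟩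
    obtain ⟨u, rfl⟩ := hsurjV x hx₀
    exact ⟨u, fun hu ↦ hx₁ (congrArg fV hu), rfl⟩
  have hN : Set.range mv ∪ Set.range fE = (({g₁, g₂} : Finset G'.E) : Set G'.E)ᶜ := by
    ext e
    simp only [Set.mem_union, Set.mem_range, Set.mem_compl_iff, mem_coe, mem_insert, mem_singleton]
    refine ⟨?_, fun he ↦ ?_⟩
    · rintro (⟨e, rfl⟩ | ⟨e, rfl⟩)
      exacts [not_or.2 (hmvg e), not_or.2 (hfEg e)]
    · rcases hsurjE e with he' | he' | he' | he'
      exacts [absurd (.inl he') he, absurd (.inr he') he, .inr he', .inl he']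
  obtain ⟨π, hπ', hπK⟩ := exists_collapse (hfV.comp Subtype.val_injective) hrange
  have hπ (u : G.V) : π (fV u) = u := by
    rcases eq_or_ne u v₁ with rfl | hu
    exacts [hπK _ (by simp), hπ' ⟨u, hu⟩]
  have hmoved (e) := map_ends_and_gain_of_moved hπ (hπK v₀ (by simp)) (hmvE e).2 (hmvE e).1
    (((hD e).1 e.2).imp_right And.right)
  have hkept (e) : (G'.ends (fE e)).map π = G.ends e := by
    rw [hends, Sym2.map_map, funext hπ (f := π ∘ fV), Sym2.map_id', id]
  have hcontraction := IsContraction.of_embeddings (insert_nonempty _ _) hrange hπ' hπK hmv hfE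
    (fun e e' ↦ (hfEmv e' e).symm) hN (fun e ↦ (hmoved e).1) (fun e ↦ (hmoved e).2) hkept hgain
  have he₁₂D : e₁₂ ∉ D := by
    rw [hD, he₁₂]
    grind [Sym2.eq_iff]
  refine hcontraction.tight220_of_split hG (hfv₀ v₁).symm hg₁₂ hg₁ gain₁ hg₂ ?_ gain₂
  simp [Equiv.sumCompl_symm_apply_of_neg he₁₂D, hends, he₁₂]

end VertexSplit

theorem moves_preserve_tight (G G' : GainGraph)
    (htight : Tight220 G) (hmove : IsMove G G') :
    Tight220 G' := by
  rcases hmove with h | h | h | h | h | h | h | h | h | h | h | h | h | h <;>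
    exact h.tight220 htight

end ZGain
end

section
/- Let ‖·‖_P be a norm on ℝ² whose closed unit ball P is a quadrilateral with facets F_1, F_2, −F_1, −F_2, and let 𝒢 = (G,p,θ,τ) be a well-positioned 𝒞_2-symmetric bar-joint framework in (ℝ²,‖·‖_P), with quotient gain graph G_0. Then: (A) 𝒢 is χ_0-symmetrically isostatic if and only if the monochrome subgraphs G_{F_1,0} and G_{F_2,0} are edge-disjoint spanning unbalanced map graphs in G_0; (B) 𝒢 is χ_1-symmetrically isostatic if and only if G_{F_1,0} and G_{F_2,0} are edge-disjoint spanning trees in G_0; (C) (G,p) is infinitesimally rigid if and only if G_{F_1,0} and G_{F_2,0} both contain connected spanning unbalanced map graphs. -/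
/-!
Statement 17 (Theorem 4.1 / thm:C2gridgeom): geometric characterisation of
`χ₀`- and `χ₁`-symmetric isostaticity and of infinitesimal rigidity for well-positioned
`𝒞₂`-symmetric frameworks in a plane with quadrilateral unit ball, in terms of the
induced monochrome subgraphs of the quotient gain graph.
-/

namespace ZGain

open scoped TensorProduct

/-! ### Subgraph connectivity, map graphs and trees in a `ℤ₂`-gain graph -/

/-- One step along an edge of `S`. -/
def stepRel (Q : GainGraph) (S : Set Q.E) (u v : Q.V) : Prop :=
  ∃ e ∈ S, Q.ends e = s(u, v)

/-- The edge set `S` is a spanning unbalanced map graph: every cycle of edges of `S`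
is unbalanced, and every connected component of the spanning subgraph `(V₀, S)`
contains exactly one cycle. -/
def SpanningUnbalancedMapGraph (Q : GainGraph) (S : Set Q.E) : Prop :=
  (∀ c, IsCycle Q c → (∀ st ∈ c, st.1 ∈ S) → cycleGain Q c ≠ 1) ∧
    ∀ v : Q.V,
      (∃ c, IsCycle Q c ∧ (∀ st ∈ c, st.1 ∈ S) ∧
        ∃ st ∈ c, Relation.ReflTransGen (stepRel Q S) v st.2) ∧
      (∀ c c', IsCycle Q c → (∀ st ∈ c, st.1 ∈ S) →
        (∃ st ∈ c, Relation.ReflTransGen (stepRel Q S) v st.2) →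
        IsCycle Q c' → (∀ st ∈ c', st.1 ∈ S) →
        (∃ st ∈ c', Relation.ReflTransGen (stepRel Q S) v st.2) →
        (c.map Prod.fst).toFinset = (c'.map Prod.fst).toFinset)

/-- The edge set `S` is a spanning tree of `Q`. -/
def SpanningTree (Q : GainGraph) (S : Set Q.E) : Prop :=
  (∀ u v : Q.V, Relation.ReflTransGen (stepRel Q S) u v) ∧
    (∀ c, IsCycle Q c → ¬ ∀ st ∈ c, st.1 ∈ S)

/-- `S` contains a connected spanning unbalanced map graph. -/
def ContainsConnSpanningUnbalMap (Q : GainGraph) (S : Set Q.E) : Prop :=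
  ∃ T ⊆ S, SpanningUnbalancedMapGraph Q T ∧
    ∀ u v : Q.V, Relation.ReflTransGen (stepRel Q T) u v

section C2Framework

variable {V : Type} [Fintype V] [DecidableEq V]
variable {X : Type} [NormedAddCommGroup X] [NormedSpace ℝ X]

/-! ### Frameworks and `𝒞₂`-symmetric rigidity -/

noncomputable def fG (G : SimpleGraph V) [Fintype G.edgeSet] (x : V → X) (e : G.edgeSet) : ℝ :=
  Sym2.lift ⟨fun v w => ‖x v - x w‖, fun v w => by simp only []; rw [norm_sub_rev]⟩ e.1

noncomputable def WellPositioned (G : SimpleGraph V) [Fintype G.edgeSet] (p : V → X) : Prop :=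
  DifferentiableAt ℝ (fG G) p

noncomputable def dfR (G : SimpleGraph V) [Fintype G.edgeSet] (p : V → X) :
    (V → X) →L[ℝ] (G.edgeSet → ℝ) :=
  fderiv ℝ (fG G) p

noncomputable def phiEdge (G : SimpleGraph V) [Fintype G.edgeSet] (p : V → X)
    (e : G.edgeSet) (v : V) : X →ₗ[ℝ] ℝ :=
  (LinearMap.proj (R := ℝ) (φ := fun _ : G.edgeSet => ℝ) e).comp
    ((dfR G p).toLinearMap.comp (LinearMap.single ℝ (fun _ : V => X) v))

noncomputable def cplxFunctional (f : X →ₗ[ℝ] ℝ) : (ℂ ⊗[ℝ] X) →ₗ[ℂ] ℂ :=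
  LinearMap.liftBaseChange ℂ ((Complex.ofRealCLM.toLinearMap).comp f)

noncomputable def dfC (G : SimpleGraph V) [Fintype G.edgeSet] (p : V → X) :
    (V → ℂ ⊗[ℝ] X) →ₗ[ℂ] (G.edgeSet → ℂ) :=
  LinearMap.pi fun e : G.edgeSet =>
    ∑ v : V, (cplxFunctional (phiEdge G p e v)).comp
      (LinearMap.proj (R := ℂ) (φ := fun _ : V => ℂ ⊗[ℝ] X) v)

/-- The action of `γ ∈ ℤ₂ = {1,-1}` on vertices induced by the involution `σ`. -/
def act (σ : Equiv.Perm V) (γ : ℤˣ) (v : V) : V := if γ = 1 then v else σ v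

/-- The action of the involution `σ` on the edge set. -/
def eSigma (G : SimpleGraph V) (σ : Equiv.Perm V)
    (hadj : ∀ u v : V, G.Adj u v ↔ G.Adj (σ u) (σ v)) (e : G.edgeSet) : G.edgeSet :=
  ⟨Sym2.map σ e.1, by
    obtain ⟨e, he⟩ := e
    induction e using Sym2.ind with
    | _ u v => simpa using (hadj u v).1 (by simpa using he)⟩

/-- The action of `γ ∈ ℤ₂` on the edge set. -/
def eAct (G : SimpleGraph V) (σ : Equiv.Perm V)
    (hadj : ∀ u v : V, G.Adj u v ↔ G.Adj (σ u) (σ v)) (γ : ℤˣ) (e : G.edgeSet) :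
    G.edgeSet :=
  if γ = 1 then e else eSigma G σ hadj e

/-- The character space `X_χ` for the `𝒞₂`-representation `τ(γ) = γ • I`. -/
noncomputable def XchiC2 (σ : Equiv.Perm V) (χ : ℤˣ →* ℂ) :
    Submodule ℂ (V → ℂ ⊗[ℝ] X) :=
  ⨅ (γ : ℤˣ), ⨅ (v : V),
    LinearMap.ker
      ((LinearMap.proj (R := ℂ) (φ := fun _ : V => ℂ ⊗[ℝ] X) (act σ γ v)) -
        (χ γ * ((γ : ℤ) : ℂ)) • (LinearMap.proj (R := ℂ) (φ := fun _ : V => ℂ ⊗[ℝ] X) v))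

/-- The character space `Y_χ`. -/
noncomputable def YchiC2 (G : SimpleGraph V) (σ : Equiv.Perm V)
    (hadj : ∀ u v : V, G.Adj u v ↔ G.Adj (σ u) (σ v)) (χ : ℤˣ →* ℂ) :
    Submodule ℂ (G.edgeSet → ℂ) :=
  ⨅ (γ : ℤˣ), ⨅ (e : G.edgeSet),
    LinearMap.ker
      ((LinearMap.proj (R := ℂ) (φ := fun _ : G.edgeSet => ℂ) (eAct G σ hadj γ e)) -
        χ γ • (LinearMap.proj (R := ℂ) (φ := fun _ : G.edgeSet => ℂ) e))

def IsRigidMotion (α : X → ℝ → X) : Prop :=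
  (∀ x : X, ContinuousOn (α x) (Set.Icc (-1 : ℝ) 1)) ∧
    (∀ x : X, α x 0 = x) ∧
    (∀ x y : X, ∀ t ∈ Set.Icc (-1 : ℝ) 1, ‖α x t - α y t‖ = ‖x - y‖)

def IsInfRigidMotion (η : X → X) : Prop :=
  ∃ α : X → ℝ → X, IsRigidMotion α ∧ ∀ x : X, HasDerivAt (α x) (η x) 0

noncomputable def TXC (X : Type) [NormedAddCommGroup X] [NormedSpace ℝ X] :
    Submodule ℂ (X → ℂ ⊗[ℝ] X) :=
  Submodule.span ℂ
    {η' | ∃ η : X → X, IsInfRigidMotion η ∧ η' = fun x => (1 : ℂ) ⊗ₜ[ℝ] η x}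

/-- The character space `𝒯_χ(X)` for the `𝒞₂`-representation `τ(γ) = γ • I`. -/
noncomputable def TchiC2 (X : Type) [NormedAddCommGroup X] [NormedSpace ℝ X]
    (χ : ℤˣ →* ℂ) : Submodule ℂ (X → ℂ ⊗[ℝ] X) :=
  TXC X ⊓
    ⨅ (γ : ℤˣ), ⨅ (x : X),
      LinearMap.ker
        ((LinearMap.proj (R := ℂ) (φ := fun _ : X => ℂ ⊗[ℝ] X) ((γ : ℤ) • x)) -
          (χ γ * ((γ : ℤ) : ℂ)) •
            (LinearMap.proj (R := ℂ) (φ := fun _ : X => ℂ ⊗[ℝ] X) x))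

noncomputable def rhoC (p : V → X) : (X → ℂ ⊗[ℝ] X) →ₗ[ℂ] (V → ℂ ⊗[ℝ] X) :=
  LinearMap.pi fun v : V => LinearMap.proj (R := ℂ) (φ := fun _ : X => ℂ ⊗[ℝ] X) (p v)

/-- `χ`-symmetrically infinitesimally rigid (exactness at `X_χ`). -/
noncomputable def ChiRigidC2 (G : SimpleGraph V) [Fintype G.edgeSet] (p : V → X)
    (σ : Equiv.Perm V) (χ : ℤˣ →* ℂ) : Prop :=
  ∀ u ∈ XchiC2 (X := X) σ χ, dfC G p u = 0 →
    ∃ η ∈ TchiC2 X χ, rhoC (V := V) p η = u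

/-- `χ`-symmetrically independent (exactness at `Y_χ`). -/
noncomputable def ChiIndependentC2 (G : SimpleGraph V) [Fintype G.edgeSet] (p : V → X)
    (σ : Equiv.Perm V)
    (hadj : ∀ u v : V, G.Adj u v ↔ G.Adj (σ u) (σ v)) (χ : ℤˣ →* ℂ) : Prop :=
  ∀ y ∈ YchiC2 G σ hadj χ, ∃ u ∈ XchiC2 (X := X) σ χ, dfC G p u = y

/-- `χ`-symmetrically isostatic. -/
noncomputable def ChiIsostaticC2 (G : SimpleGraph V) [Fintype G.edgeSet] (p : V → X)
    (σ : Equiv.Perm V)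
    (hadj : ∀ u v : V, G.Adj u v ↔ G.Adj (σ u) (σ v)) (χ : ℤˣ →* ℂ) : Prop :=
  ChiRigidC2 G p σ χ ∧ ChiIndependentC2 G p σ hadj χ

/-- Infinitesimal rigidity of the underlying (real) framework. -/
noncomputable def InfRigid (G : SimpleGraph V) [Fintype G.edgeSet] (p : V → X) : Prop :=
  ∀ u : V → X, dfR G p u = 0 →
    ∃ η : X → X, IsInfRigidMotion η ∧ ∀ v : V, η (p v) = u v

/-- The trivial character `χ₀` of `ℤ₂`. -/
def chi0 : ℤˣ →* ℂ := 1

/-- The nontrivial character `χ₁` of `ℤ₂`. -/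
def chi1 : ℤˣ →* ℂ := (Int.castRingHom ℂ).toMonoidHom.comp (Units.coeHom ℤ)

/-! ### Quadrilateral unit balls and framework colours -/

/-- The two (independent) facets `F₁ = [a,b]`, `F₂ = [b,-a]` of the quadrilateral
unit ball `conv {a, b, -a, -b}`. -/
noncomputable def facet (a b : X) (i : Fin 2) : Set X :=
  if i = 0 then segment ℝ a b else segment ℝ b (-a)

/-- The edge `e` has framework colour `F_i`: the (normalised) difference of its
endpoint placements, or its negative, lies in the facet `F_i`. -/
noncomputable def EdgeColour (a b : X) (p : V → X) (i : Fin 2) (e : Sym2 V) : Prop :=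
  ∃ u w : V, e = s(u, w) ∧
    (‖p u - p w‖⁻¹ • (p u - p w) ∈ facet a b i ∨
      -(‖p u - p w‖⁻¹ • (p u - p w)) ∈ facet a b i)

/-- The monochrome edge set `G_{F_i,0}` of the quotient gain graph. -/
noncomputable def monochrome (G : SimpleGraph V) (a b : X) (p : V → X)
    (Q : GainGraph) (piE : G.edgeSet → Q.E) (i : Fin 2) : Set Q.E :=
  {ε : Q.E | ∃ e : G.edgeSet, piE e = ε ∧ EdgeColour a b p i e.1}

end C2Framework

/-!
An isometry `Φ` onto `ℝ²` with the supremum norm turns the two facets into the sides `x₀ = 1` and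
`x₁ = 1` of the square, up to a sign. Near a well-positioned placement, the length of an edge of
colour `F_i` is therefore plus or minus the difference of the `i`-th coordinates of its ends, so
the framework splits into two one-dimensional problems: the infinitesimal flexes are the pairs of
functions on `V`, the `i`-th of which is constant along each edge of colour `F_i`. Since the
infinitesimal rigid motions are the translations, rigidity says that such functions are constant
on all of `V`.

The symmetric flexes for `χ₀` and `χ₁` are respectively the odd and the even ones. A function of
either parity on the double cover `G` descends to the quotient, an odd one after multiplication by
the signs `ρ`, and then its values at the ends of an edge differ by the gain of the edge (odd case)
or agree (even case): it is a flat section of a local system of rank one. Over an edge set `S`, the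
only flat section of the gain local system is `0` exactly when each component of `S` contains an
unbalanced cycle, and all flat sections of the trivial one are constant exactly when `S` is
connected. Independence of the flatness conditions makes these configurations minimal, giving
unbalanced map graphs and trees. For infinitesimal rigidity, a function is the sum of its even and
odd parts, up to a factor `2`, so `S` has to be connected and to contain an unbalanced cycle.
-/

section Walks

variable {Q : GainGraph}

/-- Two vertices lie in the same connected component of the spanning subgraph `(Q.V, S)`. -/
abbrev Reachable (Q : GainGraph) (S : Set Q.E) : Q.V → Q.V → Prop :=
  Relation.ReflTransGen (stepRel Q S)

instance (S : Set Q.E) : Std.Symm (stepRel Q S) where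
  symm := fun _ _ ⟨e, he, h⟩ => ⟨e, he, h.trans Sym2.eq_swap⟩

lemma Reachable.symm {S : Set Q.E} {u v : Q.V} (h : Reachable Q S u v) : Reachable Q S v u :=
  Relation.ReflTransGen.stdSymm.symm _ _ h

lemma Reachable.mono {S T : Set Q.E} (hST : S ⊆ T) {u v : Q.V} (h : Reachable Q S u v) :
    Reachable Q T u v :=
  Relation.ReflTransGen.mono (fun _ _ ⟨e, he, h⟩ => ⟨e, hST he, h⟩) _ _ h

lemma reachable_of_mem_ends {S : Set Q.E} {e : Q.E} (he : e ∈ S) {u v : Q.V}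
    (hu : u ∈ Q.ends e) (hv : v ∈ Q.ends e) : Reachable Q S u v := by
  by_cases huv : u = v
  · rw [huv]
  · exact .single ⟨e, he, (Sym2.mem_and_mem_iff huv).1 ⟨hu, hv⟩⟩

/-- `l` is a walk from `u` to `v` with edges in `S`; as in `IsCycle`, a walk is recorded as the
list of its edges paired with their initial vertices. -/
def IsWalk (S : Set Q.E) : List (Q.E × Q.V) → Q.V → Q.V → Prop
  | [], u, v => u = v
  | (e, x) :: l, u, v => x = u ∧ e ∈ S ∧ ∃ y, Q.ends e = s(u, y) ∧ IsWalk S l y v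

/-- The product of the values of a gain map `ψ` along the edges of a walk; `cycleGain` is the
case `ψ = Q.gain`. -/
def walkGain (ψ : Q.E → ℤˣ) (l : List (Q.E × Q.V)) : ℤˣ :=
  (l.map fun st => ψ st.1).prod

variable {S T : Set Q.E} {ψ : Q.E → ℤˣ} {l l' : List (Q.E × Q.V)} {u v w : Q.V}

@[simp] lemma walkGain_nil : walkGain ψ [] = 1 := rfl

@[simp] lemma walkGain_cons (st : Q.E × Q.V) :
    walkGain ψ (st :: l) = ψ st.1 * walkGain ψ l := by simp [walkGain]

@[simp] lemma walkGain_append : walkGain ψ (l ++ l') = walkGain ψ l * walkGain ψ l' := by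
  simp [walkGain]

lemma walkGain_eq_one (h : ∀ st ∈ l, ψ st.1 = 1) : walkGain ψ l = 1 :=
  List.prod_eq_one (List.forall_mem_map.2 h)

lemma isWalk_append :
    IsWalk S (l ++ l') u v ↔ ∃ w, IsWalk S l u w ∧ IsWalk S l' w v := by
  induction l generalizing u with
  | nil => simp [IsWalk]
  | cons st l ih => grind [IsWalk]

lemma isWalk_singleton {e : Q.E} (he : e ∈ S) (hends : Q.ends e = s(u, v)) :
    IsWalk S [(e, u)] u v :=
  ⟨rfl, he, v, hends, rfl⟩

lemma IsWalk.mem (h : IsWalk S l u v) {st : Q.E × Q.V} (hst : st ∈ l) : st.1 ∈ S := by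
  obtain ⟨l₁, l₂, rfl⟩ := List.append_of_mem hst
  obtain ⟨-, -, -, he, -⟩ := isWalk_append.1 h
  exact he

lemma IsWalk.of_forall_mem (h : IsWalk S l u v) (hT : ∀ st ∈ l, st.1 ∈ T) :
    IsWalk T l u v := by
  induction l generalizing u with
  | nil => exact h
  | cons st l ih =>
    obtain ⟨hst, -, y, hy, h⟩ := h
    exact ⟨hst, hT st (by simp), y, hy, ih h fun st' h' => hT st' (by simp [h'])⟩

lemma IsWalk.exists_reverse (h : IsWalk S l u v) :
    ∃ l', IsWalk S l' v u ∧ ∀ ψ : Q.E → ℤˣ, walkGain ψ l' = walkGain ψ l := by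
  induction l generalizing u with
  | nil => exact ⟨[], h.symm, fun _ => rfl⟩
  | cons st l ih =>
    obtain ⟨-, he, y, hy, h⟩ := h
    obtain ⟨l', hl', hgain⟩ := ih h
    exact ⟨l' ++ [(st.1, y)],
      isWalk_append.2 ⟨y, hl', isWalk_singleton he (hy.trans Sym2.eq_swap)⟩,
      fun ψ => by simp [hgain, mul_comm]⟩

lemma reachable_iff_exists_isWalk : Reachable Q S u v ↔ ∃ l, IsWalk S l u v := by
  constructor
  · intro h
    induction h using Relation.ReflTransGen.head_induction_on with
    | refl => exact ⟨[], rfl⟩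
    | head h _ ih =>
      obtain ⟨⟨l, hl⟩, e, he, hends⟩ := ih, h
      exact ⟨(e, _) :: l, rfl, he, _, hends, hl⟩
  · rintro ⟨l, hl⟩
    induction l generalizing u with
    | nil => rw [show u = v from hl]
    | cons st l ih =>
      obtain ⟨-, he, y, hy, hl⟩ := hl
      exact .head ⟨st.1, he, hy⟩ (ih hl)

lemma IsWalk.reachable (h : IsWalk S l u v) : Reachable Q S u v :=
  reachable_iff_exists_isWalk.2 ⟨l, h⟩

lemma IsWalk.reachable_of_mem (h : IsWalk S l u v) {st : Q.E × Q.V} (hst : st ∈ l) :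
    Reachable Q S u st.2 := by
  obtain ⟨l₁, l₂, rfl⟩ := List.append_of_mem hst
  obtain ⟨x, hl₁, rfl, -⟩ := isWalk_append.1 h
  exact hl₁.reachable

end Walks

section Cycles

variable {Q : GainGraph} {S T : Set Q.E} {ψ : Q.E → ℤˣ} {l l' c c' : List (Q.E × Q.V)}
  {e : Q.E} {u v w : Q.V}

lemma isWalk_iff_isChain (h : c ≠ []) :
    IsWalk S c u v ↔ (c.head h).2 = u ∧ (∀ st ∈ c, st.1 ∈ S) ∧
      List.IsChain (fun st t => Q.ends st.1 = s(st.2, t.2)) c ∧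
      Q.ends (c.getLast h).1 = s((c.getLast h).2, v) := by
  induction c generalizing u with
  | nil => exact absurd rfl h
  | cons st l ih =>
    cases l with
    | nil =>
      simp only [IsWalk, List.head_cons, List.getLast_singleton, List.isChain_singleton,
        List.forall_mem_singleton, true_and, exists_eq_right]
      constructor
      · rintro ⟨rfl, h⟩
        exact ⟨rfl, h⟩
      · rintro ⟨rfl, h⟩
        exact ⟨rfl, h⟩
    | cons st' l =>
      rw [IsWalk, List.isChain_cons_cons, List.getLast_cons (by simp), List.forall_mem_cons]
      simp only [ih (List.cons_ne_nil st' l), List.head_cons]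
      constructor
      · rintro ⟨rfl, he, _, hends, rfl, hmem, hchain, hlast⟩
        exact ⟨rfl, ⟨he, hmem⟩, ⟨hends, hchain⟩, hlast⟩
      · rintro ⟨rfl, ⟨he, hmem⟩, ⟨hends, hchain⟩, hlast⟩
        exact ⟨rfl, he, _, hends, rfl, hmem, hchain, hlast⟩

/-- `c` is a cycle of the spanning subgraph `(Q.V, S)` in the connected component of `v`. -/
structure IsComponentCycle (S : Set Q.E) (v : Q.V) (c : List (Q.E × Q.V)) : Prop where
  isCycle : IsCycle Q c
  mem : ∀ st ∈ c, st.1 ∈ S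
  reachable : ∃ st ∈ c, Reachable Q S v st.2

lemma isComponentCycle_iff :
    IsComponentCycle S v c ↔ c ≠ [] ∧ (∃ u, Reachable Q S v u ∧ IsWalk S c u u) ∧
      (c.map Prod.fst).Nodup ∧ (c.map Prod.snd).Nodup := by
  constructor
  · rintro ⟨⟨hne, hchain, hlast, hnodup⟩, hmem, st, hst, hv⟩
    have hwalk : IsWalk S c _ _ := (isWalk_iff_isChain hne).2 ⟨rfl, hmem, hchain, hlast⟩
    exact ⟨hne, ⟨_, hv.trans (hwalk.reachable_of_mem hst).symm, hwalk⟩, hnodup⟩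
  · rintro ⟨hne, ⟨u, hv, hwalk⟩, hnodup⟩
    obtain ⟨rfl, hmem, hchain, hlast⟩ := (isWalk_iff_isChain hne).1 hwalk
    exact ⟨⟨hne, hchain, hlast, hnodup⟩, hmem, c.head hne, List.head_mem hne, hv⟩

lemma IsCycle.exists_isComponentCycle (hc : IsCycle Q c) (hS : ∀ st ∈ c, st.1 ∈ S) :
    ∃ v, IsComponentCycle S v c :=
  ⟨_, hc, hS, c.head hc.1, List.head_mem hc.1, .refl⟩

lemma IsComponentCycle.mono (hST : S ⊆ T) (h : IsComponentCycle S v c) :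
    IsComponentCycle T v c where
  isCycle := h.isCycle
  mem st hst := hST (h.mem st hst)
  reachable := h.reachable.imp fun _ hst => ⟨hst.1, hst.2.mono hST⟩

lemma IsComponentCycle.of_reachable (huv : Reachable Q S u v) (h : IsComponentCycle S v c) :
    IsComponentCycle S u c where
  isCycle := h.isCycle
  mem := h.mem
  reachable := h.reachable.imp fun _ hst => ⟨hst.1, huv.trans hst.2⟩

lemma IsComponentCycle.reachable_of_mem (h : IsComponentCycle S v c) {st : Q.E × Q.V}
    (hst : st ∈ c) : Reachable Q S v st.2 := by
  obtain ⟨-, ⟨u, hu, hc⟩, -⟩ := isComponentCycle_iff.1 h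
  exact hu.trans (hc.reachable_of_mem hst)

lemma IsComponentCycle.exists_isWalk_diff (h : IsComponentCycle S v c) {st : Q.E × Q.V}
    (hst : st ∈ c) :
    ∃ x l, Q.ends st.1 = s(st.2, x) ∧ IsWalk (S \ {st.1}) l x st.2 ∧
      ∀ ψ : Q.E → ℤˣ, walkGain ψ c = ψ st.1 * walkGain ψ l := by
  obtain ⟨-, ⟨u, -, hc⟩, hnodup, -⟩ := isComponentCycle_iff.1 h
  obtain ⟨l₁, l₂, rfl⟩ := List.append_of_mem hst
  obtain ⟨_, hl₁, rfl, -, x, hx, hl₂⟩ := isWalk_append.1 hc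
  refine ⟨x, l₂ ++ l₁, hx, (isWalk_append.2 ⟨u, hl₂, hl₁⟩).of_forall_mem fun st' hst' => ?_,
    fun ψ => by simp only [walkGain_append, walkGain_cons]; ac_rfl⟩
  simp only [List.map_append, List.map_cons, List.nodup_append, List.nodup_cons] at hnodup
  rcases List.mem_append.1 hst' with hst' | hst'
  · exact ⟨h.mem st' (by simp [hst']), fun heq : st'.1 = st.1 =>
      hnodup.2.1.1 (heq ▸ List.mem_map_of_mem hst')⟩
  · exact ⟨h.mem st' (by simp [hst']),
      hnodup.2.2 _ (List.mem_map_of_mem hst') _ List.mem_cons_self⟩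

lemma IsComponentCycle.reachable_of_mem_ends (h : IsComponentCycle S v c)
    (he : e ∈ c.map Prod.fst) (hu : u ∈ Q.ends e) : Reachable Q S v u := by
  obtain ⟨st, hst, rfl⟩ := List.mem_map.1 he
  obtain ⟨x, -, hx, -⟩ := h.exists_isWalk_diff hst
  exact (h.reachable_of_mem hst).trans
    (ZGain.reachable_of_mem_ends (h.mem st hst) (hx ▸ Sym2.mem_mk_left _ _) hu)

lemma IsComponentCycle.reachable_diff (h : IsComponentCycle S v c) (he : e ∈ c.map Prod.fst)
    {x y : Q.V} (hxy : Reachable Q S x y) : Reachable Q (S \ {e}) x y := by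
  obtain ⟨st, hst, rfl⟩ := List.mem_map.1 he
  obtain ⟨z, l, hz, hl, -⟩ := h.exists_isWalk_diff hst
  induction hxy with
  | refl => exact .refl
  | tail _ hstep ih =>
    obtain ⟨f, hf, hends⟩ := hstep
    by_cases hfe : f = st.1
    · rw [hfe, hz, Sym2.eq_iff] at hends
      rcases hends with ⟨rfl, rfl⟩ | ⟨rfl, rfl⟩
      · exact ih.trans hl.reachable.symm
      · exact ih.trans hl.reachable
    · exact ih.tail ⟨f, ⟨hf, hfe⟩, hends⟩

lemma exists_eq_append_of_not_nodup_map {α β : Type*} {f : α → β} {l : List α}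
    (h : ¬ (l.map f).Nodup) :
    ∃ l₁ x l₂ y l₃, l = l₁ ++ x :: (l₂ ++ y :: l₃) ∧ f x = f y := by
  induction l with
  | nil => simp at h
  | cons x l ih =>
    rw [List.map_cons, List.nodup_cons, not_and_or, not_not] at h
    rcases h with h | h
    · obtain ⟨y, hy, hxy⟩ := List.mem_map.1 h
      obtain ⟨l₂, l₃, rfl⟩ := List.append_of_mem hy
      exact ⟨[], x, l₂, y, l₃, rfl, hxy.symm⟩
    · obtain ⟨l₁, z, l₂, y, l₃, rfl, hzy⟩ := ih h
      exact ⟨x :: l₁, z, l₂, y, l₃, rfl, hzy⟩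

lemma IsWalk.eq_nil_of_forall_ne (h : IsWalk S l u v) (hne : ∀ st ∈ l, st.2 ≠ u) : l = [] := by
  cases l with
  | nil => rfl
  | cons st l => exact absurd h.1 (hne st (by simp))

lemma IsWalk.nodup_map_fst (h : IsWalk S l u u) (hψ : walkGain ψ l ≠ 1)
    (hV : (l.map Prod.snd).Nodup) : (l.map Prod.fst).Nodup := by
  by_contra hE
  obtain ⟨l₁, ⟨e, x⟩, l₂, ⟨e', y⟩, l₃, rfl, rfl : e = e'⟩ := exists_eq_append_of_not_nodup_map hE
  obtain ⟨_, h₁, rfl, -, x', hx, h⟩ := isWalk_append.1 h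
  obtain ⟨_, h₂, rfl, -, y', hy, h₃⟩ := isWalk_append.1 h
  simp only [List.map_append, List.map_cons, List.nodup_append, List.nodup_cons, List.mem_map,
    List.mem_append, List.mem_cons] at hV
  -- A repeated edge is traversed back and forth, so the walk is `x, y, x`, of gain `ψ e * ψ e`.
  obtain ⟨rfl, -⟩ | ⟨rfl, rfl⟩ := Sym2.eq_iff.1 (hx.symm.trans hy)
  · exact hV.2.1.1 (.inr (.inl rfl))
  · obtain rfl : l₂ = [] := h₂.eq_nil_of_forall_ne fun st hst =>
      hV.2.1.2.2.2 _ ⟨st, hst, rfl⟩ _ (.inl rfl)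
    obtain rfl : l₃ = [] := h₃.eq_nil_of_forall_ne fun st hst heq =>
      hV.2.1.1 (.inr (.inr ⟨st, hst, heq⟩))
    obtain rfl : x = u := h₃
    obtain rfl : l₁ = [] := h₁.eq_nil_of_forall_ne fun st hst =>
      hV.2.2 _ ⟨st, hst, rfl⟩ _ (.inl rfl)
    simp at hψ

/-- A nontrivial gain is inherited by one of the two closed walks into which a closed walk is
cut at a repeated vertex. -/
lemma IsWalk.exists_isComponentCycle {l : List (Q.E × Q.V)} {u : Q.V} (h : IsWalk S l u u)
    (hψ : walkGain ψ l ≠ 1) :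
    ∃ c, IsComponentCycle S u c ∧ walkGain ψ c ≠ 1 := by
  by_cases hV : (l.map Prod.snd).Nodup
  · refine ⟨l, isComponentCycle_iff.2 ⟨?_, ⟨u, .refl, h⟩, h.nodup_map_fst hψ hV, hV⟩, hψ⟩
    rintro rfl
    exact hψ rfl
  obtain ⟨l₁, ⟨e, v⟩, l₂, ⟨e', v'⟩, l₃, rfl, rfl : v = v'⟩ :=
    exists_eq_append_of_not_nodup_map hV
  obtain ⟨_, h₁, rfl, he, x, hx, h⟩ := isWalk_append.1 h
  obtain ⟨_, h₂, rfl, h₃⟩ := isWalk_append.1 h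
  by_cases hin : walkGain ψ ((e, v) :: l₂) = 1
  · have hout : IsWalk S (l₁ ++ (e', v) :: l₃) u u := isWalk_append.2 ⟨v, h₁, rfl, h₃⟩
    have : (l₁ ++ (e', v) :: l₃).length < (l₁ ++ (e, v) :: (l₂ ++ (e', v) :: l₃)).length := by
      simp
    refine hout.exists_isComponentCycle fun hout => hψ ?_
    calc walkGain ψ (l₁ ++ (e, v) :: (l₂ ++ (e', v) :: l₃))
        = walkGain ψ ((e, v) :: l₂) * walkGain ψ (l₁ ++ (e', v) :: l₃) := by
          simp only [walkGain_append, walkGain_cons]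
          ac_rfl
      _ = 1 := by rw [hin, hout, one_mul]
  · have hin' : IsWalk S ((e, v) :: l₂) v v := ⟨rfl, he, x, hx, h₂⟩
    have : ((e, v) :: l₂).length < (l₁ ++ (e, v) :: (l₂ ++ (e', v) :: l₃)).length := by
      simp; omega
    obtain ⟨c, hc, hgain⟩ := hin'.exists_isComponentCycle hin
    exact ⟨c, hc.of_reachable h₁.reachable, hgain⟩
termination_by l.length

lemma exists_isComponentCycle_of_reachable_diff (he : e ∈ S) (hends : Q.ends e = s(u, w))
    (h : Reachable Q (S \ {e}) u w) : ∃ c, IsComponentCycle S u c ∧ e ∈ c.map Prod.fst := by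
  obtain ⟨l, hl⟩ := reachable_iff_exists_isWalk.1 h.symm
  let ψ : Q.E → ℤˣ := fun f => if f = e then -1 else 1
  have hwalk : IsWalk S ((e, u) :: l) u u :=
    ⟨rfl, he, w, hends, hl.of_forall_mem fun st hst => (hl.mem hst).1⟩
  have hgain : walkGain ψ ((e, u) :: l) = -1 := by
    rw [walkGain_cons, walkGain_eq_one fun st hst => if_neg (hl.mem hst).2, mul_one]
    exact if_pos rfl
  obtain ⟨c, hc, hψ⟩ := hwalk.exists_isComponentCycle (ψ := ψ) (by rw [hgain]; decide)
  refine ⟨c, hc, ?_⟩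
  contrapose! hψ
  exact walkGain_eq_one fun st hst =>
    if_neg fun heq : st.1 = e => hψ (heq ▸ List.mem_map_of_mem hst)

lemma IsWalk.walkGain_eq (h : ∀ c, IsComponentCycle S v c → walkGain ψ c = 1)
    (hl : IsWalk S l u v) (hl' : IsWalk S l' u v) : walkGain ψ l = walkGain ψ l' := by
  obtain ⟨r, hr, hgain⟩ := hl.exists_reverse
  have hclosed : IsWalk S (r ++ l') v v := isWalk_append.2 ⟨u, hr, hl'⟩
  by_contra hne
  obtain ⟨c, hc, hψ⟩ := hclosed.exists_isComponentCycle (ψ := ψ) (by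
    rwa [walkGain_append, hgain, ne_eq, mul_eq_one_iff_inv_eq, Int.units_inv_eq_self])
  exact hψ (h c hc)

end Cycles

section FlatSections

variable {Q : GainGraph} {S T : Set Q.E} {ψ : Q.E → ℤˣ} {l c : List (Q.E × Q.V)}
  {e : Q.E} {u v w : Q.V} {M : Type*} [AddCommGroup M] {g : Q.V → M}

/-- `g` is a flat section over `S` of the local system with fibre `M` and signs `ψ`: the two
values of `g` at the ends of an edge `e` of `S` differ by the sign `ψ e`. -/
def IsFlat (ψ : Q.E → ℤˣ) (S : Set Q.E) (g : Q.V → M) : Prop :=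
  ∀ e ∈ S, ∀ u w, Q.ends e = s(u, w) → g u = ψ e • g w

lemma IsFlat.mono (hST : S ⊆ T) (h : IsFlat ψ T g) : IsFlat ψ S g := fun e he => h e (hST he)

lemma IsFlat.of_diff_singleton (h : IsFlat ψ (S \ {e}) g) (he : IsFlat ψ {e} g) :
    IsFlat ψ S g := fun f hf =>
  if hfe : f = e then he f hfe else h f ⟨hf, hfe⟩

lemma isFlat_singleton_iff (hends : Q.ends e = s(u, w)) :
    IsFlat ψ {e} g ↔ g u = ψ e • g w := by
  refine ⟨fun h => h e rfl u w hends, ?_⟩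
  rintro hg _ rfl x y hxy
  rw [hends, Sym2.eq_iff] at hxy
  rcases hxy with ⟨rfl, rfl⟩ | ⟨rfl, rfl⟩
  · exact hg
  · rw [hg, smul_smul, Int.units_mul_self, one_smul]

lemma IsFlat.apply_eq_of_isWalk (hg : IsFlat ψ S g) (hl : IsWalk S l u v) :
    g u = walkGain ψ l • g v := by
  induction l generalizing u with
  | nil => rw [show u = v from hl, walkGain_nil, one_smul]
  | cons st l ih =>
    obtain ⟨-, he, y, hy, hl⟩ := hl
    rw [hg st.1 he u y hy, ih hl, walkGain_cons, mul_smul]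

lemma IsFlat.eq_of_reachable (hg : IsFlat 1 S g) (h : Reachable Q S u v) : g u = g v := by
  obtain ⟨l, hl⟩ := reachable_iff_exists_isWalk.1 h
  rw [hg.apply_eq_of_isWalk hl, walkGain_eq_one fun _ _ => rfl, one_smul]

lemma IsFlat.eq_zero_of_reachable (hg : IsFlat ψ S g) (h : Reachable Q S u v) (hv : g v = 0) :
    g u = 0 := by
  obtain ⟨l, hl⟩ := reachable_iff_exists_isWalk.1 h
  rw [hg.apply_eq_of_isWalk hl, hv, smul_zero]

lemma IsFlat.eq_zero_of_isComponentCycle [IsAddTorsionFree M] (hg : IsFlat ψ S g)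
    (hc : IsComponentCycle S v c) (hψ : walkGain ψ c ≠ 1) : g v = 0 := by
  obtain ⟨-, ⟨u, hvu, hwalk⟩, -⟩ := isComponentCycle_iff.1 hc
  have hu := hg.apply_eq_of_isWalk hwalk
  rw [(Int.units_eq_one_or _).resolve_left hψ, Units.neg_smul, one_smul, self_eq_neg] at hu
  exact hg.eq_zero_of_reachable hvu hu

lemma IsFlat.of_isComponentCycle (hg : IsFlat ψ (S \ {e}) g) (hc : IsComponentCycle S v c)
    (hψ : walkGain ψ c = 1) (he : e ∈ c.map Prod.fst) : IsFlat ψ S g := by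
  obtain ⟨st, hst, rfl⟩ := List.mem_map.1 he
  obtain ⟨x, l, hx, hl, hgain⟩ := hc.exists_isWalk_diff hst
  refine hg.of_diff_singleton ((isFlat_singleton_iff (hx.trans Sym2.eq_swap)).2 ?_)
  have hinv : ψ st.1 * walkGain ψ l = 1 := (hgain ψ).symm.trans hψ
  rw [mul_eq_one_iff_eq_inv, Int.units_inv_eq_self] at hinv
  rw [hg.apply_eq_of_isWalk hl, hinv]

lemma exists_isFlat_apply_eq (h : ∀ c, IsComponentCycle S v c → walkGain ψ c = 1) (x : M) :
    ∃ g : Q.V → M, IsFlat ψ S g ∧ g v = x := by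
  classical
  have hwell : ∀ u, ∃ γ, ∀ l, IsWalk S l u v → walkGain ψ l = γ := fun u => by
    by_cases hu : ∃ l, IsWalk S l u v
    · exact ⟨walkGain ψ hu.choose, fun l hl => hl.walkGain_eq h hu.choose_spec⟩
    · exact ⟨1, fun l hl => absurd ⟨l, hl⟩ hu⟩
  choose γ hγ using hwell
  refine ⟨fun u => if Reachable Q S u v then γ u • x else 0, fun e he u w hends => ?_, ?_⟩
  · have hstep : Reachable Q S u w := .single ⟨e, he, hends⟩
    beta_reduce
    by_cases hw : Reachable Q S w v
    · obtain ⟨l, hl⟩ := reachable_iff_exists_isWalk.1 hw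
      rw [if_pos hw, if_pos (hstep.trans hw), ← hγ w l hl,
        ← hγ u ((e, u) :: l) ⟨rfl, he, w, hends, hl⟩, walkGain_cons, mul_smul]
    · rw [if_neg hw, if_neg fun hu => hw (hstep.symm.trans hu), smul_zero]
  · beta_reduce
    rw [if_pos (.refl : Reachable Q S v v), ← hγ v [] rfl, walkGain_nil, one_smul]

lemma exists_isFlat_one_apply_ne [Nontrivial M] (h : ¬ Reachable Q S u v) :
    ∃ g : Q.V → M, IsFlat 1 S g ∧ g u ≠ g v := by
  classical
  obtain ⟨x, hx⟩ := exists_ne (0 : M)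
  refine ⟨Set.indicator {w | Reachable Q S u w} fun _ => x, fun e he w w' hends => ?_, ?_⟩
  · have hstep : Reachable Q S w w' := .single ⟨e, he, hends⟩
    have hiff : Reachable Q S u w ↔ Reachable Q S u w' :=
      ⟨fun h => h.trans hstep, fun h => h.trans hstep.symm⟩
    simp [Set.indicator_apply, hiff]
  · rwa [Set.indicator_of_mem (by exact .refl), Set.indicator_of_notMem (by exact h)]

end FlatSections

section MapGraphs

variable {Q : GainGraph} {S : Set Q.E} {ψ : Q.E → ℤˣ} {c c' : List (Q.E × Q.V)}
  {e : Q.E} {v : Q.V} {M : Type*} [AddCommGroup M]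

lemma IsComponentCycle.exists_mem (h : IsComponentCycle S v c) : ∃ e, e ∈ c.map Prod.fst :=
  List.exists_mem_of_ne_nil _ (by simpa using h.isCycle.1)

lemma IsComponentCycle.mem_of_mem_map (h : IsComponentCycle S v c) (he : e ∈ c.map Prod.fst) :
    e ∈ S := by
  obtain ⟨st, hst, rfl⟩ := List.mem_map.1 he
  exact h.mem st hst

lemma IsComponentCycle.diff_singleton (h' : IsComponentCycle S v c') (he' : e ∉ c'.map Prod.fst)
    (h : IsComponentCycle S v c) (he : e ∈ c.map Prod.fst) :
    IsComponentCycle (S \ {e}) v c' where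
  isCycle := h'.isCycle
  mem st hst := ⟨h'.mem st hst, fun heq : st.1 = e => he' (heq ▸ List.mem_map_of_mem hst)⟩
  reachable := h'.reachable.imp fun _ hst => ⟨hst.1, h.reachable_diff he hst.2⟩

lemma spanningUnbalancedMapGraph_iff_isComponentCycle :
    SpanningUnbalancedMapGraph Q S ↔ ∀ v, (∃ c, IsComponentCycle S v c) ∧
      ∀ c, IsComponentCycle S v c → walkGain Q.gain c ≠ 1 ∧
        ∀ c', IsComponentCycle S v c' → c.map Prod.fst ⊆ c'.map Prod.fst := by
  constructor
  · rintro ⟨hgain, huniq⟩ v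
    obtain ⟨⟨c, hc, hS, hv⟩, huniq⟩ := huniq v
    refine ⟨⟨c, hc, hS, hv⟩, fun c hc => ⟨hgain c hc.isCycle hc.mem, fun c' hc' e he => ?_⟩⟩
    have heq := huniq c c' hc.isCycle hc.mem hc.reachable hc'.isCycle hc'.mem hc'.reachable
    exact List.mem_toFinset.1 (heq ▸ List.mem_toFinset.2 he)
  · refine fun h => ⟨fun c hc hS => ?_, fun v => ⟨?_, fun c c' hc hS hv hc' hS' hv' => ?_⟩⟩
    · obtain ⟨v, hv⟩ := hc.exists_isComponentCycle hS
      exact ((h v).2 c hv).1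
    · obtain ⟨c, hc⟩ := (h v).1
      exact ⟨c, hc.isCycle, hc.mem, hc.reachable⟩
    · have hvc : IsComponentCycle S v c := ⟨hc, hS, hv⟩
      have hvc' : IsComponentCycle S v c' := ⟨hc', hS', hv'⟩
      ext e
      simp only [List.mem_toFinset]
      exact ⟨fun he => ((h v).2 c hvc).2 c' hvc' he, fun he => ((h v).2 c' hvc').2 c hvc he⟩

lemma SpanningUnbalancedMapGraph.exists_forall_not_isComponentCycle
    (h : SpanningUnbalancedMapGraph Q S) (he : e ∈ S) :
    ∃ v, ∀ c, ¬ IsComponentCycle (S \ {e}) v c := by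
  rw [spanningUnbalancedMapGraph_iff_isComponentCycle] at h
  have hS : S \ {e} ⊆ S := Set.sdiff_subset
  induction hends : Q.ends e with | _ u w
  by_contra! hall
  obtain ⟨⟨c, hc⟩, c', hc'⟩ := hall u, hall w
  obtain ⟨f, hf⟩ := hc.exists_mem
  have hf' : f ∈ c'.map Prod.fst :=
    ((h u).2 c (hc.mono hS)).2 c' ((hc'.mono hS).of_reachable (.single ⟨e, he, hends⟩)) hf
  have huw : Reachable Q (S \ {e}) u w :=
    (hc.reachable_of_mem_ends hf (Sym2.out_fst_mem _)).trans
      (hc'.reachable_of_mem_ends hf' (Sym2.out_fst_mem _)).symm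
  obtain ⟨d, hd, hed⟩ := exists_isComponentCycle_of_reachable_diff he hends huw
  exact (hc.mem_of_mem_map (((h u).2 d hd).2 c (hc.mono hS) hed)).2 rfl

/-- The flatness conditions imposed by the edges of `S` on `M`-valued functions are independent:
each of them can be violated while all the others hold. -/
def FlatIndependent (M : Type*) [AddCommGroup M] (ψ : Q.E → ℤˣ) (S : Set Q.E) : Prop :=
  ∀ e ∈ S, ∃ g : Q.V → M, IsFlat ψ (S \ {e}) g ∧ ¬ IsFlat ψ {e} g

lemma IsComponentCycle.walkGain_ne_one (hc : IsComponentCycle S v c) (he : e ∈ c.map Prod.fst)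
    {g : Q.V → M} (hg : IsFlat ψ (S \ {e}) g) (hge : ¬ IsFlat ψ {e} g) : walkGain ψ c ≠ 1 :=
  fun hψ => hge ((hg.of_isComponentCycle hc hψ he).mono
    (Set.singleton_subset_iff.2 (hc.mem_of_mem_map he)))

lemma IsComponentCycle.mem_map_fst_of_not_isFlat [IsAddTorsionFree M]
    (hc : IsComponentCycle S v c) (he : e ∈ c.map Prod.fst) {g : Q.V → M}
    (hg : IsFlat ψ (S \ {e}) g) (hge : ¬ IsFlat ψ {e} g) (hc' : IsComponentCycle S v c')
    (hψ : walkGain ψ c' ≠ 1) : e ∈ c'.map Prod.fst := by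
  by_contra he'
  have hv : g v = 0 := hg.eq_zero_of_isComponentCycle (hc'.diff_singleton he' hc he) hψ
  have hends : ∀ u ∈ Q.ends e, g u = 0 := fun u hu =>
    hg.eq_zero_of_reachable (hc.reachable_diff he (hc.reachable_of_mem_ends he hu)).symm hv
  refine hge fun f hf u w huw => ?_
  rw [← show f = e from hf, huw] at hends
  rw [hends u (Sym2.mem_mk_left u w), hends w (Sym2.mem_mk_right u w), smul_zero]

lemma SpanningUnbalancedMapGraph.eq_zero [IsAddTorsionFree M]
    (h : SpanningUnbalancedMapGraph Q S) {g : Q.V → M} (hg : IsFlat Q.gain S g) : g = 0 := by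
  rw [spanningUnbalancedMapGraph_iff_isComponentCycle] at h
  funext v
  obtain ⟨c, hc⟩ := (h v).1
  exact hg.eq_zero_of_isComponentCycle hc ((h v).2 c hc).1

variable (M) [Nontrivial M]

lemma exists_isComponentCycle_of_forall_isFlat_eq_zero
    (h : ∀ g : Q.V → M, IsFlat ψ S g → g = 0) (v : Q.V) : ∃ c, IsComponentCycle S v c := by
  by_contra! hv
  obtain ⟨x, hx⟩ := exists_ne (0 : M)
  obtain ⟨g, hg, hgv⟩ := exists_isFlat_apply_eq (ψ := ψ) (fun c hc => absurd hc (hv c)) x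
  exact hx (by rw [← hgv, h g hg, Pi.zero_apply])

theorem forall_reachable_iff_isFlat :
    (∀ u v, Reachable Q S u v) ↔ ∀ g : Q.V → M, IsFlat 1 S g → ∀ u v, g u = g v := by
  refine ⟨fun h g hg u v => hg.eq_of_reachable (h u v), fun h u v => ?_⟩
  by_contra huv
  obtain ⟨g, hg, hne⟩ := exists_isFlat_one_apply_ne (M := M) huv
  exact hne (h g hg u v)

theorem spanningTree_iff_isFlat :
    SpanningTree Q S ↔
      (∀ g : Q.V → M, IsFlat 1 S g → ∀ u v, g u = g v) ∧ FlatIndependent M 1 S := by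
  rw [← forall_reachable_iff_isFlat]
  refine and_congr_right fun _ => ⟨fun hacyclic e he => ?_, fun hind c hc hS => ?_⟩
  · induction hends : Q.ends e with | _ u w
    have huw : ¬ Reachable Q (S \ {e}) u w := fun huw => by
      obtain ⟨c, hc, -⟩ := exists_isComponentCycle_of_reachable_diff he hends huw
      exact hacyclic c hc.isCycle hc.mem
    obtain ⟨g, hg, hne⟩ := exists_isFlat_one_apply_ne (M := M) huw
    exact ⟨g, hg, fun hge => hne (by simpa using (isFlat_singleton_iff hends).1 hge)⟩
  · obtain ⟨v, hv⟩ := hc.exists_isComponentCycle hS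
    obtain ⟨e, he⟩ := hv.exists_mem
    obtain ⟨g, hg, hge⟩ := hind e (hv.mem_of_mem_map he)
    exact hv.walkGain_ne_one he hg hge (walkGain_eq_one fun _ _ => rfl)

variable [IsAddTorsionFree M]

lemma spanningUnbalancedMapGraph_of_isFlat (hzero : ∀ g : Q.V → M, IsFlat Q.gain S g → g = 0)
    (hind : ∀ v c, IsComponentCycle S v c → ∀ e ∈ c.map Prod.fst,
      ∃ g : Q.V → M, IsFlat Q.gain (S \ {e}) g ∧ ¬ IsFlat Q.gain {e} g) :
    SpanningUnbalancedMapGraph Q S := by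
  have hgain : ∀ v c, IsComponentCycle S v c → walkGain Q.gain c ≠ 1 := fun v c hc => by
    obtain ⟨e, he⟩ := hc.exists_mem
    obtain ⟨g, hg, hge⟩ := hind v c hc e he
    exact hc.walkGain_ne_one he hg hge
  refine spanningUnbalancedMapGraph_iff_isComponentCycle.2 fun v =>
    ⟨exists_isComponentCycle_of_forall_isFlat_eq_zero M hzero v,
      fun c hc => ⟨hgain v c hc, fun c' hc' e he => ?_⟩⟩
  obtain ⟨g, hg, hge⟩ := hind v c hc e he
  exact hc.mem_map_fst_of_not_isFlat he hg hge hc' (hgain v c' hc')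

theorem spanningUnbalancedMapGraph_iff_isFlat :
    SpanningUnbalancedMapGraph Q S ↔
      (∀ g : Q.V → M, IsFlat Q.gain S g → g = 0) ∧ FlatIndependent M Q.gain S := by
  refine ⟨fun h => ⟨fun g => h.eq_zero, fun e he => ?_⟩, fun ⟨hzero, hind⟩ =>
    spanningUnbalancedMapGraph_of_isFlat M hzero fun v c hc e he =>
      hind e (hc.mem_of_mem_map he)⟩
  obtain ⟨v, hv⟩ := h.exists_forall_not_isComponentCycle he
  obtain ⟨x, hx⟩ := exists_ne (0 : M)
  obtain ⟨g, hg, hgv⟩ := exists_isFlat_apply_eq (ψ := Q.gain) (fun c hc => absurd hc (hv c)) x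
  refine ⟨g, hg, fun hge => hx ?_⟩
  rw [← hgv, h.eq_zero (hg.of_diff_singleton hge), Pi.zero_apply]

theorem containsConnSpanningUnbalMap_iff_isFlat :
    ContainsConnSpanningUnbalMap Q S ↔
      (∀ g : Q.V → M, IsFlat 1 S g → ∀ u v, g u = g v) ∧
        ∀ g : Q.V → M, IsFlat Q.gain S g → g = 0 := by
  rw [← forall_reachable_iff_isFlat]
  constructor
  · rintro ⟨T, hTS, hT, hconn⟩
    exact ⟨fun u v => Reachable.mono hTS (hconn u v), fun g hg => hT.eq_zero (hg.mono hTS)⟩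
  · rintro ⟨hconn, hzero⟩
    obtain ⟨T, hTS, hT⟩ := exists_minimal_le_of_wellFoundedLT
      (fun T : Set Q.E => (∀ u v, Reachable Q T u v) ∧
        ∀ g : Q.V → M, IsFlat Q.gain T g → g = 0) S ⟨hconn, hzero⟩
    refine ⟨T, hTS, spanningUnbalancedMapGraph_of_isFlat M hT.prop.2 fun v c hc e he => ?_,
      hT.prop.1⟩
    -- Deleting an edge of a cycle keeps `T` connected, so by minimality it creates a new section.
    by_contra! hflat
    have hle : T ⊆ T \ {e} := hT.le_of_le
      ⟨fun u v => hc.reachable_diff he (hT.prop.1 u v),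
        fun g hg => hT.prop.2 g (hg.of_diff_singleton (hflat g hg))⟩ Set.sdiff_subset
    exact (hle (hc.mem_of_mem_map he)).2 rfl

end MapGraphs

section FacetCoordinates

open Metric

lemma norm_map_of_preimage_closedBall {E F : Type*} [SeminormedAddCommGroup E] [NormedSpace ℝ E]
    [SeminormedAddCommGroup F] [NormedSpace ℝ F] (f : E →ₗ[ℝ] F)
    (hf : f ⁻¹' closedBall 0 1 = closedBall 0 1) (x : E) : ‖f x‖ = ‖x‖ := by
  have hgauge : gauge (f ⁻¹' closedBall 0 1) x = gauge (closedBall 0 1) (f x) := by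
    simp only [gauge_def', Set.mem_preimage, map_smul]
  simpa [hf, gauge_closedBall] using hgauge.symm

lemma closedBall_pi_eq_convexHull (ι : Type*) [Fintype ι] :
    closedBall (0 : ι → ℝ) 1 = convexHull ℝ (Set.univ.pi fun _ => {-1, 1}) := by
  rw [convexHull_pi, closedBall_pi _ zero_le_one]
  simp [Real.closedBall_eq_Icc, convexHull_pair, segment_eq_Icc]

lemma pi_pair_fin_two {α : Type*} (x y : α) :
    (Set.univ.pi fun _ : Fin 2 => {x, y}) = {![y, x], ![y, y], ![x, y], ![x, x]} := by
  ext f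
  simp only [Set.mem_pi, Set.mem_univ, true_imp_iff, Fin.forall_fin_two, Set.mem_insert_iff,
    Set.mem_singleton_iff, funext_iff, Matrix.cons_val_zero, Matrix.cons_val_one]
  tauto

variable {X : Type} [NormedAddCommGroup X] [NormedSpace ℝ X] {a b : X}

/-- The half-sums `(a + b) / 2` and `(b - a) / 2` are dual to the functionals that cut out the
facets, so coordinates with respect to them turn the quadrilateral into a square. -/
lemma exists_linearIsometryEquiv_of_closedBall (hdim : Module.finrank ℝ X = 2)
    (hab : LinearIndependent ℝ ![a, b])
    (hball : closedBall (0 : X) 1 = convexHull ℝ {a, b, -a, -b}) :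
    ∃ Φ : X ≃ₗᵢ[ℝ] (Fin 2 → ℝ), Φ a = ![1, -1] ∧ Φ b = ![1, 1] := by
  have hd : LinearIndependent ℝ ![(2⁻¹ : ℝ) • a + (2⁻¹ : ℝ) • b, (-2⁻¹ : ℝ) • a + (2⁻¹ : ℝ) • b] :=
    (LinearIndependent.pair_add_smul_add_smul_iff _ _ _ _).2 ⟨hab, by norm_num⟩
  let B := basisOfLinearIndependentOfCardEqFinrank hd (by simp [hdim])
  have ha : B.equivFun a = ![1, -1] := by
    rw [← LinearEquiv.eq_symm_apply, B.equivFun_symm_apply]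
    simp only [B, Fin.sum_univ_two, coe_basisOfLinearIndependentOfCardEqFinrank,
      Matrix.cons_val_zero, Matrix.cons_val_one]
    module
  have hb : B.equivFun b = ![1, 1] := by
    rw [← LinearEquiv.eq_symm_apply, B.equivFun_symm_apply]
    simp only [B, Fin.sum_univ_two, coe_basisOfLinearIndependentOfCardEqFinrank,
      Matrix.cons_val_zero, Matrix.cons_val_one]
    module
  have himage : B.equivFun '' closedBall 0 1 = closedBall 0 1 := by
    have hvert : B.equivFun '' {a, b, -a, -b} = {![1, -1], ![1, 1], ![-1, 1], ![-1, -1]} := by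
      simp only [Set.image_insert_eq, Set.image_singleton, map_neg, ha, hb, Matrix.neg_cons,
        neg_neg, Matrix.neg_empty]
    rw [hball, ← B.equivFun.coe_toLinearMap, LinearMap.image_convexHull, B.equivFun.coe_toLinearMap,
      hvert, closedBall_pi_eq_convexHull, pi_pair_fin_two]
  refine ⟨⟨B.equivFun, norm_map_of_preimage_closedBall B.equivFun.toLinearMap ?_⟩, ha, hb⟩
  rw [← himage]
  exact Set.preimage_image_eq _ B.equivFun.injective

lemma mem_segment_update_iff {ι : Type*} [DecidableEq ι] {j : ι} {r s : ℝ} (hrs : r ≤ s)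
    (v y : ι → ℝ) :
    y ∈ segment ℝ (Function.update v j r) (Function.update v j s) ↔
      (∀ i, i ≠ j → y i = v i) ∧ r ≤ y j ∧ y j ≤ s := by
  rw [← Pi.image_update_segment, segment_eq_Icc hrs]
  constructor
  · rintro ⟨t, ht, rfl⟩
    exact ⟨fun i hi => Function.update_of_ne hi t v, by simpa using ht⟩
  · rintro ⟨hv, hj⟩
    exact ⟨y j, hj, (Function.eq_update_iff.2 ⟨rfl, hv⟩).symm⟩

lemma mem_facet_iff {Φ : X ≃ₗᵢ[ℝ] (Fin 2 → ℝ)} (ha : Φ a = ![1, -1]) (hb : Φ b = ![1, 1])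
    (i : Fin 2) (x : X) : x ∈ facet a b i ↔ Φ x i = 1 ∧ ‖x‖ ≤ 1 := by
  have hmap : ∀ y z, x ∈ segment ℝ y z ↔ Φ x ∈ segment ℝ (Φ y) (Φ z) := fun y z =>
    Φ.injective.mem_set_image.symm.trans <| iff_of_eq <| congrArg (Φ x ∈ ·) <|
      image_segment ℝ Φ.toLinearEquiv.toLinearMap.toAffineMap y z
  have hupdate₀ : ∀ t : ℝ, ![t, 1] = Function.update ![0, 1] 0 t := fun t => by
    ext i; fin_cases i <;> rfl
  have hupdate₁ : ∀ t : ℝ, ![1, t] = Function.update ![1, 0] 1 t := fun t => by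
    ext i; fin_cases i <;> rfl
  rw [← Φ.norm_map x, pi_norm_le_iff_of_nonneg zero_le_one, Fin.forall_fin_two, facet]
  simp only [Real.norm_eq_abs, abs_le]
  split_ifs with hi
  · obtain rfl := hi
    rw [hmap, ha, hb, hupdate₁ (-1), hupdate₁ 1, mem_segment_update_iff (by norm_num)]
    simp +contextual
  · obtain rfl := Fin.eq_one_of_ne_zero i hi
    rw [hmap, map_neg, ha, hb, segment_symm, Matrix.neg_cons, Matrix.neg_cons, neg_neg,
      Matrix.neg_empty, hupdate₀ (-1), hupdate₀ 1, mem_segment_update_iff (by norm_num)]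
    simp +contextual [and_comm]

end FacetCoordinates

section Norm

variable {X : Type*} [NormedAddCommGroup X] [NormedSpace ℝ X] {ι : Type*} [Fintype ι]
  (Φ : X ≃ₗᵢ[ℝ] (ι → ℝ)) {i : ι}

lemma abs_apply_le_norm (i : ι) (x : X) : |Φ x i| ≤ ‖x‖ := by
  rw [← Φ.norm_map, ← Real.norm_eq_abs]
  exact norm_le_pi_norm (Φ x) i

lemma exists_abs_apply_eq_norm [Nonempty ι] (x : X) : ∃ i, |Φ x i| = ‖x‖ := by
  rw [← Φ.norm_map]
  exact (IsGreatest.pi_norm (Φ x)).1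

variable {Φ} in
lemma sign_apply_ne_zero {x : X} (hx : x ≠ 0) (hi : |Φ x i| = ‖x‖) :
    (SignType.sign (Φ x i) : ℝ) ≠ 0 := left_ne_zero_of_mul <| by
  rwa [sign_mul_self, hi, norm_ne_zero_iff]

/-- If the `i`-th coordinate attains the norm at `f x₀`, then it is up to sign a minorant of the
norm which touches it there, and so has the same derivative. -/
lemma hasFDerivAt_norm_apply {E : Type*} [NormedAddCommGroup E] [NormedSpace ℝ E] {f : E → X}
    {f' : E →L[ℝ] X} {N : E →L[ℝ] ℝ} {x₀ : E} (hf : HasFDerivAt f f' x₀)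
    (hN : HasFDerivAt (fun x => ‖f x‖) N x₀) (hi : |Φ (f x₀) i| = ‖f x₀‖) (v : E) :
    N v = SignType.sign (Φ (f x₀) i) * Φ (f' v) i := by
  let L : X →L[ℝ] ℝ := (SignType.sign (Φ (f x₀) i) : ℝ) •
    (ContinuousLinearMap.proj i).comp Φ.toContinuousLinearEquiv.toContinuousLinearMap
  have hL : ∀ x, L x = SignType.sign (Φ (f x₀) i) * Φ x i := fun x => rfl
  have hle : ∀ x, L x ≤ ‖x‖ := fun x => by
    refine le_trans ?_ (abs_apply_le_norm Φ i x)
    rw [hL]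
    rcases SignType.trichotomy (SignType.sign (Φ (f x₀) i)) with h | h | h <;>
      simp [h, le_abs_self, neg_le_abs]
  have hmin : IsLocalMin (fun x => ‖f x‖ - L (f x)) x₀ := .of_forall fun x => by
    have hx₀ : L (f x₀) = ‖f x₀‖ := by rw [hL, sign_mul_self, hi]
    simpa [hx₀] using hle (f x)
  have hzero := hmin.hasFDerivAt_eq_zero (hN.sub (L.hasFDerivAt.comp x₀ hf))
  rw [sub_eq_zero] at hzero
  rw [hzero]
  rfl

lemma abs_add_single_eq_norm [DecidableEq ι] (c : ι → ℝ) {r : ℝ} (hr : 2 * ‖c‖ ≤ r) :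
    |(c + Pi.single i r : ι → ℝ) i| = ‖c + Pi.single i r‖ := by
  refine le_antisymm (norm_le_pi_norm (c + Pi.single i r : ι → ℝ) i)
    ((pi_norm_le_iff_of_nonneg (abs_nonneg _)).2 fun j => ?_)
  rcases eq_or_ne j i with rfl | hj
  · exact le_rfl
  · have hci := abs_le.1 (norm_le_pi_norm c i)
    calc ‖(c + Pi.single i r : ι → ℝ) j‖ ≤ ‖c‖ := by
          simpa [Pi.single_eq_of_ne hj] using norm_le_pi_norm c j
      _ ≤ c i + r := by linarith
      _ ≤ |(c + Pi.single i r : ι → ℝ) i| := by simpa using le_abs_self (c i + r)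

end Norm

section RigidMotions

variable {X : Type} [NormedAddCommGroup X] [NormedSpace ℝ X] {ι : Type*} [Fintype ι]
  {η : X → X}

lemma IsInfRigidMotion.coord_eq {Φ : X ≃ₗᵢ[ℝ] (ι → ℝ)} {i : ι}
    (hη : IsInfRigidMotion η) {x y : X} (hi : |Φ (x - y) i| = ‖x - y‖) : Φ (η x) i = Φ (η y) i := by
  rcases eq_or_ne x y with rfl | hxy
  · rfl
  obtain ⟨α, ⟨-, hzero, hnorm⟩, hα⟩ := hη
  have hconst : (fun t => ‖α x t - α y t‖) =ᶠ[nhds 0] fun _ => ‖x - y‖ :=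
    Filter.eventually_of_mem (Icc_mem_nhds (by norm_num) (by norm_num)) (hnorm x y)
  have hsign := hasFDerivAt_norm_apply Φ ((hα x).sub (hα y)).hasFDerivAt
    ((hasFDerivAt_const ‖x - y‖ (0 : ℝ)).congr_of_eventuallyEq hconst) (i := i)
    (by rwa [Pi.sub_apply, hzero, hzero]) 1
  simp only [Pi.sub_apply, hzero] at hsign
  have hcoord : Φ (η x - η y) i = 0 := (mul_eq_zero.1 (by simpa using hsign.symm)).resolve_left
    (sign_apply_ne_zero (sub_ne_zero.2 hxy) hi)
  rwa [map_sub, Pi.sub_apply, sub_eq_zero] at hcoord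

/-- The `i`-th coordinate of an infinitesimal rigid motion is the same at `x` and `y`, by
comparison with a point so far away that both differences lie in the `i`-th cone. -/
lemma IsInfRigidMotion.apply_eq (Φ : X ≃ₗᵢ[ℝ] (ι → ℝ)) (hη : IsInfRigidMotion η) (x y : X) :
    η x = η y := by
  classical
  refine Φ.injective (funext fun i => ?_)
  let z := x + Φ.symm (Pi.single i (2 * ‖x - y‖))
  have hzx : Φ (z - x) = 0 + Pi.single i (2 * ‖x - y‖) := by simp [z]
  have hzy : Φ (z - y) = Φ (x - y) + Pi.single i (2 * ‖x - y‖) := by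
    simp [z, add_sub_right_comm]
  rw [← hη.coord_eq (x := z) (y := x), ← hη.coord_eq (x := z) (y := y)]
  · rw [← Φ.norm_map, hzy, abs_add_single_eq_norm _ (by rw [Φ.norm_map])]
  · rw [← Φ.norm_map, hzx, abs_add_single_eq_norm _ (by simp)]

lemma isInfRigidMotion_const (c : X) : IsInfRigidMotion fun _ : X => c :=
  ⟨fun x t => x + t • c,
    ⟨fun _ => by fun_prop, fun _ => by simp, fun _ _ _ _ => by rw [add_sub_add_right_eq_sub]⟩,
    fun x => by simpa using ((hasDerivAt_id (0 : ℝ)).smul_const c).const_add x⟩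

lemma mem_TXC_iff (Φ : X ≃ₗᵢ[ℝ] (ι → ℝ)) (η : X → ℂ ⊗[ℝ] X) :
    η ∈ TXC X ↔ ∃ c, η = fun _ => c := by
  constructor
  · intro hη
    induction hη using Submodule.span_induction with
    | mem _ h =>
      obtain ⟨η, hη, rfl⟩ := h
      exact ⟨1 ⊗ₜ η 0, funext fun x => by rw [hη.apply_eq Φ x 0]⟩
    | zero => exact ⟨0, rfl⟩
    | add _ _ _ _ h₁ h₂ =>
      obtain ⟨⟨c, rfl⟩, d, rfl⟩ := h₁, h₂
      exact ⟨c + d, rfl⟩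
    | smul r _ _ h =>
      obtain ⟨c, rfl⟩ := h
      exact ⟨r • c, rfl⟩
  · rintro ⟨c, rfl⟩
    induction c with
    | zero => exact zero_mem _
    | add c d hc hd => exact add_mem hc hd
    | tmul r x =>
      have hr : (fun _ : X => r ⊗ₜ[ℝ] x) = r • fun _ => (1 : ℂ) ⊗ₜ[ℝ] x := by
        funext
        simp [TensorProduct.smul_tmul']
      rw [hr]
      exact Submodule.smul_mem _ r (Submodule.subset_span ⟨_, isInfRigidMotion_const x, rfl⟩)

variable {V : Type} {G : SimpleGraph V} [Fintype G.edgeSet] {p : V → X}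

lemma infRigid_iff_forall_eq (Φ : X ≃ₗᵢ[ℝ] (ι → ℝ)) :
    InfRigid G p ↔ ∀ u, dfR G p u = 0 → ∀ v w, u v = u w := by
  refine forall₂_congr fun u _ => ⟨?_, fun hu => ?_⟩
  · rintro ⟨η, hη, hu⟩ v w
    rw [← hu, ← hu, hη.apply_eq Φ]
  · rcases isEmpty_or_nonempty V with _ | ⟨⟨v⟩⟩
    · exact ⟨_, isInfRigidMotion_const 0, isEmptyElim⟩
    · exact ⟨_, isInfRigidMotion_const (u v), hu v⟩

lemma chiRigidC2_iff_forall_eq [Fintype V] [DecidableEq V] (Φ : X ≃ₗᵢ[ℝ] (ι → ℝ))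
    {σ : Equiv.Perm V} {χ : ℤˣ →* ℂ} :
    ChiRigidC2 G p σ χ ↔
      ∀ u ∈ XchiC2 σ χ, dfC G p u = 0 → ∀ v w, u v = u w := by
  refine forall₃_congr fun u hu _ => ⟨?_, fun hconst => ?_⟩
  · rintro ⟨η, hη, rfl⟩ v w
    obtain ⟨c, rfl⟩ := (mem_TXC_iff Φ η).1 hη.1
    rfl
  · rcases isEmpty_or_nonempty V with _ | ⟨⟨v⟩⟩
    · exact ⟨0, zero_mem _, Subsingleton.elim _ _⟩
    · refine ⟨fun _ => u v, ⟨(mem_TXC_iff Φ _).2 ⟨_, rfl⟩, ?_⟩, funext (hconst v)⟩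
      simp only [XchiC2, SetLike.mem_coe, Submodule.mem_iInf, LinearMap.mem_ker,
        LinearMap.sub_apply, LinearMap.smul_apply, LinearMap.proj_apply, sub_eq_zero] at hu ⊢
      intro γ _
      rw [← hu, hconst]

end RigidMotions

section ComplexCoordinates

variable {X : Type} [NormedAddCommGroup X] [NormedSpace ℝ X] {ι : Type*} [Fintype ι]
  [DecidableEq ι] (Φ : X ≃ₗᵢ[ℝ] (ι → ℝ))

/-- The coordinates on the complexification of `X` which extend the real coordinates `Φ`. -/
noncomputable def cplxCoord : ℂ ⊗[ℝ] X ≃ₗ[ℂ] (ι → ℂ) :=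
  Φ.toLinearEquiv.baseChange ℝ ℂ X (ι → ℝ) ≪≫ₗ TensorProduct.piScalarRight ℝ ℂ ℂ ι

lemma cplxCoord_tmul (c : ℂ) (x : X) (i : ι) : cplxCoord Φ (c ⊗ₜ x) i = Φ x i • c := by
  simp [cplxCoord]

lemma cplxFunctional_eq_smul_cplxCoord {f : X →ₗ[ℝ] ℝ} {r : ℝ} {i : ι}
    (hf : ∀ x, f x = r * Φ x i) (z : ℂ ⊗[ℝ] X) :
    cplxFunctional f z = r * cplxCoord Φ z i := by
  induction z with
  | zero => simp
  | add z w hz hw => simp [hz, hw, mul_add]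
  | tmul c x => simp [cplxFunctional, cplxCoord_tmul, hf]; ring

end ComplexCoordinates

section Differential

variable {V : Type} {X : Type} [NormedAddCommGroup X] [NormedSpace ℝ X] {G : SimpleGraph V}
  [Fintype G.edgeSet] {p : V → X} {e : G.edgeSet} {u w : V} {ι : Type*} [Fintype ι]
  {Φ : X ≃ₗᵢ[ℝ] (ι → ℝ)} {i j : ι}

lemma dfR_apply [Finite V] (hwp : WellPositioned G p) (he : (e : Sym2 V) = s(u, w))
    (hi : |Φ (p u - p w) i| = ‖p u - p w‖) (x : V → X) :
    dfR G p x e = SignType.sign (Φ (p u - p w) i) * (Φ (x u) i - Φ (x w) i) := by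
  cases nonempty_fintype V
  have hfG : (fun x : V → X => ‖x u - x w‖) = fun x => fG G x e := by
    funext x
    rw [fG, he]
    rfl
  have hd : HasFDerivAt (fun x : V → X => ‖x u - x w‖)
      ((ContinuousLinearMap.proj e).comp (dfR G p)) p :=
    hfG ▸ hasFDerivAt_pi'.1 hwp.hasFDerivAt e
  have hdiff : HasFDerivAt (fun x : V → X => x u - x w) _ p :=
    (hasFDerivAt_apply (𝕜 := ℝ) u p).fun_sub (hasFDerivAt_apply w p)
  simpa using hasFDerivAt_norm_apply Φ hdiff hd hi x

lemma dfC_apply [Fintype V] [DecidableEq V] [DecidableEq ι] (hwp : WellPositioned G p)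
    (he : (e : Sym2 V) = s(u, w)) (hi : |Φ (p u - p w) i| = ‖p u - p w‖) (z : V → ℂ ⊗[ℝ] X) :
    dfC G p z e = ((SignType.sign (Φ (p u - p w) i) : ℝ) : ℂ) *
      (cplxCoord Φ (z u) i - cplxCoord Φ (z w) i) := by
  obtain ⟨s, hs⟩ : ∃ s : ℝ, s = SignType.sign (Φ (p u - p w) i) := ⟨_, rfl⟩
  have hphi : ∀ v x, phiEdge G p e v x =
      s * ((if u = v then 1 else 0) - (if w = v then 1 else 0)) * Φ x i := fun v x => by
    change dfR G p (Pi.single v x) e = _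
    rw [dfR_apply hwp he hi, ← hs, Pi.single_apply, Pi.single_apply]
    split_ifs <;> simp
  rw [← hs]
  simp only [dfC, LinearMap.pi_apply, LinearMap.sum_apply, LinearMap.comp_apply,
    LinearMap.proj_apply, cplxFunctional_eq_smul_cplxCoord Φ (hphi _)]
  push_cast
  simp [mul_sub, sub_mul, Finset.sum_sub_distrib, apply_ite ((↑) : ℝ → ℂ)]

end Differential

section Colours

lemma sub_ne_zero_of_injective {V X : Type*} [AddGroup X] {G : SimpleGraph V} {p : V → X}
    {e : G.edgeSet} {u w : V} (hp : Function.Injective p) (he : (e : Sym2 V) = s(u, w)) :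
    p u - p w ≠ 0 :=
  sub_ne_zero.2 (hp.ne (G.ne_of_adj ((SimpleGraph.mem_edgeSet G).1 (he ▸ e.2))))

variable {V : Type} {X : Type} [NormedAddCommGroup X] [NormedSpace ℝ X] {G : SimpleGraph V}
  {p : V → X} {e : G.edgeSet} {u w : V} {ι : Type*} [Fintype ι]
  {Φ : X ≃ₗᵢ[ℝ] (ι → ℝ)} {i j : ι}

/-- The edges of the framework `(G, p)` along which the `i`-th coordinate attains the norm. For a
quadrilateral unit ball these are the edges of framework colour `F_i`. -/
def colourClass (Φ : X ≃ₗᵢ[ℝ] (ι → ℝ)) (G : SimpleGraph V) (p : V → X) (i : ι) : Set G.edgeSet :=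
  {e | ∃ u w, (e : Sym2 V) = s(u, w) ∧ |Φ (p u - p w) i| = ‖p u - p w‖}

lemma mem_colourClass_iff (he : (e : Sym2 V) = s(u, w)) :
    e ∈ colourClass Φ G p i ↔ |Φ (p u - p w) i| = ‖p u - p w‖ := by
  refine ⟨fun ⟨u', w', he', h⟩ => ?_, fun h => ⟨u, w, he, h⟩⟩
  rw [he, Sym2.eq_iff] at he'
  rcases he' with ⟨rfl, rfl⟩ | ⟨rfl, rfl⟩
  · exact h
  · rwa [← neg_sub (p u) (p w), map_neg, Pi.neg_apply, abs_neg, norm_neg] at h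

lemma exists_mem_colourClass [Nonempty ι] (Φ : X ≃ₗᵢ[ℝ] (ι → ℝ)) (p : V → X) (e : G.edgeSet) :
    ∃ i, e ∈ colourClass Φ G p i := by
  induction he : (e : Sym2 V) with | _ u w
  simp only [mem_colourClass_iff he]
  exact exists_abs_apply_eq_norm Φ _

lemma eq_of_mem_colourClass [Finite V] [Fintype G.edgeSet] (hwp : WellPositioned G p)
    (hp : Function.Injective p) (hi : e ∈ colourClass Φ G p i) (hj : e ∈ colourClass Φ G p j) :
    i = j := by
  classical
  induction he : (e : Sym2 V) with | _ u w
  rw [mem_colourClass_iff he] at hi hj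
  have hne := sub_ne_zero_of_injective hp he
  have huw : w ≠ u := fun h => hne (by rw [h, sub_self])
  have hdf := dfR_apply hwp he hi (Pi.single u (Φ.symm (Pi.single i 1)))
  rw [dfR_apply hwp he hj] at hdf
  by_contra hij
  refine sign_apply_ne_zero hne hi ?_
  simpa [huw, Pi.single_eq_of_ne (Ne.symm hij), eq_comm] using hdf

lemma normalized_mem_facet_iff {a b : X} {Φ : X ≃ₗᵢ[ℝ] (Fin 2 → ℝ)} (ha : Φ a = ![1, -1])
    (hb : Φ b = ![1, 1]) {i : Fin 2} {x : X} (hx : x ≠ 0) :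
    (‖x‖⁻¹ • x ∈ facet a b i ∨ -(‖x‖⁻¹ • x) ∈ facet a b i) ↔ |Φ x i| = ‖x‖ := by
  have hx' : ‖x‖ ≠ 0 := norm_ne_zero_iff.2 hx
  have hnorm : ‖‖x‖⁻¹ • x‖ = 1 := by rw [norm_smul, norm_inv, norm_norm, inv_mul_cancel₀ hx']
  rw [mem_facet_iff ha hb, mem_facet_iff ha hb, norm_neg, hnorm, map_neg, map_smul, Pi.neg_apply,
    Pi.smul_apply, smul_eq_mul, abs_eq (norm_nonneg x), neg_eq_iff_eq_neg,
    inv_mul_eq_iff_eq_mul₀ hx', inv_mul_eq_iff_eq_mul₀ hx']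
  simp

lemma edgeColour_iff_mem_colourClass {a b : X} {Φ : X ≃ₗᵢ[ℝ] (Fin 2 → ℝ)} (ha : Φ a = ![1, -1])
    (hb : Φ b = ![1, 1]) (hp : Function.Injective p) (i : Fin 2) :
    EdgeColour a b p i (e : Sym2 V) ↔ e ∈ colourClass Φ G p i :=
  exists₂_congr fun _ _ => and_congr_right fun he =>
    normalized_mem_facet_iff ha hb (sub_ne_zero_of_injective hp he)

lemma eSigma_eq_mk {σ : Equiv.Perm V} {hadj : ∀ u v : V, G.Adj u v ↔ G.Adj (σ u) (σ v)}
    (he : (e : Sym2 V) = s(u, w)) : (eSigma G σ hadj e : Sym2 V) = s(σ u, σ w) :=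
  congrArg (Sym2.map σ) he

lemma eSigma_mem_colourClass_iff {σ : Equiv.Perm V}
    {hadj : ∀ u v : V, G.Adj u v ↔ G.Adj (σ u) (σ v)} (hσ : ∀ v, p (σ v) = -p v) :
    eSigma G σ hadj e ∈ colourClass Φ G p i ↔ e ∈ colourClass Φ G p i := by
  induction he : (e : Sym2 V) with | _ u w
  rw [mem_colourClass_iff he, mem_colourClass_iff (eSigma_eq_mk he), hσ, hσ, ← neg_sub', map_neg,
    Pi.neg_apply, abs_neg, norm_neg]

end Colours

section Rigidity

variable {V : Type} {X : Type} [NormedAddCommGroup X] [NormedSpace ℝ X]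
  {G : SimpleGraph V} {p : V → X} {ι : Type*} [Fintype ι]
  {Φ : X ≃ₗᵢ[ℝ] (ι → ℝ)} {i : ι} {e : G.edgeSet}

/-- `f` takes the same value at the two ends of each edge in `S`. -/
def IsEdgeConst {M : Type*} (S : Set G.edgeSet) (f : V → M) : Prop :=
  ∀ e ∈ S, (Sym2.map f e).IsDiag

lemma isEdgeConst_zero {M : Type*} [Zero M] (S : Set G.edgeSet) :
    IsEdgeConst S (0 : V → M) := fun e _ => by
  induction (e : Sym2 V) with | _ u w
  rfl

lemma forall_eq_iff_forall_coord_eq {κ K : Type*} [Zero K] {P : κ → (V → K) → Prop}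
    (hP : ∀ k, P k 0) :
    (∀ F : V → κ → K, (∀ k, P k fun v => F v k) → ∀ u w, F u = F w) ↔
      ∀ k, ∀ f, P k f → ∀ u w, f u = f w := by
  classical
  refine ⟨fun h k f hf u w => ?_, fun h F hF u w => funext fun k => h k _ (hF k) u w⟩
  refine Pi.single_injective k (h (fun v => Pi.single k (f v)) (fun l => ?_) u w)
  rcases eq_or_ne l k with rfl | hl
  · simpa using hf
  · have hzero : (fun v => (Pi.single k (f v) : κ → K) l) = 0 :=
      funext fun v => by simp [hl]
    exact hzero ▸ hP l

variable [Finite V] [Fintype G.edgeSet]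

lemma dfR_apply_eq_zero_iff (hwp : WellPositioned G p) (hp : Function.Injective p)
    (he : e ∈ colourClass Φ G p i) (x : V → X) :
    dfR G p x e = 0 ↔ (Sym2.map (fun v => Φ (x v) i) e).IsDiag := by
  induction hends : (e : Sym2 V) with | _ u w
  rw [mem_colourClass_iff hends] at he
  rw [dfR_apply hwp hends he, mul_eq_zero_iff_left
    (sign_apply_ne_zero (sub_ne_zero_of_injective hp hends) he), sub_eq_zero]
  rfl

lemma dfR_eq_zero_iff [Nonempty ι] (hwp : WellPositioned G p) (hp : Function.Injective p)
    (x : V → X) :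
    dfR G p x = 0 ↔ ∀ i, IsEdgeConst (colourClass Φ G p i) fun v => Φ (x v) i := by
  refine ⟨fun h i e he => (dfR_apply_eq_zero_iff hwp hp he x).1 (congrFun h e),
    fun h => funext fun e => ?_⟩
  obtain ⟨i, he⟩ := exists_mem_colourClass Φ p e
  exact (dfR_apply_eq_zero_iff hwp hp he x).2 (h i e he)

theorem infRigid_iff_isEdgeConst [Nonempty ι] (hwp : WellPositioned G p)
    (hp : Function.Injective p) (Φ : X ≃ₗᵢ[ℝ] (ι → ℝ)) :
    InfRigid G p ↔ ∀ i, ∀ f : V → ℝ, IsEdgeConst (colourClass Φ G p i) f → ∀ u w, f u = f w := by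
  rw [infRigid_iff_forall_eq Φ, ← forall_eq_iff_forall_coord_eq fun i => isEdgeConst_zero _]
  refine (Equiv.piCongrRight fun _ => Φ.toEquiv).forall_congr fun x => ?_
  rw [dfR_eq_zero_iff (Φ := Φ) hwp hp]
  exact imp_congr_right fun _ => forall₂_congr fun u w => Φ.injective.eq_iff.symm

end Rigidity

section Parity

variable {V : Type*} {K : Type*} {σ : Equiv.Perm V} {ε : ℤˣ}

/-- `f` is even (`ε = 1`) or odd (`ε = -1`) with respect to the involution `σ`. -/
def HasParity {M : Type*} [AddCommGroup M] (σ : Equiv.Perm V) (ε : ℤˣ) (f : V → M) : Prop :=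
  ∀ v, f (σ v) = ε • f v

lemma HasParity.comp {M N F : Type*} [AddCommGroup M] [AddCommGroup N] [FunLike F M N]
    [AddMonoidHomClass F M N] {f : V → M} (hf : HasParity σ ε f) (φ : F) :
    HasParity σ ε fun v => φ (f v) := fun v => by
  simp only [hf v, Units.smul_def, map_zsmul]

lemma hasParity_zero {M : Type*} [AddCommGroup M] : HasParity σ ε (0 : V → M) :=
  fun _ => (smul_zero ε).symm

lemma hasParity_cplxCoord_iff {X : Type} [NormedAddCommGroup X] [NormedSpace ℝ X] {ι : Type*}
    [Fintype ι] [DecidableEq ι] {Φ : X ≃ₗᵢ[ℝ] (ι → ℝ)} (z : V → ℂ ⊗[ℝ] X) :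
    HasParity σ ε z ↔ ∀ i, HasParity σ ε fun v => cplxCoord Φ (z v) i := by
  refine ⟨fun h i v => ?_, fun h v => (cplxCoord Φ).injective (funext fun i => ?_)⟩
  · exact congrFun (h.comp (cplxCoord Φ) v) i
  · simpa [Units.smul_def] using h i v

lemma mem_XchiC2_iff {V X : Type} [NormedAddCommGroup X] [NormedSpace ℝ X] {σ : Equiv.Perm V}
    {χ : ℤˣ →* ℂ} (hχ : χ (-1) = -((ε : ℤ) : ℂ)) (z : V → ℂ ⊗[ℝ] X) :
    z ∈ XchiC2 σ χ ↔ HasParity σ ε z := by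
  simp only [XchiC2, Submodule.mem_iInf, LinearMap.mem_ker, LinearMap.sub_apply,
    LinearMap.smul_apply, LinearMap.proj_apply, sub_eq_zero]
  refine ⟨fun h v => ?_, fun h γ v => ?_⟩
  · simpa [act, hχ, Int.cast_smul_eq_zsmul, Units.smul_def] using h (-1) v
  · rcases Int.units_eq_one_or γ with rfl | rfl
    · simp [act]
    · simpa [act, hχ, Int.cast_smul_eq_zsmul, Units.smul_def] using h v

lemma mem_YchiC2_iff {V : Type} {G : SimpleGraph V} {σ : Equiv.Perm V}
    {hadj : ∀ u v : V, G.Adj u v ↔ G.Adj (σ u) (σ v)} {χ : ℤˣ →* ℂ} (y : G.edgeSet → ℂ) :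
    y ∈ YchiC2 G σ hadj χ ↔ ∀ e, y (eSigma G σ hadj e) = χ (-1) * y e := by
  simp only [YchiC2, Submodule.mem_iInf, LinearMap.mem_ker, LinearMap.sub_apply,
    LinearMap.smul_apply, LinearMap.proj_apply, sub_eq_zero, smul_eq_mul]
  refine ⟨fun h e => by simpa [eAct] using h (-1) e, fun h γ e => ?_⟩
  rcases Int.units_eq_one_or γ with rfl | rfl
  · simp [eAct]
  · simpa [eAct] using h e

lemma forall_equivariant_mem_iff {K E : Type*} [Field K] [NeZero (2 : K)] [Finite E] {s : E → E}
    (hs : Function.Involutive s) (hfree : ∀ e, s e ≠ e) {c : K} (hc : c * c = 1)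
    {R : Submodule K (E → K)} (hR : ∀ y ∈ R, ∀ e, y (s e) = c * y e) :
    (∀ y : E → K, (∀ e, y (s e) = c * y e) → y ∈ R) ↔
      ∀ e, ∃ y ∈ R, y e ≠ 0 ∧ ∀ e', e' ≠ e → e' ≠ s e → y e' = 0 := by
  classical
  have := Fintype.ofFinite E
  refine ⟨fun h e => ⟨Pi.single e 1 + Pi.single (s e) c, h _ fun e' => ?_, ?_, fun e' h1 h2 => ?_⟩,
    fun h y hy => ?_⟩
  · simp only [Pi.add_apply, Pi.single_apply, hs.eq_iff, hs e, mul_add]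
    split_ifs <;> simp [hc, add_comm]
  · simp [Pi.single_eq_of_ne (hfree e).symm]
  · simp [h1, h2]
  · choose Y hYR hY0 hY using h
    suffices hsum : y = (2 : K)⁻¹ • ∑ e, (y e / Y e e) • Y e by
      rw [hsum]
      exact R.smul_mem _ (R.sum_mem fun e _ => R.smul_mem _ (hYR e))
    funext e
    have hc0 : c ≠ 0 := left_ne_zero_of_mul_eq_one hc
    have hYs : Y (s e) (s e) = c * Y (s e) e := hR _ (hYR _) e
    have hne : Y (s e) e ≠ 0 := right_ne_zero_of_mul (hYs ▸ hY0 (s e))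
    rw [Pi.smul_apply, Finset.sum_apply, Fintype.sum_eq_add e (s e) (hfree e).symm]
    · simp only [Pi.smul_apply, smul_eq_mul, hYs, hy]
      field_simp [hY0 e]
      norm_num
    · rintro e' ⟨h1, h2⟩
      rw [Pi.smul_apply, hY e' e h1.symm fun h => h2 (by rw [h, hs]), smul_zero]

end Parity

section SymmetricRigidity

variable {V : Type} [Fintype V] [DecidableEq V] {X : Type} [NormedAddCommGroup X]
  [NormedSpace ℝ X] {G : SimpleGraph V} [Fintype G.edgeSet] {p : V → X} {ι : Type*} [Fintype ι]
  {Φ : X ≃ₗᵢ[ℝ] (ι → ℝ)} {i : ι} {e : G.edgeSet}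
  {σ : Equiv.Perm V} {hadj : ∀ u v : V, G.Adj u v ↔ G.Adj (σ u) (σ v)} {χ : ℤˣ →* ℂ} {ε : ℤˣ}

lemma dfC_apply_eq_zero_iff [DecidableEq ι] (hwp : WellPositioned G p)
    (hp : Function.Injective p) (he : e ∈ colourClass Φ G p i) (z : V → ℂ ⊗[ℝ] X) :
    dfC G p z e = 0 ↔ (Sym2.map (fun v => cplxCoord Φ (z v) i) e).IsDiag := by
  induction hends : (e : Sym2 V) with | _ u w
  rw [mem_colourClass_iff hends] at he
  rw [dfC_apply hwp hends he, mul_eq_zero_iff_left (Complex.ofReal_ne_zero.2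
    (sign_apply_ne_zero (sub_ne_zero_of_injective hp hends) he)), sub_eq_zero]
  rfl

lemma dfC_eq_zero_iff [Nonempty ι] [DecidableEq ι] (hwp : WellPositioned G p)
    (hp : Function.Injective p) (z : V → ℂ ⊗[ℝ] X) :
    dfC G p z = 0 ↔ ∀ i, IsEdgeConst (colourClass Φ G p i) fun v => cplxCoord Φ (z v) i := by
  refine ⟨fun h i e he => (dfC_apply_eq_zero_iff hwp hp he z).1 (congrFun h e),
    fun h => funext fun e => ?_⟩
  obtain ⟨i, he⟩ := exists_mem_colourClass Φ p e
  exact (dfC_apply_eq_zero_iff hwp hp he z).2 (h i e he)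

theorem chiRigidC2_iff_isEdgeConst [Nonempty ι] (hwp : WellPositioned G p)
    (hp : Function.Injective p) (Φ : X ≃ₗᵢ[ℝ] (ι → ℝ)) (hχ : χ (-1) = -((ε : ℤ) : ℂ)) :
    ChiRigidC2 G p σ χ ↔ ∀ i, ∀ f : V → ℂ,
      HasParity σ ε f ∧ IsEdgeConst (colourClass Φ G p i) f → ∀ u w, f u = f w := by
  classical
  rw [chiRigidC2_iff_forall_eq Φ,
    ← forall_eq_iff_forall_coord_eq fun i => ⟨hasParity_zero, isEdgeConst_zero _⟩]
  refine (Equiv.piCongrRight fun _ => (cplxCoord Φ).toEquiv).forall_congr fun z => ?_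
  rw [mem_XchiC2_iff hχ, dfC_eq_zero_iff (Φ := Φ) hwp hp, hasParity_cplxCoord_iff (Φ := Φ),
    ← and_imp, ← forall_and]
  exact imp_congr_right fun _ => forall₂_congr fun u w => (cplxCoord Φ).injective.eq_iff.symm

lemma dfC_eSigma (hwp : WellPositioned G p) (Φ : X ≃ₗᵢ[ℝ] (ι → ℝ)) [Nonempty ι]
    (hσ : ∀ v, p (σ v) = -p v) {z : V → ℂ ⊗[ℝ] X}
    (hz : HasParity σ ε z) (e : G.edgeSet) :
    dfC G p z (eSigma G σ hadj e) = -((ε : ℤ) : ℂ) * dfC G p z e := by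
  classical
  obtain ⟨i, hi⟩ := exists_mem_colourClass Φ p e
  have hσi := (eSigma_mem_colourClass_iff (hadj := hadj) hσ).2 hi
  have hcoord : ∀ v, cplxCoord Φ (z (σ v)) i = ε • cplxCoord Φ (z v) i :=
    (hasParity_cplxCoord_iff z).1 hz i
  induction he : (e : Sym2 V) with | _ u w
  rw [mem_colourClass_iff he] at hi
  rw [mem_colourClass_iff (eSigma_eq_mk he)] at hσi
  rw [dfC_apply hwp he hi, dfC_apply hwp (eSigma_eq_mk he) hσi, hcoord u, hcoord w, hσ, hσ,
    ← neg_sub', map_neg, Pi.neg_apply, Left.sign_neg]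
  simp [Units.smul_def]
  ring

lemma exists_dfC_iff (hwp : WellPositioned G p) (hp : Function.Injective p)
    [Nonempty ι] (he : e ∈ colourClass Φ G p i) :
    (∃ z, HasParity σ ε z ∧ dfC G p z e ≠ 0 ∧
        ∀ e', e' ≠ e → e' ≠ eSigma G σ hadj e → dfC G p z e' = 0) ↔
      ∃ f : V → ℂ, HasParity σ ε f ∧
        IsEdgeConst (colourClass Φ G p i \ {e, eSigma G σ hadj e}) f ∧
        ¬ (Sym2.map f e).IsDiag := by
  classical
  refine ⟨fun ⟨z, hz, hze, hz0⟩ => ⟨fun v => cplxCoord Φ (z v) i,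
    (hasParity_cplxCoord_iff z).1 hz i, fun e' he' => ?_,
    (dfC_apply_eq_zero_iff hwp hp he z).not.1 hze⟩, fun ⟨f, hf, hfc, hfe⟩ => ?_⟩
  · obtain ⟨h1, h2⟩ := not_or.1 he'.2
    exact (dfC_apply_eq_zero_iff hwp hp he'.1 z).1 (hz0 e' h1 h2)
  · have hcoord : ∀ j, (fun v => cplxCoord Φ ((cplxCoord Φ).symm (Pi.single i (f v))) j) =
        if j = i then f else 0 := fun j => by
      funext v
      rw [LinearEquiv.apply_symm_apply, Pi.single_apply]
      split_ifs <;> rfl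
    refine ⟨fun v => (cplxCoord Φ).symm (Pi.single i (f v)),
      (hasParity_cplxCoord_iff (Φ := Φ) _).2 fun j => ?_, ?_, fun e' h1 h2 => ?_⟩
    · rw [hcoord]
      split_ifs
      exacts [hf, hasParity_zero]
    · rwa [Ne, dfC_apply_eq_zero_iff hwp hp he, hcoord, if_pos rfl]
    · obtain ⟨j, hj⟩ := exists_mem_colourClass Φ p e'
      rw [dfC_apply_eq_zero_iff hwp hp hj, hcoord]
      split_ifs with hji
      · exact hfc e' ⟨hji ▸ hj, not_or.2 ⟨h1, h2⟩⟩
      · exact isEdgeConst_zero _ e' hj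

theorem chiIndependentC2_iff_isEdgeConst [Nonempty ι] (hwp : WellPositioned G p)
    (hp : Function.Injective p) (Φ : X ≃ₗᵢ[ℝ] (ι → ℝ)) (hinv : Function.Involutive σ)
    (hfree : ∀ e : G.edgeSet, eSigma G σ hadj e ≠ e) (hσ : ∀ v, p (σ v) = -p v)
    (hχ : χ (-1) = -((ε : ℤ) : ℂ)) :
    ChiIndependentC2 G p σ hadj χ ↔ ∀ i, ∀ e ∈ colourClass Φ G p i, ∃ f : V → ℂ,
      HasParity σ ε f ∧ IsEdgeConst (colourClass Φ G p i \ {e, eSigma G σ hadj e}) f ∧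
        ¬ (Sym2.map f e).IsDiag := by
  have hinvE : Function.Involutive (eSigma G σ hadj) := fun e => by
    induction he : (e : Sym2 V) with | _ u w
    exact Subtype.ext (by rw [eSigma_eq_mk (eSigma_eq_mk he), hinv, hinv, he])
  have hε : -((ε : ℤ) : ℂ) * -((ε : ℤ) : ℂ) = 1 := by
    rw [neg_mul_neg, ← Int.cast_mul, Int.units_coe_mul_self, Int.cast_one]
  have hsep := forall_equivariant_mem_iff hinvE hfree hε
    (R := (XchiC2 (X := X) σ χ).map (dfC G p)) (by
      rintro _ ⟨z, hz, rfl⟩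
      exact dfC_eSigma hwp Φ hσ ((mem_XchiC2_iff hχ z).1 hz))
  have hInd : ChiIndependentC2 G p σ hadj χ ↔ ∀ e, ∃ z, HasParity σ ε z ∧ dfC G p z e ≠ 0 ∧
      ∀ e', e' ≠ e → e' ≠ eSigma G σ hadj e → dfC G p z e' = 0 := by
    simpa [ChiIndependentC2, mem_YchiC2_iff, hχ, mem_XchiC2_iff hχ] using hsep
  rw [hInd]
  refine ⟨fun h i e he => (exists_dfC_iff hwp hp he).1 (h e), fun h e => ?_⟩
  obtain ⟨i, he⟩ := exists_mem_colourClass Φ p e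
  exact (exists_dfC_iff hwp hp he).2 (h i e he)

theorem chiIsostaticC2_iff_isEdgeConst [Nonempty ι] (hwp : WellPositioned G p)
    (hp : Function.Injective p) (Φ : X ≃ₗᵢ[ℝ] (ι → ℝ)) (hinv : Function.Involutive σ)
    (hfree : ∀ e : G.edgeSet, eSigma G σ hadj e ≠ e) (hσ : ∀ v, p (σ v) = -p v)
    (hχ : χ (-1) = -((ε : ℤ) : ℂ)) :
    ChiIsostaticC2 G p σ hadj χ ↔ ∀ i,
      (∀ f : V → ℂ, HasParity σ ε f ∧ IsEdgeConst (colourClass Φ G p i) f → ∀ u w, f u = f w) ∧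
        ∀ e ∈ colourClass Φ G p i, ∃ f : V → ℂ, HasParity σ ε f ∧
          IsEdgeConst (colourClass Φ G p i \ {e, eSigma G σ hadj e}) f ∧
          ¬ (Sym2.map f e).IsDiag := by
  rw [ChiIsostaticC2, chiRigidC2_iff_isEdgeConst hwp hp Φ hχ,
    chiIndependentC2_iff_isEdgeConst hwp hp Φ hinv hfree hσ hχ, forall_and]

end SymmetricRigidity

section DoubleCover

variable {V : Type} {G : SimpleGraph V} {σ : Equiv.Perm V}
  {hadj : ∀ u v : V, G.Adj u v ↔ G.Adj (σ u) (σ v)} {Q : GainGraph} {piV : V → Q.V}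
  {piE : G.edgeSet → Q.E}

/-- `piV` and `piE` exhibit the multigraph underlying `Q` as the quotient of `G` by `σ`. -/
structure IsDoubleCover (G : SimpleGraph V) (σ : Equiv.Perm V)
    (hadj : ∀ u v : V, G.Adj u v ↔ G.Adj (σ u) (σ v)) (Q : GainGraph) (piV : V → Q.V)
    (piE : G.edgeSet → Q.E) : Prop where
  surjective_piV : Function.Surjective piV
  piV_eq_iff : ∀ u v : V, piV u = piV v ↔ v = u ∨ v = σ u
  surjective_piE : Function.Surjective piE
  piE_eq_iff : ∀ e f : G.edgeSet, piE e = piE f ↔ f = e ∨ f = eSigma G σ hadj e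
  ends_piE : ∀ e : G.edgeSet, Q.ends (piE e) = Sym2.map piV e

/-- The signs `r` on the vertices of the cover make the signs `ψ` on the edges of the quotient a
coboundary, and have parity `ε`. -/
structure IsSwitching (σ : Equiv.Perm V) (piE : G.edgeSet → Q.E) (ε : ℤˣ) (r : V → ℤˣ)
    (ψ : Q.E → ℤˣ) : Prop where
  apply_sigma : ∀ v, r (σ v) = ε * r v
  apply_piE : ∀ (e : G.edgeSet) (u w : V), (e : Sym2 V) = s(u, w) → ψ (piE e) = r u * r w

lemma isSwitching_one : IsSwitching σ piE 1 1 1 :=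
  ⟨fun _ => (one_mul _).symm, fun _ _ _ _ => (one_mul _).symm⟩

variable {M : Type*} [AddCommGroup M] {T : Set Q.E} {ε : ℤˣ} {r : V → ℤˣ} {ψ : Q.E → ℤˣ}
  {e : G.edgeSet}

/-- The lift of `g` to the double cover, twisted by the signs `r`. -/
def twistedLift (piV : V → Q.V) (r : V → ℤˣ) (g : Q.V → M) (v : V) : M := r v • g (piV v)

namespace IsDoubleCover

lemma preimage_diff_singleton (H : IsDoubleCover G σ hadj Q piV piE) :
    piE ⁻¹' (T \ {piE e}) = (piE ⁻¹' T) \ {e, eSigma G σ hadj e} := by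
  ext f
  simp only [Set.mem_preimage, Set.mem_sdiff, Set.mem_singleton_iff, Set.mem_insert_iff,
    eq_comm (a := piE f), H.piE_eq_iff]

lemma hasParity_iff_exists_twistedLift (H : IsDoubleCover G σ hadj Q piV piE)
    (hr : IsSwitching σ piE ε r ψ) {f : V → M} :
    HasParity σ ε f ↔ ∃ g : Q.V → M, twistedLift piV r g = f := by
  constructor
  · intro hf
    have hfactors : Function.FactorsThrough (fun v => r v • f v) piV := fun u v huv => by
      rcases (H.piV_eq_iff u v).1 huv with rfl | rfl
      · rfl
      · change r u • f u = r (σ u) • f (σ u)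
        rw [hr.apply_sigma, hf, smul_smul, mul_right_comm, Int.units_mul_self, one_mul]
    refine ⟨Function.extend piV (fun v => r v • f v) 0, funext fun v => ?_⟩
    rw [twistedLift, hfactors.extend_apply, smul_smul, Int.units_mul_self, one_smul]
  · rintro ⟨g, rfl⟩ v
    rw [twistedLift, twistedLift, hr.apply_sigma, ← (H.piV_eq_iff v (σ v)).2 (Or.inr rfl),
      mul_smul]

lemma isDiag_map_twistedLift_iff (H : IsDoubleCover G σ hadj Q piV piE)
    (hr : IsSwitching σ piE ε r ψ) {g : Q.V → M} :
    (Sym2.map (twistedLift piV r g) e).IsDiag ↔ IsFlat ψ {piE e} g := by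
  induction he : (e : Sym2 V) with | _ u w
  have hends : Q.ends (piE e) = s(piV u, piV w) := by rw [H.ends_piE, he, Sym2.map_mk]
  rw [isFlat_singleton_iff hends, hr.apply_piE e u w he, mul_smul, Sym2.map_mk,
    Sym2.mk_isDiag_iff, twistedLift, twistedLift, smul_eq_iff_eq_inv_smul, Int.units_inv_eq_self]

lemma isEdgeConst_twistedLift_iff (H : IsDoubleCover G σ hadj Q piV piE)
    (hr : IsSwitching σ piE ε r ψ) {g : Q.V → M} :
    IsEdgeConst (piE ⁻¹' T) (twistedLift piV r g) ↔ IsFlat ψ T g := by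
  rw [IsEdgeConst, IsFlat, H.surjective_piE.forall]
  simp only [H.isDiag_map_twistedLift_iff hr, Set.mem_preimage, IsFlat, Set.mem_singleton_iff,
    forall_eq]

theorem forall_hasParity_iff (H : IsDoubleCover G σ hadj Q piV piE)
    (hr : IsSwitching σ piE ε r ψ) (C : (V → M) → Prop) :
    (∀ f : V → M, HasParity σ ε f ∧ IsEdgeConst (piE ⁻¹' T) f → C f) ↔
      ∀ g : Q.V → M, IsFlat ψ T g → C (twistedLift piV r g) := by
  simp only [H.hasParity_iff_exists_twistedLift hr, and_imp, forall_exists_index,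
    forall_apply_eq_imp_iff, H.isEdgeConst_twistedLift_iff hr]

theorem forall_exists_hasParity_iff (H : IsDoubleCover G σ hadj Q piV piE)
    (hr : IsSwitching σ piE ε r ψ) :
    (∀ e ∈ piE ⁻¹' T, ∃ f : V → M, HasParity σ ε f ∧
        IsEdgeConst (piE ⁻¹' T \ {e, eSigma G σ hadj e}) f ∧ ¬ (Sym2.map f e).IsDiag) ↔
      FlatIndependent M ψ T := by
  simp only [← H.preimage_diff_singleton, H.hasParity_iff_exists_twistedLift hr,
    exists_exists_eq_and, H.isEdgeConst_twistedLift_iff hr, H.isDiag_map_twistedLift_iff hr,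
    Set.mem_preimage, FlatIndependent, H.surjective_piE.forall]

theorem forall_even_eq_iff (H : IsDoubleCover G σ hadj Q piV piE) :
    (∀ f : V → M, HasParity σ 1 f ∧ IsEdgeConst (piE ⁻¹' T) f → ∀ u w, f u = f w) ↔
      ∀ g : Q.V → M, IsFlat 1 T g → ∀ u w, g u = g w := by
  rw [H.forall_hasParity_iff isSwitching_one fun f => ∀ u w, f u = f w]
  simp only [twistedLift, Pi.one_apply, one_smul, H.surjective_piV.forall]

theorem forall_odd_eq_iff [IsAddTorsionFree M] (H : IsDoubleCover G σ hadj Q piV piE)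
    (hr : IsSwitching σ piE (-1) r ψ) :
    (∀ f : V → M, HasParity σ (-1) f ∧ IsEdgeConst (piE ⁻¹' T) f → ∀ u w, f u = f w) ↔
      ∀ g : Q.V → M, IsFlat ψ T g → g = 0 := by
  rw [H.forall_hasParity_iff hr fun f => ∀ u w, f u = f w]
  refine forall₂_congr fun g _ => ⟨fun h => funext (H.surjective_piV.forall.2 fun v => ?_), ?_⟩
  · have hv := (H.hasParity_iff_exists_twistedLift hr).2 ⟨g, rfl⟩ v
    rwa [h (σ v) v, Units.neg_smul, one_smul, self_eq_neg, twistedLift, smul_eq_zero_iff_eq] at hv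
  · rintro rfl u w
    simp [twistedLift]

end IsDoubleCover

lemma hasParity_add_smul_comp (hinv : Function.Involutive σ) (ε : ℤˣ) (f : V → M) :
    HasParity σ ε fun v => f v + ε • f (σ v) := fun v => by
  simp only [hinv v, smul_add, smul_smul, Int.units_mul_self, one_smul, add_comm]

lemma IsEdgeConst.add_smul_comp {S : Set G.edgeSet} {f : V → M} (hf : IsEdgeConst S f)
    (hS : ∀ e ∈ S, eSigma G σ hadj e ∈ S) (ε : ℤˣ) :
    IsEdgeConst S fun v => f v + ε • f (σ v) := fun e he => by
  have hfσ := hf _ (hS e he)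
  replace hf := hf e he
  induction hends : (e : Sym2 V) with | _ u w
  rw [eSigma_eq_mk hends] at hfσ
  rw [hends] at hf
  simp only [Sym2.map_mk, Sym2.mk_isDiag_iff] at hf hfσ ⊢
  rw [hf, hfσ]

theorem forall_eq_iff_even_and_odd [IsAddTorsionFree M] (hinv : Function.Involutive σ)
    {S : Set G.edgeSet} (hS : ∀ e ∈ S, eSigma G σ hadj e ∈ S) :
    (∀ f : V → M, IsEdgeConst S f → ∀ u w, f u = f w) ↔
      (∀ f : V → M, HasParity σ 1 f ∧ IsEdgeConst S f → ∀ u w, f u = f w) ∧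
        ∀ f : V → M, HasParity σ (-1) f ∧ IsEdgeConst S f → ∀ u w, f u = f w := by
  refine ⟨fun h => ⟨fun f hf => h f hf.2, fun f hf => h f hf.2⟩, fun ⟨heven, hodd⟩ f hf u w => ?_⟩
  have hsum := heven _ ⟨hasParity_add_smul_comp hinv 1 f, hf.add_smul_comp hS 1⟩ u w
  have hdiff := hodd _ ⟨hasParity_add_smul_comp hinv (-1) f, hf.add_smul_comp hS (-1)⟩ u w
  simp only [Units.neg_smul, one_smul] at hsum hdiff
  refine nsmul_right_injective two_ne_zero ?_
  calc 2 • f u = (f u + f (σ u)) + (f u + -f (σ u)) := by abel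
    _ = (f w + f (σ w)) + (f w + -f (σ w)) := by rw [hsum, hdiff]
    _ = 2 • f w := by abel

theorem IsDoubleCover.forall_isEdgeConst_iff [IsAddTorsionFree M]
    (H : IsDoubleCover G σ hadj Q piV piE) (hinv : Function.Involutive σ)
    (hr : IsSwitching σ piE (-1) r ψ) :
    (∀ f : V → M, IsEdgeConst (piE ⁻¹' T) f → ∀ u w, f u = f w) ↔
      (∀ g : Q.V → M, IsFlat 1 T g → ∀ u w, g u = g w) ∧
        ∀ g : Q.V → M, IsFlat ψ T g → g = 0 := by
  have hσ : ∀ e ∈ piE ⁻¹' T, eSigma G σ hadj e ∈ piE ⁻¹' T := fun e he => by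
    rwa [Set.mem_preimage, ← (H.piE_eq_iff e _).2 (Or.inr rfl)]
  rw [forall_eq_iff_even_and_odd hinv hσ, H.forall_even_eq_iff, H.forall_odd_eq_iff hr]

end DoubleCover

section Monochrome

variable {V X : Type} [NormedAddCommGroup X] [NormedSpace ℝ X] {a b : X}
  {Φ : X ≃ₗᵢ[ℝ] (Fin 2 → ℝ)} {G : SimpleGraph V} {p : V → X} {σ : Equiv.Perm V}
  {hadj : ∀ u v : V, G.Adj u v ↔ G.Adj (σ u) (σ v)} {Q : GainGraph} {piV : V → Q.V}
  {piE : G.edgeSet → Q.E}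

lemma IsDoubleCover.preimage_monochrome (H : IsDoubleCover G σ hadj Q piV piE)
    (ha : Φ a = ![1, -1]) (hb : Φ b = ![1, 1]) (hp : Function.Injective p)
    (hσ : ∀ v, p (σ v) = -p v) (i : Fin 2) :
    piE ⁻¹' monochrome G a b p Q piE i = colourClass Φ G p i := by
  ext e
  simp only [Set.mem_preimage, monochrome, Set.mem_ofPred_eq, H.piE_eq_iff,
    edgeColour_iff_mem_colourClass ha hb hp]
  refine ⟨?_, fun he => ⟨e, Or.inl rfl, he⟩⟩
  rintro ⟨f, rfl | rfl, hf⟩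
  exacts [hf, (eSigma_mem_colourClass_iff hσ).2 hf]

lemma disjoint_colourClass [Finite V] [Fintype G.edgeSet] (hwp : WellPositioned G p)
    (hp : Function.Injective p) {ι : Type*} [Fintype ι] {Φ : X ≃ₗᵢ[ℝ] (ι → ℝ)} {i j : ι}
    (hij : i ≠ j) : Disjoint (colourClass Φ G p i) (colourClass Φ G p j) :=
  Set.disjoint_left.2 fun _ hi hj => hij (eq_of_mem_colourClass hwp hp hi hj)

end Monochrome

theorem C2_grid_geometric
    {V : Type} [Fintype V] [DecidableEq V]
    {X : Type} [NormedAddCommGroup X] [NormedSpace ℝ X] [FiniteDimensional ℝ X]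
    (hdim : Module.finrank ℝ X = 2)
    (a b : X) (hab : LinearIndependent ℝ ![a, b])
    (hball : Metric.closedBall (0 : X) 1 = convexHull ℝ {a, b, -a, -b})
    (G : SimpleGraph V) [Fintype G.edgeSet]
    (σ : Equiv.Perm V) (hinv : ∀ v, σ (σ v) = v) (hfreeV : ∀ v, σ v ≠ v)
    (hadj : ∀ u v : V, G.Adj u v ↔ G.Adj (σ u) (σ v))
    (hfreeE : ∀ e : G.edgeSet, eSigma G σ hadj e ≠ e)
    (p : V → X) (hpinj : Function.Injective p)
    (hwp : WellPositioned G p)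
    (hsymm : ∀ v, p (σ v) = -p v)
    -- the quotient gain graph `(G₀, ψ)` of `(G, θ)`
    (Q : GainGraph) (piV : V → Q.V) (piE : G.edgeSet → Q.E) (ρ : V → ℤˣ)
    (hpiVs : Function.Surjective piV)
    (hpiV : ∀ u v : V, piV u = piV v ↔ (v = u ∨ v = σ u))
    (hpiEs : Function.Surjective piE)
    (hpiE : ∀ e f : G.edgeSet, piE e = piE f ↔ (f = e ∨ f = eSigma G σ hadj e))
    (hQends : ∀ e : G.edgeSet, Q.ends (piE e) = Sym2.map piV e.1)
    (hrho : ∀ v : V, ρ (σ v) = -ρ v)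
    (hQgain : ∀ (e : G.edgeSet) (u w : V), (e : Sym2 V) = s(u, w) →
      Q.gain (piE e) = ρ u * ρ w) :
    (ChiIsostaticC2 G p σ hadj chi0 ↔
      (SpanningUnbalancedMapGraph Q (monochrome G a b p Q piE 0) ∧
        SpanningUnbalancedMapGraph Q (monochrome G a b p Q piE 1) ∧
        Disjoint (monochrome G a b p Q piE 0) (monochrome G a b p Q piE 1))) ∧
    (ChiIsostaticC2 G p σ hadj chi1 ↔
      (SpanningTree Q (monochrome G a b p Q piE 0) ∧
        SpanningTree Q (monochrome G a b p Q piE 1) ∧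
        Disjoint (monochrome G a b p Q piE 0) (monochrome G a b p Q piE 1))) ∧
    (InfRigid G p ↔
      (ContainsConnSpanningUnbalMap Q (monochrome G a b p Q piE 0) ∧
        ContainsConnSpanningUnbalMap Q (monochrome G a b p Q piE 1))) := by
  obtain ⟨Φ, ha, hb⟩ := exists_linearIsometryEquiv_of_closedBall hdim hab hball
  have H : IsDoubleCover G σ hadj Q piV piE := ⟨hpiVs, hpiV, hpiEs, hpiE, hQends⟩
  have hρ : IsSwitching σ piE (-1) ρ Q.gain :=
    ⟨fun v => (hrho v).trans (neg_one_mul _).symm, hQgain⟩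
  have hpre := H.preimage_monochrome ha hb hpinj hsymm
  have hdisj : Disjoint (monochrome G a b p Q piE 0) (monochrome G a b p Q piE 1) :=
    .of_preimage hpiEs (by simpa only [hpre] using disjoint_colourClass hwp hpinj zero_ne_one)
  rw [and_iff_left hdisj, and_iff_left hdisj]
  refine ⟨?_, ?_, ?_⟩
  · rw [chiIsostaticC2_iff_isEdgeConst (ε := -1) hwp hpinj Φ hinv hfreeE hsymm (by simp [chi0])]
    simp only [← hpre, H.forall_odd_eq_iff hρ, H.forall_exists_hasParity_iff hρ,
      ← spanningUnbalancedMapGraph_iff_isFlat, Fin.forall_fin_two]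
  · rw [chiIsostaticC2_iff_isEdgeConst (ε := 1) hwp hpinj Φ hinv hfreeE hsymm (by simp [chi1])]
    simp only [← hpre, H.forall_even_eq_iff, H.forall_exists_hasParity_iff isSwitching_one,
      ← spanningTree_iff_isFlat, Fin.forall_fin_two]
  · rw [infRigid_iff_isEdgeConst hwp hpinj Φ]
    simp only [← hpre, H.forall_isEdgeConst_iff hinv hρ,
      ← containsConnSpanningUnbalMap_iff_isFlat, Fin.forall_fin_two]

end ZGain
end
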